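/- arXiv:0705.3424 — 5 statements merged into one kernel-verified Lean document; each statement's English description precedes it below -/
import Mathlib

section
/- Let (Y,G) be another compact Hausdorff space with an action of G by homeomorphisms and ν a G-invariant Borel probability measure on Y. Then for all k ≥ 1, identifying (X × Y)^k with X^k × Y^k, one has IE^{μ×ν}_k(X × Y) = IE^μ_k(X) × IE^ν_k(Y), where G acts on X × Y by the diagonal action s(x,y) = (sx, sy). -/
open MeasureTheory Set
open scoped Classical ENNReal

/-- `F` is a nonempty `(K,δ)`-invariant finite subset of the group `G`. -/
def FolnerInv {G : Type*} [Group G] (K : Finset G) (δ : ℝ) (F : Finset G) : Prop :=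
  F.Nonempty ∧
    (1 - δ) * (F.card : ℝ) ≤ (((F : Set G)) ∩ {s : G | ∀ g ∈ K, g * s ∈ F}).ncard

/-- The Følner characterisation of amenability for a discrete group `G`. -/
def FolnerAmenable (G : Type*) [Group G] : Prop :=
  ∀ (K : Finset G) (δ : ℝ), 0 < δ → ∃ F : Finset G, FolnerInv K δ F

/-- The limit supremum of `ψ F / |F|` as `F` becomes more and more invariant. -/
noncomputable def invLimsup {G : Type*} [Group G] (ψ : Finset G → ℝ) : ℝ :=
  ⨅ (K : Finset G) (δ : {d : ℝ // 0 < d}),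
    sSup ((fun F : Finset G => ψ F / (F.card : ℝ)) '' {F : Finset G | FolnerInv K δ.1 F})

/-- The limit infimum of `ψ F / |F|` as `F` becomes more and more invariant. -/
noncomputable def invLiminf {G : Type*} [Group G] (ψ : Finset G → ℝ) : ℝ :=
  ⨆ (K : Finset G) (δ : {d : ℝ // 0 < d}),
    sInf ((fun F : Finset G => ψ F / (F.card : ℝ)) '' {F : Finset G | FolnerInv K δ.1 F})

/-- `J ⊆ G` is an independence set for the tuple `A` of subsets of `X` relative to the
map `D : G → Set X`. -/
def IndepRel {G X : Type*} [Group G] [MulAction G X] {k : ℕ} (A : Fin k → Set X)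
    (D : G → Set X) (J : Set G) : Prop :=
  ∀ F : Finset G, (F : Set G) ⊆ J → F.Nonempty → ∀ σ : G → Fin k,
    (⋂ s ∈ F, (D s ∩ (fun x => s • x) ⁻¹' A (σ s))).Nonempty

/-- `J ⊆ G` is an independence set for the tuple `A` relative to the subset `D ⊆ X`. -/
def IndepSet {G X : Type*} [Group G] [MulAction G X] {k : ℕ} (A : Fin k → Set X)
    (D : Set X) (J : Set G) : Prop :=
  IndepRel A (fun _ => D) J

/-- The maximum of `|F ∩ J|` over independence sets `J` for `A` relative to `D`. -/
noncomputable def maxIndep {G X : Type*} [Group G] [MulAction G X] {k : ℕ}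
    (A : Fin k → Set X) (D : G → Set X) (F : Finset G) : ℕ :=
  sSup {m : ℕ | ∃ J : Set G, IndepRel A D J ∧ m = (((F : Set G)) ∩ J).ncard}

/-- `φ_{A,δ}(F)`: the minimum over Borel sets `D` with `μ(D) ≥ 1 - δ` of the maximum
of `|F ∩ J|` over independence sets `J` for `A` relative to `D`. -/
noncomputable def phiConst {G X : Type*} [Group G] [MulAction G X] [MeasurableSpace X]
    (μ : Measure X) {k : ℕ} (A : Fin k → Set X) (δ : ℝ) (F : Finset G) : ℕ :=
  sInf {m : ℕ | ∃ D : Set X, MeasurableSet D ∧ 1 - δ ≤ (μ D).toReal ∧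
    m = maxIndep A (fun _ : G => D) F}

/-- `φ'_{A,δ}(F)`: as `phiConst` but with maps `D : G → Set X` with `μ(D s) ≥ 1 - δ`
for all `s`. -/
noncomputable def phiMap {G X : Type*} [Group G] [MulAction G X] [MeasurableSpace X]
    (μ : Measure X) {k : ℕ} (A : Fin k → Set X) (δ : ℝ) (F : Finset G) : ℕ :=
  sInf {m : ℕ | ∃ D : G → Set X, (∀ s, MeasurableSet (D s)) ∧
    (∀ s, 1 - δ ≤ (μ (D s)).toReal) ∧ m = maxIndep A D F}

/-- The upper `μ`-independence density `Ī_μ(A)` of the tuple `A`. -/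
noncomputable def upperIndepDens (G : Type*) {X : Type*} [Group G] [MulAction G X]
    [MeasurableSpace X] (μ : Measure X) {k : ℕ} (A : Fin k → Set X) : ℝ :=
  ⨆ δ : {d : ℝ // 0 < d}, invLimsup (fun F : Finset G => (phiConst μ A δ.1 F : ℝ))

/-- The lower `μ`-independence density `I̲_μ(A)` of the tuple `A`. -/
noncomputable def lowerIndepDens (G : Type*) {X : Type*} [Group G] [MulAction G X]
    [MeasurableSpace X] (μ : Measure X) {k : ℕ} (A : Fin k → Set X) : ℝ :=
  ⨆ δ : {d : ℝ // 0 < d}, invLiminf (fun F : Finset G => (phiConst μ A δ.1 F : ℝ))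

/-- The measure `μ` is invariant under the action of `G`. -/
def InvariantMeasure (G : Type*) {X : Type*} [Group G] [MulAction G X] [MeasurableSpace X]
    (μ : Measure X) : Prop :=
  ∀ (s : G) (B : Set X), MeasurableSet B → μ ((fun x => s • x) ⁻¹' B) = μ B

/-- The entropy `H_μ(𝒫^F)` of the join `⋁_{s ∈ F} s⁻¹𝒫` of the finite partition `P`. -/
noncomputable def HJoin {G X : Type*} [Group G] [MulAction G X] [MeasurableSpace X]
    (μ : Measure X) {k : ℕ} (P : Fin k → Set X) (F : Finset G) : ℝ :=
  ∑ f : ↥F → Fin k,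
    Real.negMulLog (μ (⋂ s : ↥F, (fun x => (s : G) • x) ⁻¹' P (f s))).toReal

/-- `P` is a finite measurable partition of `X` (members may be empty). -/
def IsMeasPartition {X : Type*} [MeasurableSpace X] {k : ℕ} (P : Fin k → Set X) : Prop :=
  (∀ i, MeasurableSet (P i)) ∧ (Pairwise fun i j => Disjoint (P i) (P j)) ∧
    (⋃ i, P i) = Set.univ

/-- `x` is a (topological) IE-tuple for the action of `G` on `X`. -/
def IsIETuple (G : Type*) {X : Type*} [Group G] [TopologicalSpace X] [MulAction G X]
    {k : ℕ} (x : Fin k → X) : Prop :=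
  ∀ U : Fin k → Set X, (∀ i, U i ∈ nhds (x i)) →
    ∃ d : ℝ, 0 < d ∧ ∀ (K : Finset G) (δ : ℝ), 0 < δ →
      ∃ (F : Finset G) (J : Set G), FolnerInv K δ F ∧ IndepSet U (Set.univ : Set X) J ∧
        d * (F.card : ℝ) ≤ (((F : Set G)) ∩ J).ncard

/-- `x` is a `μ`-IE-tuple. -/
def IsMuIETuple (G : Type*) {X : Type*} [Group G] [TopologicalSpace X] [MulAction G X]
    [MeasurableSpace X] (μ : Measure X) {k : ℕ} (x : Fin k → X) : Prop :=
  ∀ U : Fin k → Set X, (∀ i, U i ∈ nhds (x i)) → 0 < upperIndepDens G μ U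

/-- A finite family `A` of words `ι → α` shatters `J` if every word agrees on `J` with a member
of `A`. -/
def WordShatters {ι α : Type*} (A : Finset (ι → α)) (J : Finset ι) : Prop :=
  ∀ τ : ι → α, ∃ a ∈ A, ∀ j ∈ J, a j = τ j

/-- Resampling the letter at `j` averages a family of words over its `j`-fibres. -/
theorem sum_card_filter_update {ι α : Type*} [Fintype ι] [DecidableEq ι] [Fintype α]
    (A : Finset (ι → α)) (j : ι) :
    ∑ f : ι → α, (Finset.univ.filter fun a : α => Function.update f j a ∈ A).card
      = Fintype.card α * A.card := by
  have hinv : Function.Involutive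
      (fun p : (ι → α) × α => (Function.update p.1 j p.2, p.1 j)) := by
    rintro ⟨f, a⟩
    simp
  have h1 : ∑ p : (ι → α) × α, (if Function.update p.1 j p.2 ∈ A then 1 else 0)
      = ∑ p : (ι → α) × α, (if p.1 ∈ A then 1 else 0) :=
    Fintype.sum_equiv (hinv.toPerm _) _ _ (fun p => rfl)
  simp only [Finset.card_filter]
  rw [← Fintype.sum_prod_type', h1, Fintype.sum_prod_type_right]
  simp

/-- A Sauer–Shelah type bound: if `A` shatters no subset of `J` with more than `d` elements,
then the density of `A` is at most `2 ^ d * (1 - 1 / (2 * |α|)) ^ |J|`. -/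
theorem card_le_of_shatters_le {ι α : Type*} [Fintype ι] [DecidableEq ι] [Fintype α]
    [Nonempty α] (J : Finset ι) :
    ∀ (A : Finset (ι → α)) (d : ℕ),
      (∀ I ⊆ J, WordShatters A I → I.card ≤ d) →
      (A.card : ℝ) ≤ 2 ^ d * (1 - 1 / (2 * (Fintype.card α : ℝ))) ^ J.card
        * Fintype.card (ι → α) := by
  have hm : (1 : ℝ) ≤ Fintype.card α := by exact_mod_cast Fintype.card_pos
  have hq : (0 : ℝ) ≤ 1 - 1 / (2 * (Fintype.card α : ℝ)) := by
    rw [sub_nonneg, div_le_one (by positivity)]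
    linarith
  induction J using Finset.induction_on with
  | empty =>
    intro A d _
    have h1 : (A.card : ℝ) ≤ Fintype.card (ι → α) := by exact_mod_cast Finset.card_le_univ A
    have h2 : (1 : ℝ) ≤ 2 ^ d := one_le_pow₀ (by norm_num)
    simp only [Finset.card_empty, pow_zero, mul_one]
    nlinarith [Nat.cast_nonneg (α := ℝ) (Fintype.card (ι → α))]
  | insert j J hj ih =>
    intro A d hd
    set m : ℝ := (Fintype.card α : ℝ) with hmdef
    set N : ℝ := (Fintype.card (ι → α) : ℝ) with hN
    set q : ℝ := 1 - 1 / (2 * m) with hqdef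
    let A₁ : Finset (ι → α) := Finset.univ.filter fun f => ∃ a, Function.update f j a ∈ A
    let A₂ : Finset (ι → α) := Finset.univ.filter fun f => ∀ a, Function.update f j a ∈ A
    have hcount : m * A.card ≤ (m - 1) * A₁.card + A₂.card := by
      have h := sum_card_filter_update A j
      have hpt : ∀ f : ι → α,
          (((Finset.univ.filter fun a : α => Function.update f j a ∈ A).card : ℕ) : ℝ)
            ≤ (m - 1) * (if f ∈ A₁ then 1 else 0) + (if f ∈ A₂ then 1 else 0) := by
        intro f
        by_cases h2 : f ∈ A₂
        · have h1 : f ∈ A₁ := by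
            simp only [A₁, A₂, Finset.mem_filter, Finset.mem_univ, true_and] at h2 ⊢
            exact ⟨Classical.arbitrary α, h2 _⟩
          have := Finset.card_le_univ (Finset.univ.filter fun a : α => Function.update f j a ∈ A)
          have : (((Finset.univ.filter fun a : α => Function.update f j a ∈ A).card : ℕ) : ℝ)
            ≤ m := by rw [hmdef]; exact_mod_cast this
          simp only [h1, h2, if_true]
          linarith
        · by_cases h1 : f ∈ A₁
          · have hlt : (Finset.univ.filter fun a : α => Function.update f j a ∈ A).card
                < Fintype.card α := by
              rw [← Finset.card_univ]
              apply Finset.card_lt_card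
              rw [Finset.filter_ssubset]
              simpa [A₂] using h2
            have : (((Finset.univ.filter fun a : α => Function.update f j a ∈ A).card : ℕ) : ℝ)
                + 1 ≤ m := by rw [hmdef]; exact_mod_cast hlt
            simp only [h1, h2, if_true, if_false]
            linarith
          · have h0 : (Finset.univ.filter fun a : α => Function.update f j a ∈ A) = ∅ := by
              simpa [A₁, Finset.filter_eq_empty_iff] using h1
            rw [h0]
            simp [h1, h2]
      have hs := Finset.sum_le_sum (fun f (_ : f ∈ (Finset.univ : Finset (ι → α))) => hpt f)
      rw [← Nat.cast_sum, h, Finset.sum_add_distrib, ← Finset.mul_sum] at hs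
      simpa using hs
    have hA₁ : (A₁.card : ℝ) ≤ 2 ^ d * q ^ J.card * N := by
      apply ih A₁ d
      intro I hI hsh
      apply hd I (hI.trans (Finset.subset_insert _ _))
      intro τ
      obtain ⟨f, hf, hfτ⟩ := hsh τ
      obtain ⟨a, ha⟩ := (Finset.mem_filter.mp hf).2
      refine ⟨_, ha, fun i hi => ?_⟩
      have : i ≠ j := by
        rintro rfl
        exact hj (hI hi)
      rw [Function.update_of_ne this, hfτ i hi]
    have hins : ∀ I ⊆ J, WordShatters A₂ I → I.card + 1 ≤ d := by
      intro I hI hsh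
      rw [← Finset.card_insert_of_notMem (fun h => hj (hI h))]
      apply hd _ (Finset.insert_subset_insert _ hI)
      intro τ
      obtain ⟨f, hf, hfτ⟩ := hsh τ
      refine ⟨_, (Finset.mem_filter.mp hf).2 (τ j), fun i hi => ?_⟩
      rcases eq_or_ne i j with rfl | hij
      · simp
      · rw [Function.update_of_ne hij]
        exact hfτ i ((Finset.mem_insert.mp hi).resolve_left hij)
    have hA₂ : (A₂.card : ℝ) ≤ 2 ^ d / 2 * q ^ J.card * N := by
      rcases A₂.eq_empty_or_nonempty with h0 | ⟨f, hf⟩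
      · rw [h0]
        simp only [Finset.card_empty, Nat.cast_zero]
        positivity
      · have hd1 : 1 ≤ d := by
          have := hins ∅ (Finset.empty_subset _) (fun τ => ⟨f, hf, by simp⟩)
          simpa using this
        obtain ⟨e, rfl⟩ : ∃ e, d = e + 1 := ⟨d - 1, by omega⟩
        have := ih A₂ e (fun I hI hsh => by have := hins I hI hsh; omega)
        have h2 : (2 : ℝ) ^ (e + 1) / 2 = 2 ^ e := by rw [pow_succ]; ring
        rwa [h2]
    rw [Finset.card_insert_of_notMem hj, pow_succ]
    have hmq : m * q = m - 1 / 2 := by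
      rw [hqdef]
      field_simp
    have h3 : m * (A.card : ℝ) ≤ m * (2 ^ d * (q ^ J.card * q) * N) := by
      calc m * (A.card : ℝ) ≤ (m - 1) * A₁.card + A₂.card := hcount
        _ ≤ (m - 1) * (2 ^ d * q ^ J.card * N) + 2 ^ d / 2 * q ^ J.card * N := by
            have : 0 ≤ m - 1 := by linarith
            gcongr
        _ = (m * q) * (2 ^ d * q ^ J.card * N) := by rw [hmq]; ring
        _ = _ := by ring
    exact le_of_mul_le_mul_left h3 (by linarith)

/-- Families of words of density close to one shatter a subset of definite proportion in every
set of coordinates. -/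
theorem exists_shatters_of_dense (α : Type*) [Fintype α] [Nonempty α] :
    ∃ c > (0 : ℝ), ∃ ε > (0 : ℝ), ∀ (ι : Type*) [Fintype ι] [DecidableEq ι]
      (A : Finset (ι → α)) (J : Finset ι),
      (1 - ε) * (Fintype.card (ι → α) : ℝ) ≤ A.card →
        ∃ I ⊆ J, c * J.card ≤ I.card ∧ WordShatters A I := by
  have hm : (1 : ℝ) ≤ Fintype.card α := by exact_mod_cast Fintype.card_pos
  set m : ℝ := (Fintype.card α : ℝ) with hmdef
  set q : ℝ := 1 - 1 / (2 * m) with hqdef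
  have hinv : 0 < 1 / (2 * m) := by positivity
  have hinv' : 1 / (2 * m) ≤ 1 / 2 := by
    apply one_div_le_one_div_of_le <;> linarith
  have hq0 : 0 < q := by linarith
  have hq1 : q < 1 := by linarith
  have hlogq : Real.log q < 0 := Real.log_neg hq0 hq1
  have hlog2 : 0 < Real.log 2 := Real.log_pos (by norm_num)
  refine ⟨-Real.log q / (2 * Real.log 2), by apply div_pos <;> linarith, 1 / (4 * m),
    by positivity, ?_⟩
  intro ι _ _ A J hA
  have hε : 1 / (4 * m) = (1 / (2 * m)) / 2 := by field_simp; norm_num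
  have hN : (0 : ℝ) < Fintype.card (ι → α) := by exact_mod_cast Fintype.card_pos
  rcases J.eq_empty_or_nonempty with rfl | hJ
  · have : 0 < (A.card : ℝ) := by
      refine lt_of_lt_of_le (mul_pos ?_ hN) hA
      linarith
    obtain ⟨a, ha⟩ := Finset.card_pos.mp (by exact_mod_cast this)
    exact ⟨∅, subset_rfl, by simp, fun τ => ⟨a, ha, by simp⟩⟩
  by_contra! hcon
  let S : Finset (Finset ι) := J.powerset.filter fun I => WordShatters A I
  let d : ℕ := S.sup Finset.card
  have hd : ∀ I ⊆ J, WordShatters A I → I.card ≤ d := fun I hI hsh =>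
    Finset.le_sup (f := Finset.card) (by simp [S, hI, hsh])
  have hbound := card_le_of_shatters_le J A d hd
  have hden : 1 - 1 / (4 * m) ≤ 2 ^ d * q ^ J.card := by
    have := hA.trans hbound
    exact le_of_mul_le_mul_right this hN
  have hd1 : 1 ≤ d := by
    by_contra h
    have h0 : d = 0 := by omega
    rw [h0, pow_zero, one_mul] at hden
    have : q ^ J.card ≤ q := pow_le_of_le_one hq0.le hq1.le hJ.card_pos.ne'
    linarith
  have hmem : ∃ I ∈ S, I.card = d := by
    have hS : S.Nonempty := by
      by_contra h
      have : d = 0 := by simp [d, Finset.not_nonempty_iff_eq_empty.mp h]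
      omega
    obtain ⟨I, hI, h⟩ := Finset.exists_mem_eq_sup S hS Finset.card
    exact ⟨I, hI, h.symm⟩
  obtain ⟨I, hI, hId⟩ := hmem
  simp only [S, Finset.mem_filter, Finset.mem_powerset] at hI
  refine hcon I hI.1 ?_ hI.2
  have hhalf : (1 : ℝ) / 2 ≤ 2 ^ d * q ^ J.card := by linarith
  have hlog := Real.log_le_log (by norm_num) hhalf
  rw [Real.log_mul (by positivity) (by positivity), Real.log_pow, Real.log_pow, one_div,
    Real.log_inv] at hlog
  have hd1' : (1 : ℝ) ≤ d := by exact_mod_cast hd1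
  rw [hId, div_mul_eq_mul_div, div_le_iff₀ (by positivity)]
  nlinarith

/-- If every member of a finite family of events has probability at least `1 - η * δ`, then with
probability at least `1 - δ` at least the proportion `1 - η` of the events occurs. -/
theorem exists_measurable_frequent {X T : Type*} [MeasurableSpace X] (μ : Measure X)
    [IsProbabilityMeasure μ] (S : Finset T) (hS : S.Nonempty) (E : T → Set X)
    (hE : ∀ t ∈ S, MeasurableSet (E t)) {η δ : ℝ} (hη : 0 < η)
    (hμ : ∀ t ∈ S, 1 - η * δ ≤ μ.real (E t)) :
    ∃ D : Set X, MeasurableSet D ∧ 1 - δ ≤ μ.real D ∧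
      ∀ x ∈ D, (1 - η) * (S.card : ℝ) ≤ (S.filter fun t => x ∈ E t).card := by
  let g : X → ℝ := fun x => ∑ t ∈ S, (E t)ᶜ.indicator (fun _ => (1 : ℝ)) x
  have hScard : (0 : ℝ) < S.card := by exact_mod_cast hS.card_pos
  have hg : Measurable g :=
    Finset.measurable_sum _ fun t ht => measurable_const.indicator (hE t ht).compl
  have hint : ∀ t ∈ S, Integrable ((E t)ᶜ.indicator (fun _ => (1 : ℝ))) μ := fun t ht =>
    (integrable_const _).indicator (hE t ht).compl
  have hg0 : 0 ≤ g := fun x => Finset.sum_nonneg fun t _ =>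
    Set.indicator_nonneg (fun _ _ => zero_le_one) x
  have hgint : ∫ x, g x ∂μ ≤ S.card * (η * δ) := by
    rw [integral_finsetSum _ hint, ← nsmul_eq_mul]
    apply Finset.sum_le_card_nsmul
    intro t ht
    have : ∫ x, (E t)ᶜ.indicator (fun _ => (1 : ℝ)) x ∂μ = μ.real (E t)ᶜ := by
      rw [integral_indicator (hE t ht).compl]
      simp
    rw [this, probReal_compl_eq_one_sub (hE t ht)]
    linarith [hμ t ht]
  have hB : MeasurableSet {x | η * S.card ≤ g x} := measurableSet_le measurable_const hg
  refine ⟨{x | η * S.card ≤ g x}ᶜ, hB.compl, ?_, ?_⟩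
  · have hmarkov := mul_meas_ge_le_integral_of_nonneg (Filter.Eventually.of_forall hg0)
      (integrable_finsetSum _ hint) (η * S.card)
    have : (η * S.card) * μ.real {x | η * S.card ≤ g x} ≤ (η * S.card) * δ := by
      refine (hmarkov.trans hgint).trans (le_of_eq ?_)
      ring
    have := le_of_mul_le_mul_left this (by positivity)
    rw [probReal_compl_eq_one_sub hB]
    linarith
  · intro x hx
    simp only [Set.mem_compl_iff, Set.mem_ofPred_eq, not_le] at hx
    have h1 : g x = ((S.filter fun t => ¬ x ∈ E t).card : ℝ) := by
      simp only [g, Finset.card_filter, Nat.cast_sum, Set.indicator_apply, Set.mem_compl_iff]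
      refine Finset.sum_congr rfl fun t _ => ?_
      split_ifs <;> simp
    have h2 := Finset.card_filter_add_card_filter_not (s := S) (fun t => x ∈ E t)
    have h3 : ((S.filter fun t => x ∈ E t).card : ℝ)
        + ((S.filter fun t => ¬ x ∈ E t).card : ℝ) = S.card := by exact_mod_cast h2
    linarith

/-- Most sections of a set of large product measure have large measure. -/
theorem exists_measurable_large_section {X Y : Type*} [MeasurableSpace X] [MeasurableSpace Y]
    (μ : Measure X) [IsProbabilityMeasure μ] (ν : Measure Y) [IsProbabilityMeasure ν]
    {D : Set (X × Y)} (hD : MeasurableSet D) {η δ : ℝ} (hη : 0 < η)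
    (hμν : 1 - η * δ ≤ (μ.prod ν).real D) :
    ∃ D₁ : Set X, MeasurableSet D₁ ∧ 1 - δ ≤ μ.real D₁ ∧
      ∀ x ∈ D₁, 1 - η ≤ ν.real (Prod.mk x ⁻¹' D) := by
  let g : X → ℝ := fun x => ν.real (Prod.mk x ⁻¹' Dᶜ)
  have hg : Measurable g := (measurable_measure_prodMk_left hD.compl).ennreal_toReal
  have hg0 : 0 ≤ g := fun x => measureReal_nonneg
  have hgi : Integrable g μ := by
    refine Integrable.of_bound hg.aestronglyMeasurable 1 (Filter.Eventually.of_forall fun x => ?_)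
    rw [Real.norm_of_nonneg (hg0 x)]
    exact measureReal_le_one
  have hgint : ∫ x, g x ∂μ ≤ η * δ := by
    have : ∫ x, g x ∂μ = (μ.prod ν).real Dᶜ := by
      rw [measureReal_def, Measure.prod_apply hD.compl, ← integral_toReal]
      · rfl
      · exact (measurable_measure_prodMk_left hD.compl).aemeasurable
      · exact Filter.Eventually.of_forall fun x => measure_lt_top _ _
    rw [this, probReal_compl_eq_one_sub hD]
    linarith
  have hB : MeasurableSet {x | η ≤ g x} := measurableSet_le measurable_const hg
  refine ⟨{x | η ≤ g x}ᶜ, hB.compl, ?_, ?_⟩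
  · have hmarkov := mul_meas_ge_le_integral_of_nonneg (Filter.Eventually.of_forall hg0) hgi η
    have := le_of_mul_le_mul_left (hmarkov.trans hgint) hη
    rw [probReal_compl_eq_one_sub hB]
    linarith
  · intro x hx
    simp only [Set.mem_compl_iff, Set.mem_ofPred_eq, not_le, g] at hx
    rw [Set.preimage_compl, probReal_compl_eq_one_sub (measurable_prodMk_left hD)] at hx
    linarith

/-- The tuple `A` is uniformly independent for `μ`: there are `c, δ > 0` such that, for every
Borel set `D` with `μ(D) ≥ 1 - δ`, every finite `F ⊆ G` contains an independence set for `A`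
relative to `D` with at least `c * |F|` elements. No invariance of `F` is required. -/
def UniformlyIndep (G : Type*) {X : Type*} [Group G] [MulAction G X] [MeasurableSpace X]
    (μ : Measure X) {k : ℕ} (A : Fin k → Set X) : Prop :=
  ∃ c > (0 : ℝ), ∃ δ > (0 : ℝ), ∀ (F : Finset G) (D : Set X), MeasurableSet D →
    1 - δ ≤ μ.real D → ∃ J ⊆ F, c * F.card ≤ J.card ∧ IndepRel A (fun _ : G => D) (J : Set G)

theorem indepRel_coe_finset {G X : Type*} [Group G] [MulAction G X] {k : ℕ}
    {A : Fin k → Set X} {D : Set X} {J : Finset G}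
    (h : ∀ σ : G → Fin k, ∃ x ∈ D, ∀ s ∈ J, s • x ∈ A (σ s)) :
    IndepRel A (fun _ : G => D) (J : Set G) := by
  intro F hF _ σ
  obtain ⟨x, hx, hxA⟩ := h σ
  refine ⟨x, ?_⟩
  simp only [Set.mem_iInter]
  exact fun s hs => ⟨hx, hxA s (by exact_mod_cast hF hs)⟩

theorem IndepRel.exists_point {G X : Type*} [Group G] [MulAction G X] {k : ℕ}
    {A : Fin k → Set X} {D : Set X} {J : Set G} (h : IndepRel A (fun _ : G => D) J)
    {F : Finset G} (hF : (F : Set G) ⊆ J) (hne : F.Nonempty) (σ : G → Fin k) :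
    ∃ x ∈ D, ∀ s ∈ F, s • x ∈ A (σ s) := by
  obtain ⟨x, hx⟩ := h F hF hne σ
  simp only [Set.mem_iInter] at hx
  obtain ⟨s, hs⟩ := hne
  exact ⟨x, (hx s hs).1, fun t ht => (hx t ht).2⟩

/-- A choice of points realising all words on a finite ambient set `F ⊇ J`. -/
theorem IndepRel.exists_points {G X : Type*} [Group G] [MulAction G X] {k : ℕ} (hk : 1 ≤ k)
    {A : Fin k → Set X} {D : Set X} {F J : Finset G}
    (h : IndepRel A (fun _ : G => D) (J : Set G)) (hne : J.Nonempty) :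
    ∃ x : (F → Fin k) → X, ∀ σ, x σ ∈ D ∧ ∀ s : F, (s : G) ∈ J → (s : G) • x σ ∈ A (σ s) := by
  have : ∀ σ : F → Fin k, ∃ x, x ∈ D ∧ ∀ s : F, (s : G) ∈ J → (s : G) • x ∈ A (σ s) := by
    intro σ
    obtain ⟨x, hx, hxA⟩ := h.exists_point subset_rfl hne
      (fun g => if hg : g ∈ F then σ ⟨g, hg⟩ else ⟨0, hk⟩)
    refine ⟨x, hx, fun s hs => ?_⟩
    simpa using hxA s hs
  choose x hx using this
  exact ⟨x, hx⟩

theorem UniformlyIndep.mono {G X : Type*} [Group G] [MulAction G X] [MeasurableSpace X]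
    {μ : Measure X} {k : ℕ} {A B : Fin k → Set X} (h : UniformlyIndep G μ A)
    (hAB : ∀ i, A i ⊆ B i) : UniformlyIndep G μ B := by
  obtain ⟨c, hc, δ, hδ, h⟩ := h
  refine ⟨c, hc, δ, hδ, fun F D hD hDμ => ?_⟩
  obtain ⟨J, hJF, hJc, hJ⟩ := h F D hD hDμ
  refine ⟨J, hJF, hJc, fun I hI hne σ => (hJ I hI hne σ).mono ?_⟩
  exact Set.iInter₂_mono fun s _ => Set.inter_subset_inter_right _ (Set.preimage_mono (hAB _))

/-- Shattering inside the coordinates of a finite subset `F` of a group. -/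
theorem exists_finset_shatters (α : Type*) [Fintype α] [Nonempty α] :
    ∃ c > (0 : ℝ), ∃ ε > (0 : ℝ), ∀ (G : Type*) (F J : Finset G) (A : Finset (F → α)),
      J ⊆ F → (1 - ε) * (Fintype.card (F → α) : ℝ) ≤ A.card →
        ∃ I ⊆ J, c * J.card ≤ I.card ∧
          ∀ τ : G → α, ∃ a ∈ A, ∀ s : F, (s : G) ∈ I → a s = τ s := by
  obtain ⟨c, hc, ε, hε, h⟩ := exists_shatters_of_dense α
  refine ⟨c, hc, ε, hε, fun G F J A hJF hA => ?_⟩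
  obtain ⟨I, hIJ, hIc, hI⟩ := h F A (J.subtype (· ∈ F)) hA
  refine ⟨I.map (Function.Embedding.subtype _), ?_, ?_, ?_⟩
  · intro s hs
    obtain ⟨t, ht, rfl⟩ := Finset.mem_map.mp hs
    exact Finset.mem_subtype.mp (hIJ ht)
  · rw [Finset.card_map]
    rwa [Finset.card_subtype, Finset.filter_true_of_mem fun s hs => hJF hs] at hIc
  · intro τ
    obtain ⟨a, ha, haτ⟩ := hI (fun s => τ s)
    refine ⟨a, ha, fun s hs => haτ s ?_⟩
    obtain ⟨t, ht, hts⟩ := Finset.mem_map.mp hs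
    rwa [← Subtype.ext hts]

/-- Uniform independence passes to products. -/
theorem UniformlyIndep.prod {G X Y : Type*} [Group G] [MulAction G X] [MeasurableSpace X]
    [MulAction G Y] [MeasurableSpace Y] {μ : Measure X} [IsProbabilityMeasure μ]
    {ν : Measure Y} [IsProbabilityMeasure ν] {k : ℕ} (hk : 1 ≤ k) {U : Fin k → Set X}
    {V : Fin k → Set Y} (hU : UniformlyIndep G μ U) (hV : UniformlyIndep G ν V) :
    UniformlyIndep G (μ.prod ν) (fun i => U i ×ˢ V i) := by
  obtain ⟨c₁, hc₁, δ₁, hδ₁, hU⟩ := hU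
  obtain ⟨c₂, hc₂, δ₂, hδ₂, hV⟩ := hV
  have : Nonempty (Fin k) := ⟨⟨0, hk⟩⟩
  obtain ⟨c, hc, ε, hε, hsh⟩ := exists_finset_shatters (Fin k × Fin k)
  refine ⟨c * (c₂ * c₁), by positivity, (ε * δ₂) * δ₁, by positivity, fun F D hD hDμ => ?_⟩
  rcases F.eq_empty_or_nonempty with rfl | hF
  · exact ⟨∅, subset_rfl, by simp, fun I hI hne => by simp_all⟩
  have hFc : (0 : ℝ) < F.card := by exact_mod_cast hF.card_pos
  obtain ⟨D₁, hD₁, hD₁μ, hsec⟩ :=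
    exists_measurable_large_section μ ν hD (by positivity : 0 < ε * δ₂) hDμ
  obtain ⟨J₁, hJ₁F, hJ₁c, hJ₁⟩ := hU F D₁ hD₁ hD₁μ
  have hJ₁ne : J₁.Nonempty := by
    rw [← Finset.card_pos]
    exact_mod_cast lt_of_lt_of_le (mul_pos hc₁ hFc) hJ₁c
  obtain ⟨x, hx⟩ := hJ₁.exists_points (F := F) hk hJ₁ne
  obtain ⟨D₂, hD₂, hD₂ν, hfreq⟩ := exists_measurable_frequent ν
    (Finset.univ : Finset (F → Fin k)) Finset.univ_nonempty (fun σ => Prod.mk (x σ) ⁻¹' D)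
    (fun σ _ => measurable_prodMk_left hD) hε (fun σ _ => hsec _ (hx σ).1)
  obtain ⟨J₂, hJ₂J₁, hJ₂c, hJ₂⟩ := hV J₁ D₂ hD₂ hD₂ν
  have hJ₂ne : J₂.Nonempty := by
    rw [← Finset.card_pos]
    have : (0 : ℝ) < J₁.card := by exact_mod_cast hJ₁ne.card_pos
    exact_mod_cast lt_of_lt_of_le (mul_pos hc₂ this) hJ₂c
  obtain ⟨y, hy⟩ := hJ₂.exists_points (F := F) hk hJ₂ne
  let A : Finset (F → Fin k × Fin k) := Finset.univ.filter fun p =>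
    (x (fun s => (p s).1), y (fun s => (p s).2)) ∈ D
  have hA : (1 - ε) * (Fintype.card (F → Fin k × Fin k) : ℝ) ≤ A.card := by
    have e : (F → Fin k × Fin k) ≃ (F → Fin k) × (F → Fin k) := Equiv.arrowProdEquivProdArrow _ _ _
    have hAcard : A.card = ∑ τ : F → Fin k,
        (Finset.univ.filter fun σ : F → Fin k => y τ ∈ Prod.mk (x σ) ⁻¹' D).card := by
      simp only [A, Finset.card_filter]
      rw [← Fintype.sum_prod_type_right']
      exact Fintype.sum_equiv (Equiv.arrowProdEquivProdArrow _ _ _) _ _ (fun p => rfl)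
    rw [hAcard, Fintype.card_congr e, Fintype.card_prod, Nat.cast_mul, Nat.cast_sum,
      mul_left_comm, ← nsmul_eq_mul]
    exact Finset.card_nsmul_le_sum _ _ _ fun τ _ => hfreq _ (hy τ).1
  obtain ⟨I, hIJ, hIc, hI⟩ := hsh G F J₂ A (hJ₂J₁.trans hJ₁F) hA
  refine ⟨I, hIJ.trans (hJ₂J₁.trans hJ₁F), ?_, indepRel_coe_finset fun σ => ?_⟩
  · calc c * (c₂ * c₁) * F.card = c * (c₂ * (c₁ * F.card)) := by ring
      _ ≤ c * (c₂ * J₁.card) := by gcongr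
      _ ≤ c * J₂.card := by gcongr
      _ ≤ I.card := hIc
  · obtain ⟨p, hp, hpσ⟩ := hI (fun s => (σ s, σ s))
    refine ⟨_, (Finset.mem_filter.mp hp).2, fun s hs => ?_⟩
    have hsF : s ∈ F := hJ₁F (hJ₂J₁ (hIJ hs))
    have hps := hpσ ⟨s, hsF⟩ hs
    have h1 := (hx fun s => (p s).1).2 ⟨s, hsF⟩ (hJ₂J₁ (hIJ hs))
    have h2 := (hy fun s => (p s).2).2 ⟨s, hsF⟩ (hIJ hs)
    simp only [hps] at h1 h2
    exact ⟨h1, h2⟩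

/-- Uniform independence passes to the image of a measure under an equivariant map. -/
theorem UniformlyIndep.of_measurePreserving {G X Y : Type*} [Group G] [MulAction G X]
    [MeasurableSpace X] [MulAction G Y] [MeasurableSpace Y] {μ : Measure X} {ν : Measure Y}
    {k : ℕ} {V : Fin k → Set Y} {π : X → Y} (hπ : MeasurePreserving π μ ν)
    (hequiv : ∀ (s : G) (x : X), π (s • x) = s • π x)
    (h : UniformlyIndep G μ (fun i => π ⁻¹' V i)) : UniformlyIndep G ν V := by
  obtain ⟨c, hc, δ, hδ, h⟩ := h
  refine ⟨c, hc, δ, hδ, fun F D hD hDν => ?_⟩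
  obtain ⟨J, hJF, hJc, hJ⟩ := h F (π ⁻¹' D) (hπ.measurable hD) (by
    rwa [measureReal_def, hπ.measure_preimage hD.nullMeasurableSet])
  refine ⟨J, hJF, hJc, fun I hI hne σ => ?_⟩
  obtain ⟨x, hx, hxV⟩ := hJ.exists_point hI hne σ
  refine ⟨π x, ?_⟩
  simp only [Set.mem_iInter]
  refine fun s hs => ⟨hx, ?_⟩
  have := hxV s hs
  rwa [Set.mem_preimage, hequiv] at this

section Density

variable {G X : Type*} [Group G] [MulAction G X] {k : ℕ}

theorem maxIndep_mem (A : Fin k → Set X) (D : G → Set X) (F : Finset G) :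
    BddAbove {m : ℕ | ∃ J : Set G, IndepRel A D J ∧ m = (((F : Set G)) ∩ J).ncard} ∧
    maxIndep A D F ∈ {m : ℕ | ∃ J : Set G, IndepRel A D J ∧ m = (((F : Set G)) ∩ J).ncard} := by
  have hb : BddAbove {m : ℕ | ∃ J : Set G, IndepRel A D J ∧ m = (((F : Set G)) ∩ J).ncard} := by
    refine ⟨F.card, ?_⟩
    rintro m ⟨J, -, rfl⟩
    rw [← Set.ncard_coe_finset]
    exact Set.ncard_le_ncard Set.inter_subset_left F.finite_toSet
  refine ⟨hb, Nat.sSup_mem ⟨0, ∅, ?_, by simp⟩ hb⟩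
  intro I hI hne
  simp_all

theorem exists_finset_of_maxIndep (A : Fin k → Set X) (D : G → Set X) (F : Finset G) :
    ∃ J ⊆ F, J.card = maxIndep A D F ∧ IndepRel A D (J : Set G) := by
  obtain ⟨J, hJ, hm⟩ := (maxIndep_mem A D F).2
  refine ⟨F.filter (· ∈ J), Finset.filter_subset _ _, ?_, fun I hI => hJ I (hI.trans ?_)⟩
  · rw [hm, ← Set.ncard_coe_finset]
    congr 1
    ext s
    simp
  · intro s hs
    simpa using (Finset.mem_filter.mp (Finset.mem_coe.mp hs)).2

theorem card_le_maxIndep {A : Fin k → Set X} {D : G → Set X} {F J : Finset G} (hJF : J ⊆ F)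
    (hJ : IndepRel A D (J : Set G)) : J.card ≤ maxIndep A D F := by
  refine le_csSup (maxIndep_mem A D F).1 ⟨J, hJ, ?_⟩
  rw [Set.inter_eq_right.mpr (by exact_mod_cast hJF), Set.ncard_coe_finset]

theorem invLimsup_le_sSup {ψ : Finset G → ℝ} (hψ : ∀ F, 0 ≤ ψ F) (K : Finset G)
    {δ : ℝ} (hδ : 0 < δ) :
    invLimsup ψ ≤
      sSup ((fun F : Finset G => ψ F / (F.card : ℝ)) '' {F : Finset G | FolnerInv K δ F}) := by
  have h0 : ∀ (K : Finset G) (δ : {d : ℝ // 0 < d}), 0 ≤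
      sSup ((fun F : Finset G => ψ F / (F.card : ℝ)) '' {F : Finset G | FolnerInv K δ.1 F}) := by
    intro K δ
    apply Real.sSup_nonneg
    rintro _ ⟨F, -, rfl⟩
    exact div_nonneg (hψ F) (by positivity)
  have : Nonempty {d : ℝ // 0 < d} := ⟨⟨1, one_pos⟩⟩
  refine (ciInf_le ⟨0, ?_⟩ K).trans (ciInf_le ⟨0, ?_⟩ (⟨δ, hδ⟩ : {d : ℝ // 0 < d}))
  · rintro _ ⟨K, rfl⟩
    exact le_ciInf fun δ => h0 K δ
  · rintro _ ⟨δ, rfl⟩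
    exact h0 K δ

variable [MeasurableSpace X] {μ : Measure X}

/-- Positive upper independence density provides arbitrarily invariant finite sets which contain,
relative to every Borel set `D` of large measure, an independence set of definite proportion. -/
theorem exists_folner_of_upperIndepDens_pos {A : Fin k → Set X}
    (h : 0 < upperIndepDens G μ A) :
    ∃ d > (0 : ℝ), ∃ δ > (0 : ℝ), ∀ (K : Finset G) (ε : ℝ), 0 < ε →
      ∃ F : Finset G, FolnerInv K ε F ∧ ∀ D : Set X, MeasurableSet D → 1 - δ ≤ μ.real D →
        ∃ J ⊆ F, d * F.card ≤ J.card ∧ IndepRel A (fun _ : G => D) (J : Set G) := by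
  have : Nonempty {d : ℝ // 0 < d} := ⟨⟨1, one_pos⟩⟩
  obtain ⟨δ, hδ⟩ := exists_lt_of_lt_ciSup h
  set L := invLimsup (fun F : Finset G => (phiConst μ A δ.1 F : ℝ)) with hL
  refine ⟨L / 2, by positivity, δ.1, δ.2, fun K ε hε => ?_⟩
  have hlt := (half_lt_self hδ).trans_le
    (invLimsup_le_sSup (ψ := fun F : Finset G => (phiConst μ A δ.1 F : ℝ))
      (fun F => by positivity) K hε)
  have hne : ((fun F : Finset G => (phiConst μ A δ.1 F : ℝ) / (F.card : ℝ)) ''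
      {F : Finset G | FolnerInv K ε F}).Nonempty := by
    by_contra hemp
    rw [Set.not_nonempty_iff_eq_empty.mp hemp, Real.sSup_empty] at hlt
    linarith
  obtain ⟨_, ⟨F, hF, rfl⟩, hFlt⟩ := exists_lt_of_lt_csSup hne hlt
  refine ⟨F, hF, fun D hD hDμ => ?_⟩
  obtain ⟨J, hJF, hJc, hJ⟩ := exists_finset_of_maxIndep A (fun _ : G => D) F
  refine ⟨J, hJF, ?_, hJ⟩
  have hFc : (0 : ℝ) < F.card := by exact_mod_cast hF.1.card_pos
  have hle : phiConst μ A δ.1 F ≤ J.card := hJc ▸ Nat.sInf_le ⟨D, hD, hDμ, rfl⟩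
  have hle' : (phiConst μ A δ.1 F : ℝ) ≤ J.card := by exact_mod_cast hle
  exact ((lt_div_iff₀ hFc).mp hFlt).le.trans hle'

variable [IsProbabilityMeasure μ]

theorem phiConst_le_card (A : Fin k → Set X) {δ : ℝ} (hδ : 0 < δ) (F : Finset G) :
    phiConst μ A δ F ≤ F.card := by
  obtain ⟨J, hJF, hJ, -⟩ := exists_finset_of_maxIndep A (fun _ : G => (Set.univ : Set X)) F
  calc phiConst μ A δ F ≤ maxIndep A (fun _ : G => (Set.univ : Set X)) F :=
        Nat.sInf_le ⟨Set.univ, MeasurableSet.univ, by simp [hδ.le], rfl⟩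
    _ ≤ F.card := hJ ▸ Finset.card_le_card hJF

theorem phiConst_div_card_le_one (A : Fin k → Set X) {δ : ℝ} (hδ : 0 < δ) (F : Finset G) :
    (phiConst μ A δ F : ℝ) / F.card ≤ 1 :=
  div_le_one_of_le₀ (by exact_mod_cast phiConst_le_card A hδ F) (by positivity)

theorem le_phiConst {A : Fin k → Set X} {δ c : ℝ} (hδ : 0 < δ) {F : Finset G}
    (h : ∀ D : Set X, MeasurableSet D → 1 - δ ≤ μ.real D →
      c ≤ maxIndep A (fun _ : G => D) F) : c ≤ phiConst μ A δ F := by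
  obtain ⟨D, hD, hDμ, hm⟩ : phiConst μ A δ F ∈ {m : ℕ | ∃ D : Set X, MeasurableSet D ∧
      1 - δ ≤ (μ D).toReal ∧ m = maxIndep A (fun _ : G => D) F} :=
    Nat.sInf_mem ⟨_, Set.univ, MeasurableSet.univ, by simp [hδ.le], rfl⟩
  rw [hm]
  exact h D hD hDμ

/-- Uniform independence implies positive upper independence density. -/
theorem UniformlyIndep.upperIndepDens_pos (hamen : FolnerAmenable G) {A : Fin k → Set X}
    (h : UniformlyIndep G μ A) : 0 < upperIndepDens G μ A := by
  obtain ⟨c, hc, δ, hδ, h⟩ := h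
  have : Nonempty {d : ℝ // 0 < d} := ⟨⟨1, one_pos⟩⟩
  have hbdd : BddAbove (Set.range fun δ : {d : ℝ // 0 < d} =>
      invLimsup (fun F : Finset G => (phiConst μ A δ.1 F : ℝ))) := by
    refine ⟨1, ?_⟩
    rintro _ ⟨δ, rfl⟩
    refine (invLimsup_le_sSup (fun F => by positivity) ∅ one_pos).trans (Real.sSup_le ?_ zero_le_one)
    rintro _ ⟨F, -, rfl⟩
    exact phiConst_div_card_le_one A δ.2 F
  refine lt_of_lt_of_le hc (le_trans ?_ (le_ciSup hbdd ⟨δ, hδ⟩))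
  refine le_ciInf fun K => le_ciInf fun ε => ?_
  obtain ⟨F, hF⟩ := hamen K ε.1 ε.2
  refine le_csSup_of_le ⟨1, ?_⟩ ⟨F, hF, rfl⟩ ?_
  · rintro _ ⟨F, -, rfl⟩
    exact phiConst_div_card_le_one A hδ F
  · have hFc : (0 : ℝ) < F.card := by exact_mod_cast hF.1.card_pos
    rw [le_div_iff₀ hFc]
    refine le_phiConst hδ fun D hD hDμ => ?_
    obtain ⟨J, hJF, hJc, hJ⟩ := h F D hD hDμ
    exact hJc.trans (by exact_mod_cast card_le_maxIndep hJF hJ)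

end Density

/-- If `J ⊆ F` and `F` is sufficiently invariant under `F'⁻¹`, then the translates of `F'` by
elements of `F` meet `J` in `|F'| * (|J| - ε * |F|)` points, counted with multiplicity. -/
theorem FolnerInv.card_mul_le_sum {G : Type*} [Group G] {F F' J : Finset G} {ε : ℝ}
    (hF : FolnerInv (F'.image (·⁻¹)) ε F) (hJF : J ⊆ F) :
    (F'.card : ℝ) * (J.card - ε * F.card)
      ≤ ∑ t ∈ F, ((F'.filter fun f => f * t ∈ J).card : ℝ) := by
  let C : Finset G := F.filter fun s => ∀ g ∈ F'.image (·⁻¹), g * s ∈ F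
  have hC : (1 - ε) * (F.card : ℝ) ≤ C.card := by
    have h := hF.2
    rw [show (F : Set G) ∩ {s : G | ∀ g ∈ F'.image (·⁻¹), g * s ∈ F} = (C : Set G) by
      ext s; simp [C], Set.ncard_coe_finset] at h
    exact h
  have hJC : (J.card : ℝ) - ε * F.card ≤ (J ∩ C).card := by
    have h1 := Finset.card_union_add_card_inter J C
    have h2 : (J ∪ C).card ≤ F.card :=
      Finset.card_le_card (Finset.union_subset hJF (Finset.filter_subset _ _))
    have h1' : ((J ∪ C).card : ℝ) + (J ∩ C).card = J.card + C.card := by exact_mod_cast h1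
    have h2' : ((J ∪ C).card : ℝ) ≤ F.card := by exact_mod_cast h2
    linarith
  have hswap : ∑ t ∈ F, (F'.filter fun f => f * t ∈ J).card
      = ∑ f ∈ F', (F.filter fun t => f * t ∈ J).card := by
    simp only [Finset.card_filter]
    exact Finset.sum_comm
  have hle : ∀ f ∈ F', (J ∩ C).card ≤ (F.filter fun t => f * t ∈ J).card := by
    intro f hf
    refine Finset.card_le_card_of_injOn (fun s => f⁻¹ * s) ?_ (mul_right_injective _).injOn
    intro s hs
    obtain ⟨hsJ, hsC⟩ := Finset.mem_inter.mp (Finset.mem_coe.mp hs)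
    have := (Finset.mem_filter.mp hsC).2 f⁻¹ (Finset.mem_image_of_mem _ hf)
    simp [this, hsJ]
  have hsum := Finset.card_nsmul_le_sum F' _ _ hle
  rw [← hswap, smul_eq_mul] at hsum
  calc (F'.card : ℝ) * (J.card - ε * F.card) ≤ F'.card * (J ∩ C).card := by gcongr
    _ ≤ _ := by exact_mod_cast hsum

/-- Positive upper independence density implies uniform independence over all finite subsets of
the group. -/
theorem uniformlyIndep_of_upperIndepDens_pos {G X : Type*} [Group G] [MulAction G X]
    [MeasurableSpace X] {μ : Measure X} [IsProbabilityMeasure μ] {k : ℕ} (hk : 1 ≤ k)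
    (hmeas : ∀ s : G, Measurable fun x : X => s • x) (hμ : InvariantMeasure G μ)
    {A : Fin k → Set X} (h : 0 < upperIndepDens G μ A) : UniformlyIndep G μ A := by
  obtain ⟨d, hd, δ, hδ, h⟩ := exists_folner_of_upperIndepDens_pos h
  have : Nonempty (Fin k) := ⟨⟨0, hk⟩⟩
  obtain ⟨c, hc, ε, hε, hsh⟩ := exists_finset_shatters (Fin k)
  have hη : 0 < ε * (d / 4) := by positivity
  refine ⟨c * (d / 4), by positivity, (ε * (d / 4)) * δ, by positivity, fun F' D hD hDμ => ?_⟩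
  rcases F'.eq_empty_or_nonempty with rfl | hF'
  · exact ⟨∅, subset_rfl, by simp, fun I hI hne => by simp_all⟩
  have hF'c : (0 : ℝ) < F'.card := by exact_mod_cast hF'.card_pos
  obtain ⟨F, hF, hFD⟩ := h (F'.image (·⁻¹)) (d / 4) (by positivity)
  have hFc : (0 : ℝ) < F.card := by exact_mod_cast hF.1.card_pos
  obtain ⟨D', hD', hD'μ, hfreq⟩ := exists_measurable_frequent μ F hF.1
    (fun t => (fun x => t • x) ⁻¹' D) (fun t _ => hmeas t hD) hη
    (fun t _ => by rwa [measureReal_def, hμ t D hD])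
  obtain ⟨J, hJF, hJc, hJ⟩ := hFD D' hD' hD'μ
  have hJne : J.Nonempty := by
    rw [← Finset.card_pos]
    exact_mod_cast lt_of_lt_of_le (mul_pos hd hFc) hJc
  obtain ⟨x, hx⟩ := hJ.exists_points (F := F) hk hJne
  set N : ℝ := (Fintype.card (F → Fin k) : ℝ) with hN
  have hNpos : 0 < N := by
    rw [hN]
    exact_mod_cast Fintype.card_pos
  let R : G → Finset (F → Fin k) := fun t => Finset.univ.filter fun σ => t • x σ ∈ D
  let B : Finset G := F.filter fun t => ((R t).card : ℝ) < (1 - ε) * N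
  have hRle : ∀ t, ((R t).card : ℝ) ≤ N := fun t => by
    rw [hN]
    exact_mod_cast Finset.card_le_univ (R t)
  have hRsum : N * ((1 - ε * (d / 4)) * F.card) ≤ ∑ t ∈ F, ((R t).card : ℝ) := by
    have hswap : ∑ t ∈ F, (R t).card
        = ∑ σ : F → Fin k, (F.filter fun t => x σ ∈ (fun x => t • x) ⁻¹' D).card := by
      simp only [R, Finset.card_filter]
      exact Finset.sum_comm
    rw [← Nat.cast_sum, hswap, Nat.cast_sum, hN, ← Finset.card_univ, ← nsmul_eq_mul]
    exact Finset.card_nsmul_le_sum _ _ _ fun σ _ => hfreq _ (hx σ).1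
  have hB : (B.card : ℝ) ≤ d / 4 * F.card := by
    have h1 : ∑ t ∈ F, ((R t).card : ℝ)
        ≤ ∑ t ∈ F, (N - if ((R t).card : ℝ) < (1 - ε) * N then ε * N else 0) := by
      refine Finset.sum_le_sum fun t _ => ?_
      split_ifs with ht
      · linarith
      · simpa using hRle t
    rw [Finset.sum_sub_distrib, ← Finset.sum_filter, Finset.sum_const, Finset.sum_const,
      nsmul_eq_mul, nsmul_eq_mul] at h1
    have h2 : (ε * N) * (B.card : ℝ) ≤ (ε * N) * (d / 4 * F.card) := by
      linarith [hRsum.trans h1]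
    exact le_of_mul_le_mul_left h2 (by positivity)
  obtain ⟨t, htF, htB, ht⟩ : ∃ t ∈ F, t ∉ B ∧
      d / 4 * F'.card ≤ ((F'.filter fun f => f * t ∈ J).card : ℝ) := by
    by_contra! hcon
    have h1 := hF.card_mul_le_sum hJF
    have h2 : ∑ t ∈ F, ((F'.filter fun f => f * t ∈ J).card : ℝ)
        ≤ ∑ t ∈ F, (d / 4 * F'.card + if t ∈ B then (F'.card : ℝ) else 0) := by
      refine Finset.sum_le_sum fun t ht => ?_
      split_ifs with htB
      · have : ((F'.filter fun f => f * t ∈ J).card : ℝ) ≤ F'.card := by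
          exact_mod_cast Finset.card_filter_le _ _
        have : 0 ≤ d / 4 * F'.card := by positivity
        linarith
      · simpa using (hcon t ht htB).le
    rw [Finset.sum_add_distrib, ← Finset.sum_filter, Finset.sum_const, Finset.sum_const,
      nsmul_eq_mul, nsmul_eq_mul, Finset.filter_mem_eq_inter,
      Finset.inter_eq_right.mpr (Finset.filter_subset _ _)] at h2
    have h3 : (F'.card : ℝ) * (d * F.card - d / 4 * F.card)
        ≤ F'.card * (d / 4 * F.card + d / 4 * F.card) := by
      calc (F'.card : ℝ) * (d * F.card - d / 4 * F.card)
          ≤ F'.card * (J.card - d / 4 * F.card) := by gcongr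
        _ ≤ F.card * (d / 4 * F'.card) + B.card * F'.card := h1.trans h2
        _ ≤ F.card * (d / 4 * F'.card) + (d / 4 * F.card) * F'.card := by gcongr
        _ = _ := by ring
    have h4 := le_of_mul_le_mul_left h3 hF'c
    nlinarith
  have hR : (1 - ε) * N ≤ (R t).card := by
    by_contra hlt
    exact htB (Finset.mem_filter.mpr ⟨htF, not_le.mp hlt⟩)
  let J' : Finset G := (F'.filter fun f => f * t ∈ J).image (· * t)
  have hJ'J : J' ⊆ J := by
    intro s hs
    obtain ⟨f, hf, rfl⟩ := Finset.mem_image.mp hs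
    exact (Finset.mem_filter.mp hf).2
  obtain ⟨I, hIJ', hIc, hI⟩ := hsh G F J' (R t) (hJ'J.trans hJF) hR
  rw [Finset.card_image_of_injective _ (mul_left_injective t)] at hIc
  refine ⟨I.image (· * t⁻¹), ?_, ?_, indepRel_coe_finset fun σ => ?_⟩
  · intro s hs
    obtain ⟨r, hr, rfl⟩ := Finset.mem_image.mp hs
    obtain ⟨f, hf, rfl⟩ := Finset.mem_image.mp (hIJ' hr)
    simpa using (Finset.mem_filter.mp hf).1
  · rw [Finset.card_image_of_injective _ (mul_left_injective t⁻¹), mul_assoc]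
    exact (mul_le_mul_of_nonneg_left ht hc.le).trans hIc
  · obtain ⟨τ, hτ, hτσ⟩ := hI (fun s => σ (s * t⁻¹))
    refine ⟨t • x τ, (Finset.mem_filter.mp hτ).2, fun s hs => ?_⟩
    obtain ⟨r, hr, rfl⟩ := Finset.mem_image.mp hs
    have hrJ := hJ'J (hIJ' hr)
    have := (hx τ).2 ⟨r, hJF hrJ⟩ hrJ
    rw [hτσ ⟨r, hJF hrJ⟩ hr] at this
    simpa [smul_smul] using this

/-- The product of two invariant measures is invariant under the diagonal action. -/
theorem InvariantMeasure.prod {G X Y : Type*} [Group G] [MulAction G X] [MeasurableSpace X]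
    [MulAction G Y] [MeasurableSpace Y] {μ : Measure X} [IsProbabilityMeasure μ]
    {ν : Measure Y} [IsProbabilityMeasure ν]
    (hX : ∀ s : G, Measurable fun x : X => s • x) (hY : ∀ s : G, Measurable fun y : Y => s • y)
    (hμ : InvariantMeasure G μ) (hν : InvariantMeasure G ν) :
    InvariantMeasure G (μ.prod ν) := by
  intro s B hB
  have h1 : MeasurePreserving (fun x : X => s • x) μ μ :=
    ⟨hX s, Measure.ext fun C hC => by rw [Measure.map_apply (hX s) hC, hμ s C hC]⟩
  have h2 : MeasurePreserving (fun y : Y => s • y) ν ν :=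
    ⟨hY s, Measure.ext fun C hC => by rw [Measure.map_apply (hY s) hC, hν s C hC]⟩
  exact (h1.prod h2).measure_preimage hB.nullMeasurableSet

/-- Theorem (product formula): identifying `(X × Y)^k` with `X^k × Y^k`, one has
`IE^{μ×ν}_k(X × Y) = IE^μ_k(X) × IE^ν_k(Y)`, where `G` acts diagonally on `X × Y`. -/
theorem stmt12 {G X Y : Type*} [Group G]
    [TopologicalSpace X] [CompactSpace X] [T2Space X] [MulAction G X]
    [ContinuousConstSMul G X] [MeasurableSpace X] [BorelSpace X]
    [TopologicalSpace Y] [CompactSpace Y] [T2Space Y] [MulAction G Y]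
    [ContinuousConstSMul G Y] [MeasurableSpace Y] [BorelSpace Y]
    (hamen : FolnerAmenable G)
    (μ : Measure X) [IsProbabilityMeasure μ] (hμ : InvariantMeasure G μ)
    (ν : Measure Y) [IsProbabilityMeasure ν] (hν : InvariantMeasure G ν)
    (k : ℕ) (hk : 1 ≤ k) (z : Fin k → X × Y) :
    IsMuIETuple G (μ.prod ν) z ↔
      IsMuIETuple G μ (fun i => (z i).1) ∧ IsMuIETuple G ν (fun i => (z i).2) := by
  have hX : ∀ s : G, Measurable fun x : X => s • x := fun s => (continuous_const_smul s).measurable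
  have hY : ∀ s : G, Measurable fun y : Y => s • y := fun s => (continuous_const_smul s).measurable
  have hXY : ∀ s : G, Measurable fun p : X × Y => s • p := fun s =>
    ((hX s).comp measurable_fst).prodMk ((hY s).comp measurable_snd)
  constructor
  · intro hz
    refine ⟨fun U hU => ?_, fun V hV => ?_⟩
    · have h := hz (fun i => Prod.fst ⁻¹' U i) fun i => continuous_fst.continuousAt (hU i)
      exact UniformlyIndep.upperIndepDens_pos hamen
        ((uniformlyIndep_of_upperIndepDens_pos hk hXY (hμ.prod hX hY hν) h).of_measurePreserving
          measurePreserving_fst fun _ _ => rfl)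
    · have h := hz (fun i => Prod.snd ⁻¹' V i) fun i => continuous_snd.continuousAt (hV i)
      exact UniformlyIndep.upperIndepDens_pos hamen
        ((uniformlyIndep_of_upperIndepDens_pos hk hXY (hμ.prod hX hY hν) h).of_measurePreserving
          measurePreserving_snd fun _ _ => rfl)
  · rintro ⟨hx, hy⟩ W hW
    have hbox : ∀ i, ∃ U ∈ nhds (z i).1, ∃ V ∈ nhds (z i).2, U ×ˢ V ⊆ W i := fun i =>
      mem_nhds_prod_iff.mp (hW i)
    choose U hU V hV hUV using hbox
    have h := (uniformlyIndep_of_upperIndepDens_pos hk hX hμ (hx U hU)).prod hk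
      (uniformlyIndep_of_upperIndepDens_pos hk hY hν (hy V hV))
    exact (h.mono hUV).upperIndepDens_pos hamen
end

section
/- There exists a constant c > 0 (depending on nothing) such that whenever I is a finite index set and A_{i,1}, A_{i,2}, B_i (for i ∈ I) are subsets of a given set such that the collection of pairs {(A_{i,1} ∪ A_{i,2}, B_i) : i ∈ I} is independent, there are a subset J ⊆ I with |J| ≥ c|I| and a j ∈ {1,2} such that the collection {(A_{i,j}, B_i) : i ∈ J} is independent. -/
/-- The collection of pairs `(C i, D i)` for `i` in the index set `S` is independent:
for every finite `T ⊆ S` and every choice `σ` of one member of each pair, the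
corresponding intersection is nonempty. -/
def IndepPairs {ι α : Type*} (C D : ι → Set α) (S : Set ι) : Prop :=
  ∀ T : Finset ι, (T : Set ι) ⊆ S → ∀ σ : ι → Bool,
    (⋂ i ∈ T, cond (σ i) (C i) (D i)).Nonempty

open Finset in
/-- A family of subsets of `I` with at least `(3/2) ^ #I` members shatters a set of
size at least `#I / 8`. -/
theorem Finset.exists_shatters_card_le_eight_mul {ι : Type*} [DecidableEq ι] {I : Finset ι}
    {𝒜 : Finset (Finset ι)} (hsub : 𝒜 ⊆ I.powerset) (hcard : 3 ^ #I ≤ 2 ^ #I * #𝒜) :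
    ∃ S, 𝒜.Shatters S ∧ #I ≤ 8 * #S := by
  have hshat : ∀ S ∈ 𝒜.shatterer, S ⊆ I := fun S hS => by
    obtain ⟨u, hu, hSu⟩ := mem_shatterer.1 hS (Subset.refl S)
    exact (inter_eq_left.1 hSu).trans (mem_powerset.1 (hsub hu))
  by_contra! hsmall
  have hpos : 0 < #I := by
    have hne : 𝒜.Nonempty := by
      rw [← card_pos]
      by_contra h
      have : 0 < 3 ^ #I := by positivity
      simp_all
    have := hsmall ∅ (shatters_empty.2 hne)
    simpa using this
  obtain ⟨m, hm, hmI⟩ : ∃ m, (∀ S ∈ 𝒜.shatterer, #S ≤ m) ∧ 8 * m < #I := by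
    refine ⟨𝒜.vcDim, fun S hS => (mem_shatterer.1 hS).card_le_vcDim, ?_⟩
    rcases 𝒜.shatterer.eq_empty_or_nonempty with h | h
    · simp [vcDim, h, hpos]
    · obtain ⟨S, hS, hSm⟩ := exists_mem_eq_sup _ h card
      rw [vcDim, hSm]
      exact hsmall S (mem_shatterer.1 hS)
  -- Weight each subset of `I` by `4 ^ (-#S)`.
  have hcount : (#𝒜 : ℝ) * (1 / 4) ^ m ≤ (5 / 4) ^ #I :=
    calc (#𝒜 : ℝ) * (1 / 4) ^ m ≤ #𝒜.shatterer * (1 / 4) ^ m := by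
          gcongr ?_ * _
          exact_mod_cast card_le_card_shatterer 𝒜
      _ = ∑ S ∈ 𝒜.shatterer, (1 / 4 : ℝ) ^ m := by simp
      _ ≤ ∑ S ∈ 𝒜.shatterer, (1 / 4 : ℝ) ^ #S :=
          sum_le_sum fun S hS => pow_le_pow_of_le_one (by norm_num) (by norm_num) (hm S hS)
      _ ≤ ∑ S ∈ I.powerset, (1 / 4 : ℝ) ^ #S :=
          sum_le_sum_of_subset_of_nonneg (fun S hS => mem_powerset.2 (hshat S hS))
            fun _ _ _ => by positivity
      _ = (5 / 4) ^ #I := by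
          have := sum_pow_mul_eq_add_pow (1 / 4 : ℝ) 1 I
          simp only [one_pow, mul_one] at this
          rw [this]
          norm_num
  have hcard' : (3 : ℝ) ^ #I ≤ 2 ^ #I * #𝒜 := by exact_mod_cast hcard
  have hle : (6 / 5 : ℝ) ^ #I ≤ 4 ^ m := by
    have h : (3 : ℝ) ^ #I * (1 / 4) ^ m ≤ (5 / 2) ^ #I :=
      calc (3 : ℝ) ^ #I * (1 / 4) ^ m ≤ 2 ^ #I * #𝒜 * (1 / 4) ^ m := by gcongr
        _ = 2 ^ #I * (#𝒜 * (1 / 4) ^ m) := by ring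
        _ ≤ 2 ^ #I * (5 / 4) ^ #I := by gcongr
        _ = (5 / 2) ^ #I := by rw [← mul_pow]; norm_num
    have h3 : (3 : ℝ) ^ #I = (6 / 5) ^ #I * (5 / 2) ^ #I := by rw [← mul_pow]; norm_num
    rw [h3, one_div, inv_pow, ← div_eq_mul_inv, div_le_iff₀ (by positivity), mul_comm] at h
    exact le_of_mul_le_mul_left h (by positivity)
  have hlt : (4 : ℝ) ^ m < (6 / 5) ^ #I :=
    calc (4 : ℝ) ^ m ≤ ((6 / 5) ^ 8) ^ m := by gcongr; norm_num
      _ = (6 / 5) ^ (8 * m) := by rw [pow_mul]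
      _ < (6 / 5) ^ #I := pow_lt_pow_right₀ (by norm_num) hmI
  exact absurd hle hlt.not_ge

open Finset in
/-- If every `s ⊆ I` is assigned a subset `L s ⊆ s`, then some `T ⊆ I` has trace `L s` on `s`
for at least `(3/2) ^ #I` of the sets `s`. -/
theorem Finset.exists_card_filter_inter_eq {ι : Type*} [DecidableEq ι] (I : Finset ι)
    (L : Finset ι → Finset ι) (hL : ∀ s, L s ⊆ s) :
    ∃ T ⊆ I, 3 ^ #I ≤ 2 ^ #I * #{s ∈ I.powerset | T ∩ s = L s} := by
  have hfiber : ∀ s ∈ I.powerset, 2 ^ (#I - #s) ≤ #{T ∈ I.powerset | T ∩ s = L s} := by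
    intro s hs
    rw [mem_powerset] at hs
    rw [← card_sdiff_of_subset hs, ← card_powerset]
    refine card_le_card_of_injOn (fun U => U ∪ L s) (fun U hU => ?_) fun U hU V hV hUV => ?_
    · simp only [coe_powerset, Set.mem_preimage, Set.mem_powerset_iff, coe_subset] at hU
      simp only [coe_filter, mem_powerset, Set.mem_ofPred_eq]
      refine ⟨union_subset (hU.trans sdiff_subset) ((hL s).trans hs), ?_⟩
      ext i
      have h₁ := @hU i
      have h₂ := @hL s i
      simp only [mem_sdiff, mem_inter, mem_union] at *
      tauto
    · simp only [coe_powerset, Set.mem_preimage, Set.mem_powerset_iff, coe_subset] at hU hV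
      ext i
      have h₁ := @hU i
      have h₂ := @hV i
      have h₃ := @hL s i
      have h₄ := Finset.ext_iff.1 hUV i
      simp only [mem_sdiff, mem_union] at *
      tauto
  have hsum : 3 ^ #I ≤ ∑ T ∈ I.powerset, #{s ∈ I.powerset | T ∩ s = L s} :=
    calc 3 ^ #I = ∑ s ∈ I.powerset, 2 ^ (#I - #s) := by
          simpa using (sum_pow_mul_eq_add_pow (1 : ℕ) 2 I).symm
      _ ≤ ∑ s ∈ I.powerset, #{T ∈ I.powerset | T ∩ s = L s} := sum_le_sum hfiber
      _ = _ := sum_card_bipartiteAbove_eq_sum_card_bipartiteBelow (fun s T => T ∩ s = L s)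
  by_contra! h
  have hlt := sum_lt_sum_of_nonempty (powerset_nonempty I) fun T hT => h T (mem_powerset.1 hT)
  rw [← mul_sum, sum_const, card_powerset, smul_eq_mul] at hlt
  exact absurd (lt_of_mul_lt_mul_left hlt (Nat.zero_le _)) hsum.not_gt

/-- Pairs are independent over `J` if the subsets of `J` cut out by points realizing the
members of a family `𝒜` include all subsets of `J`. -/
theorem IndepPairs.of_shatters {ι α : Type*} [DecidableEq ι] {C D : ι → Set α} {J : Finset ι}
    {𝒜 : Finset (Finset ι)} (x : Finset ι → α) (hJ : 𝒜.Shatters J)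
    (hC : ∀ s ∈ 𝒜, ∀ i ∈ J, i ∈ s → x s ∈ C i) (hD : ∀ s ∈ 𝒜, ∀ i ∈ J, i ∉ s → x s ∈ D i) :
    IndepPairs C D (J : Set ι) := by
  intro T hT σ
  obtain ⟨u, hu, hJu⟩ := hJ (Finset.filter_subset (fun i => σ i = true) J)
  refine ⟨x u, Set.mem_iInter₂.2 fun i hi => ?_⟩
  have hiJ : i ∈ J := hT hi
  have hiu : i ∈ u ↔ σ i = true := by simpa [hiJ] using Finset.ext_iff.1 hJu i
  cases hσ : σ i
  · exact hD u hu i hiJ (by simp [hiu, hσ])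
  · exact hC u hu i hiJ (hiu.2 hσ)

/-- Lemma: there is a universal constant `c > 0` such that if the pairs
`(A_{i,1} ∪ A_{i,2}, B_i)` for `i ∈ I` are independent, then for some `j ∈ {1,2}` the
pairs `(A_{i,j}, B_i)` are independent over a subset `J ⊆ I` with `|J| ≥ c|I|`. -/
theorem stmt14 :
    ∃ c : ℝ, 0 < c ∧
      ∀ (α ι : Type) (A : ι → Fin 2 → Set α) (B : ι → Set α) (I : Finset ι),
        IndepPairs (fun i => A i 0 ∪ A i 1) B (↑I : Set ι) →
        ∃ (J : Finset ι) (j : Fin 2), J ⊆ I ∧ c * (I.card : ℝ) ≤ (J.card : ℝ) ∧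
          IndepPairs (fun i => A i j) B (↑J : Set ι) := by
  classical
  refine ⟨1 / 16, by norm_num, fun α ι A B I hI => ?_⟩
  choose x hx using fun s : Finset ι => hI I subset_rfl fun i => decide (i ∈ s)
  have hxA : ∀ s, ∀ i ∈ I, i ∈ s → x s ∈ A i 0 ∪ A i 1 := fun s i hi his => by
    simpa [his] using Set.mem_iInter₂.1 (hx s) i hi
  have hxB : ∀ s, ∀ i ∈ I, i ∉ s → x s ∈ B i := fun s i hi his => by
    simpa [his] using Set.mem_iInter₂.1 (hx s) i hi
  obtain ⟨T, -, hT⟩ := I.exists_card_filter_inter_eq (fun s => {i ∈ s | x s ∉ A i 0})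
    fun s => Finset.filter_subset _ s
  set 𝒜 : Finset (Finset ι) := {s ∈ I.powerset | T ∩ s = {i ∈ s | x s ∉ A i 0}}
  obtain ⟨S, hS, hScard⟩ := Finset.exists_shatters_card_le_eight_mul (Finset.filter_subset _ _) hT
  have hSI : S ⊆ I := by
    obtain ⟨u, hu, hSu⟩ := hS (Finset.Subset.refl S)
    exact (Finset.inter_eq_left.1 hSu).trans (Finset.mem_powerset.1 (Finset.mem_filter.1 hu).1)
  have htrace : ∀ s ∈ 𝒜, ∀ i ∈ s, i ∈ T ↔ x s ∉ A i 0 := fun s hs i his => by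
    simpa [his] using Finset.ext_iff.1 (Finset.mem_filter.1 hs).2 i
  have hsplit := Finset.card_inter_add_card_sdiff S T
  have hbound : ∀ J : Finset ι, S.card ≤ 2 * J.card → 1 / 16 * (I.card : ℝ) ≤ J.card := by
    intro J hJ
    have : (I.card : ℝ) ≤ 16 * J.card := by exact_mod_cast (by omega : I.card ≤ 16 * J.card)
    linarith
  rcases le_total (S \ T).card (S ∩ T).card with h | h
  · have hJS : S ∩ T ⊆ S := Finset.inter_subset_left
    refine ⟨S ∩ T, 1, hJS.trans hSI, hbound _ (by omega),
      IndepPairs.of_shatters x (hS.mono_right hJS) (fun s hs i hi his => ?_)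
        fun s _ i hi => hxB s i (hSI (hJS hi))⟩
    exact (hxA s i (hSI (hJS hi)) his).resolve_left
      ((htrace s hs i his).1 (Finset.mem_inter.1 hi).2)
  · have hJS : S \ T ⊆ S := Finset.sdiff_subset
    refine ⟨S \ T, 0, hJS.trans hSI, hbound _ (by omega),
      IndepPairs.of_shatters x (hS.mono_right hJS) (fun s hs i hi his => ?_)
        fun s _ i hi => hxB s i (hSI (hJS hi))⟩
    exact not_not.1 fun hn => (Finset.mem_sdiff.1 hi).2 ((htrace s hs i his).2 hn)
end

section
/- For all b > 0 and δ > 0 there exist c > 0, ε > 0, and N ∈ ℕ such that for all n ≥ N the following holds: if E is a subset of the closed unit ball of ℓ^n_∞(ℂ) (complex-valued functions on {1,…,n} with the supremum norm) which is δ-separated (‖v − w‖_∞ ≥ δ for all distinct v, w ∈ E) and |E| ≥ e^{bn}, then there are t ∈ [−1,1] and a set J ⊆ {1,…,n} with |J| ≥ cn such that either (i) for every σ ∈ {0,1}^J there is a v ∈ E such that for all j ∈ J one has re(v(j)) ≥ t + ε if σ(j) = 1 and re(v(j)) ≤ t − ε if σ(j) = 0, or (ii) the same statement holds with re(v(j))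 replaced by im(v(j)). -/
open Finset

namespace PartialShattering

variable {V Z : Type*}

/-- The partial `{0,1}`-valued functions `f v`, for `v ∈ S`, realise every `{0,1}`-pattern on `A`. -/
def Shatters (f : V → Z → Option Bool) (S : Finset V) (A : Finset Z) : Prop :=
  ∀ σ : Z → Bool, ∃ v ∈ S, ∀ z ∈ A, f v z = some (σ z)

/-- Any two distinct members of `S` take opposite values at some point where both are defined. -/
def Separated (f : V → Z → Option Bool) (S : Finset V) : Prop :=
  ∀ v ∈ S, ∀ w ∈ S, v ≠ w → ∃ z b, f v z = some b ∧ f w z = some (!b)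

lemma Separated.mono {f : V → Z → Option Bool} {S T : Finset V} (hS : Separated f S)
    (hT : T ⊆ S) : Separated f T :=
  fun v hv w hw => hS v (hT hv) w (hT hw)

lemma Shatters.mono {f : V → Z → Option Bool} {S T : Finset V} {A : Finset Z}
    (hT : Shatters f T A) (h : T ⊆ S) : Shatters f S A := fun σ => by
  obtain ⟨v, hv, hA⟩ := hT σ
  exact ⟨v, h hv, hA⟩

/-- There are at most `exp (a * |Z|)` subsets of `Z` of size at most `κ * |Z|`, for small `κ`. -/
lemma exists_card_small_subsets_le (a : ℝ) (ha : 0 < a) :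
    ∃ κ : ℝ, 0 < κ ∧ ∀ (Z : Type) [Fintype Z] [DecidableEq Z] (F : Finset (Finset Z)),
      (∀ A ∈ F, (A.card : ℝ) ≤ κ * Fintype.card Z) →
        (F.card : ℝ) ≤ Real.exp (a * Fintype.card Z) := by
  obtain ⟨y, hy, hya⟩ : ∃ y : ℝ, 0 < y ∧ Real.exp (-y) ≤ a / 2 := by
    refine ⟨max 1 (-Real.log (a / 2)), by positivity, ?_⟩
    rw [← Real.le_log_iff_exp_le (by positivity)]
    linarith [le_max_right 1 (-Real.log (a / 2))]
  refine ⟨a / (2 * y), by positivity, fun Z _ _ F hF => ?_⟩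
  set m : ℝ := (Fintype.card Z : ℝ) with hm
  have hlow : (F.card : ℝ) * Real.exp (-(a / 2 * m)) ≤ ∑ A ∈ F, Real.exp (-y) ^ A.card := by
    rw [← nsmul_eq_mul]
    refine Finset.card_nsmul_le_sum _ _ _ fun A hA => ?_
    rw [← Real.exp_nat_mul, Real.exp_le_exp]
    have h := mul_le_mul_of_nonneg_right (hF A hA) hy.le
    have e : a / (2 * y) * m * y = a / 2 * m := by field_simp
    linarith
  have hup : ∑ A ∈ F, Real.exp (-y) ^ A.card ≤ Real.exp (a / 2 * m) := by
    calc ∑ A ∈ F, Real.exp (-y) ^ A.card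
        ≤ ∑ A ∈ (univ : Finset Z).powerset, Real.exp (-y) ^ A.card :=
          Finset.sum_le_sum_of_subset_of_nonneg (fun A _ => by simp) fun _ _ _ => by positivity
      _ = (Real.exp (-y) + 1) ^ Fintype.card Z := by
          have := Finset.sum_pow_mul_eq_add_pow (Real.exp (-y)) 1 (univ : Finset Z)
          simpa using this
      _ ≤ Real.exp (a / 2) ^ Fintype.card Z := by
          gcongr
          linarith [Real.add_one_le_exp (a / 2)]
      _ = Real.exp (a / 2 * m) := by rw [← Real.exp_nat_mul, mul_comm]
  have h := hlow.trans hup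
  rw [Real.exp_neg, ← div_eq_mul_inv, div_le_iff₀ (Real.exp_pos _), ← Real.exp_add, ← add_mul,
    add_halves] at h
  exact h

/-- If at every point one of the two values is rare in `S`, then `S` is small: a member of `S` is
determined by the set of points where it takes the rare value, and these sets are mostly small. -/
lemma Separated.card_le_of_rare [Fintype Z] [DecidableEq Z] {f : V → Z → Option Bool}
    {S : Finset V} (hS : Separated f S) {θ L : ℝ} (hθ : 0 < θ) (r : Z → Bool)
    (hr : ∀ z, ((S.filter fun v => f v z = some (r z)).card : ℝ) ≤ θ * S.card)
    (hL : ∀ F : Finset (Finset Z),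
      (∀ A ∈ F, (A.card : ℝ) ≤ 2 * θ * Fintype.card Z) → (F.card : ℝ) ≤ L) :
    (S.card : ℝ) ≤ 2 * L := by
  classical
  set M : V → Finset Z := fun v => univ.filter fun z => f v z = some (r z) with hM
  set m : ℝ := (Fintype.card Z : ℝ) with hm
  set G := S.filter fun v => ((M v).card : ℝ) ≤ 2 * θ * m with hG
  set B := S.filter fun v => ¬ ((M v).card : ℝ) ≤ 2 * θ * m with hB
  have hGB : (G.card : ℝ) + B.card = S.card := by
    exact_mod_cast Finset.card_filter_add_card_filter_not _
  have hinj : Set.InjOn M G := by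
    intro v hv w hw hvw
    by_contra hne
    obtain ⟨z, b, h1, h2⟩ := hS v (Finset.mem_filter.1 hv).1 w (Finset.mem_filter.1 hw).1 hne
    have := Finset.ext_iff.1 hvw z
    simp only [hM, Finset.mem_filter, Finset.mem_univ, true_and, h1, h2] at this
    revert this
    cases b <;> cases r z <;> simp
  have hGL : (G.card : ℝ) ≤ L := by
    rw [← Finset.card_image_of_injOn hinj]
    refine hL _ fun A hA => ?_
    obtain ⟨v, hv, rfl⟩ := Finset.mem_image.1 hA
    exact (Finset.mem_filter.1 hv).2
  have hsum : ∑ v ∈ S, ((M v).card : ℝ) ≤ m * (θ * S.card) := by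
    have e : ∑ v ∈ S, (M v).card = ∑ z, (S.filter fun v => f v z = some (r z)).card :=
      Finset.sum_card_bipartiteAbove_eq_sum_card_bipartiteBelow (fun v z => f v z = some (r z))
    have e' : ∑ v ∈ S, ((M v).card : ℝ)
        = ∑ z, ((S.filter fun v => f v z = some (r z)).card : ℝ) := by exact_mod_cast e
    rw [e']
    calc _ ≤ ∑ _z : Z, θ * (S.card : ℝ) := Finset.sum_le_sum fun z _ => hr z
      _ = m * (θ * S.card) := by simp [hm]
  have hBS : (B.card : ℝ) * (2 * θ * m) ≤ m * (θ * S.card) := by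
    refine le_trans ?_ hsum
    rw [← nsmul_eq_mul]
    refine (Finset.card_nsmul_le_sum B (fun v => ((M v).card : ℝ)) _ fun v hv =>
      (not_le.1 (Finset.mem_filter.1 hv).2).le).trans ?_
    exact Finset.sum_le_sum_of_subset_of_nonneg (Finset.filter_subset _ _)
      fun _ _ _ => by positivity
  rcases Nat.eq_zero_or_pos (Fintype.card Z) with h0 | hpos
  · have : B = ∅ := by
      refine Finset.filter_eq_empty_iff.2 fun v _ => ?_
      have : (M v).card ≤ 0 := h0 ▸ Finset.card_le_univ _
      have h1 : (M v).card = 0 := by omega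
      simp [h1, hm, h0]
    have hL0 : (0 : ℝ) ≤ L := le_trans (by positivity) hGL
    simp only [this, Finset.card_empty, Nat.cast_zero, add_zero] at hGB
    linarith
  · have hm0 : 0 < m := Nat.cast_pos.2 hpos
    have : (B.card : ℝ) * 2 ≤ S.card := by
      refine le_of_mul_le_mul_right ?_ (mul_pos hθ hm0)
      linarith
    linarith

/-- Splitting at a point at most adds up the numbers of shattered sets. -/
lemma card_shattered_add_le [Fintype Z] [DecidableEq Z] (f : V → Z → Option Bool)
    (S : Finset V) (z : Z) [∀ S : Finset V, DecidablePred (Shatters f S)] :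
    (univ.filter (Shatters f (S.filter fun v => f v z = some true))).card
      + (univ.filter (Shatters f (S.filter fun v => f v z = some false))).card
      ≤ (univ.filter (Shatters f S)).card := by
  set P := univ.filter (Shatters f (S.filter fun v => f v z = some true)) with hP
  set Q := univ.filter (Shatters f (S.filter fun v => f v z = some false)) with hQ
  have hzP : ∀ A ∈ P, z ∉ A := by
    intro A hA hz
    obtain ⟨v, hv, h⟩ := (Finset.mem_filter.1 hA).2 fun _ => false
    have := h z hz
    simp [(Finset.mem_filter.1 hv).2] at this
  have hzQ : ∀ A ∈ Q, z ∉ A := by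
    intro A hA hz
    obtain ⟨v, hv, h⟩ := (Finset.mem_filter.1 hA).2 fun _ => true
    have := h z hz
    simp [(Finset.mem_filter.1 hv).2] at this
  have hI : ((P ∩ Q).image (insert z)).card = (P ∩ Q).card := by
    refine Finset.card_image_of_injOn fun A hA B hB hAB => ?_
    have hA' := hzP A (Finset.mem_inter.1 hA).1
    have hB' := hzP B (Finset.mem_inter.1 hB).1
    rw [← Finset.erase_insert hA', ← Finset.erase_insert hB']
    exact congrArg (fun C => Finset.erase C z) hAB
  have hdisj : Disjoint (P ∪ Q) ((P ∩ Q).image (insert z)) := by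
    refine Finset.disjoint_left.2 fun A hA hA' => ?_
    obtain ⟨B, -, rfl⟩ := Finset.mem_image.1 hA'
    rcases Finset.mem_union.1 hA with h | h
    · exact hzP _ h (Finset.mem_insert_self _ _)
    · exact hzQ _ h (Finset.mem_insert_self _ _)
  rw [← Finset.card_union_add_card_inter, ← hI, ← Finset.card_union_of_disjoint hdisj]
  refine Finset.card_le_card fun A hA => Finset.mem_filter.2 ⟨Finset.mem_univ _, ?_⟩
  rcases Finset.mem_union.1 hA with h | h
  · rcases Finset.mem_union.1 h with h | h
    · exact (Finset.mem_filter.1 h).2.mono (Finset.filter_subset _ _)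
    · exact (Finset.mem_filter.1 h).2.mono (Finset.filter_subset _ _)
  · obtain ⟨B, hB, rfl⟩ := Finset.mem_image.1 h
    intro σ
    have key : ∃ v ∈ S, f v z = some (σ z) ∧ ∀ y ∈ B, f v y = some (σ y) := by
      cases hσ : σ z
      · obtain ⟨v, hv, hvB⟩ := (Finset.mem_filter.1 (Finset.mem_inter.1 hB).2).2 σ
        exact ⟨v, (Finset.mem_filter.1 hv).1, (Finset.mem_filter.1 hv).2, hvB⟩
      · obtain ⟨v, hv, hvB⟩ := (Finset.mem_filter.1 (Finset.mem_inter.1 hB).1).2 σ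
        exact ⟨v, (Finset.mem_filter.1 hv).1, (Finset.mem_filter.1 hv).2, hvB⟩
    obtain ⟨v, hv, hz, hvB⟩ := key
    exact ⟨v, hv, Finset.forall_mem_insert _ _ _ |>.2 ⟨hz, hvB⟩⟩

/-- If every separated family with at least `T` members splits at some point into two parts of
proportion at least `θ`, then a separated family with `T * θ⁻¹ ^ k` members shatters `2 ^ k`
sets. -/
lemma Separated.two_pow_le_card_shattered [Fintype Z] [DecidableEq Z] {f : V → Z → Option Bool}
    [∀ S : Finset V, DecidablePred (Shatters f S)] {θ T : ℝ} (hθ : 0 < θ) (hθ1 : θ ≤ 1)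
    (hT : 0 < T)
    (hsplit : ∀ S : Finset V, Separated f S → T ≤ S.card →
      ∃ z, ∀ b, θ * S.card ≤ ((S.filter fun v => f v z = some b).card : ℝ)) (k : ℕ) :
    ∀ S : Finset V, Separated f S → T ≤ θ ^ k * S.card →
      2 ^ k ≤ (univ.filter (Shatters f S)).card := by
  induction k with
  | zero =>
    intro S _ hTS
    have hS : 0 < S.card := by
      have : (0 : ℝ) < S.card := by linarith
      exact_mod_cast this
    obtain ⟨v, hv⟩ := Finset.card_pos.1 hS
    exact Finset.card_pos.2 ⟨∅, Finset.mem_filter.2 ⟨Finset.mem_univ _, fun σ => ⟨v, hv, by simp⟩⟩⟩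
  | succ k ih =>
    intro S hS hTS
    obtain ⟨z, hz⟩ := hsplit S hS
      (hTS.trans (mul_le_of_le_one_left (by positivity) (pow_le_one₀ hθ.le hθ1)))
    have hb : ∀ b, 2 ^ k ≤
        (univ.filter (Shatters f (S.filter fun v => f v z = some b))).card := fun b => by
      refine ih _ (hS.mono (Finset.filter_subset _ _)) (hTS.trans ?_)
      rw [pow_succ, mul_assoc]
      exact mul_le_mul_of_nonneg_left (hz b) (by positivity)
    have h := card_shattered_add_le f S z
    have h1 := hb true
    have h2 := hb false
    rw [pow_succ]
    omega

/-- A Sauer–Shelah type theorem for partial functions: an exponentially large separated family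
shatters a set of proportional size. -/
theorem exists_shatters_of_exp_le_card (a : ℝ) (ha : 0 < a) :
    ∃ (κ m₀ : ℝ), 0 < κ ∧ ∀ (V Z : Type) [Fintype Z] (f : V → Z → Option Bool) (S : Finset V),
      Separated f S → m₀ ≤ Fintype.card Z → Real.exp (a * Fintype.card Z) ≤ S.card →
      ∃ J : Finset Z, κ * Fintype.card Z ≤ J.card ∧ Shatters f S J := by
  obtain ⟨κ₁, hκ₁, hsmall₁⟩ := exists_card_small_subsets_le (a / 4) (by positivity)
  set θ : ℝ := min (κ₁ / 2) (1 / 2) with hθdef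
  have hθ : 0 < θ := by positivity
  have hθκ : 2 * θ ≤ κ₁ := by linarith [min_le_left (κ₁ / 2) (1 / 2 : ℝ)]
  have hθ1 : θ < 1 := by linarith [min_le_right (κ₁ / 2) (1 / 2 : ℝ)]
  set l : ℝ := -Real.log θ with hl
  have hlpos : 0 < l := by linarith [Real.log_neg hθ hθ1]
  set β : ℝ := a / (2 * l) with hβ
  have hβpos : 0 < β := by positivity
  obtain ⟨κ₂, hκ₂, hsmall₂⟩ := exists_card_small_subsets_le (β / 4) (by positivity)
  refine ⟨κ₂, max (4 / a) (3 / β), hκ₂, fun V Z _ f S hS hm hcard => ?_⟩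
  classical
  set m : ℝ := (Fintype.card Z : ℝ) with hmdef
  have hm1 : 4 ≤ m * a := (div_le_iff₀ ha).1 ((le_max_left _ _).trans hm)
  have hm2 : 3 ≤ m * β := (div_le_iff₀ hβpos).1 ((le_max_right _ _).trans hm)
  have hm0 : 0 ≤ m := by positivity
  have hsplit : ∀ S : Finset V, Separated f S → Real.exp (a / 2 * m) ≤ S.card →
      ∃ z, ∀ b, θ * S.card ≤ ((S.filter fun v => f v z = some b).card : ℝ) := by
    intro S hS hcard
    by_contra! hcon
    choose r hr using hcon
    have h := hS.card_le_of_rare hθ r (fun z => (hr z).le) (L := Real.exp (a / 4 * m))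
      fun F hF => hsmall₁ Z F fun A hA => (hF A hA).trans (by gcongr)
    have e : Real.exp (a / 2 * m) = Real.exp (a / 4 * m) * Real.exp (a / 4 * m) := by
      rw [← Real.exp_add]; ring_nf
    have h2 : 2 < Real.exp (a / 4 * m) := by
      have h1 : (1 : ℝ) ≤ a / 4 * m := by linarith
      have := Real.add_one_lt_exp (x := a / 4 * m) (by linarith)
      linarith
    nlinarith [Real.exp_pos (a / 4 * m)]
  set k := ⌊β * m⌋₊ with hk
  have hkle : (k : ℝ) ≤ β * m := Nat.floor_le (by positivity)
  have hklt : β * m < k + 1 := Nat.lt_floor_add_one _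
  have hpow := hS.two_pow_le_card_shattered hθ hθ1.le (Real.exp_pos _) hsplit k S (by
    have e1 : θ ^ k = Real.exp (-(k * l)) := by
      rw [hl, mul_neg, neg_neg, Real.exp_nat_mul, Real.exp_log hθ]
    have e2 : β * m * l = a / 2 * m := by rw [hβ]; field_simp
    calc Real.exp (a / 2 * m) ≤ Real.exp (-(k * l) + a * m) := by
          rw [Real.exp_le_exp]
          nlinarith [mul_le_mul_of_nonneg_right hkle hlpos.le]
      _ = θ ^ k * Real.exp (a * m) := by rw [Real.exp_add, e1]
      _ ≤ θ ^ k * S.card := by gcongr)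
  by_contra! hcon
  have hle := hsmall₂ Z (univ.filter (Shatters f S)) fun A hA =>
    not_lt.1 fun h => hcon A h.le (Finset.mem_filter.1 hA).2
  have hpow' : (2 : ℝ) ^ k ≤ Real.exp (β / 4 * m) := by
    refine le_trans ?_ hle
    exact_mod_cast hpow
  have e : (2 : ℝ) ^ k = Real.exp (k * Real.log 2) := by
    rw [Real.exp_nat_mul, Real.exp_log two_pos]
  rw [e, Real.exp_le_exp] at hpow'
  have hk0 : (0 : ℝ) ≤ k := by positivity
  nlinarith [Real.log_two_gt_d9]

end PartialShattering

open PartialShattering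

/-- A point of a grid of mesh `δ / 4` on `[-1, 1]` separates numbers at distance at least
`δ / 2`. -/
lemma exists_grid_point_between {δ x y : ℝ} (hδ : 0 < δ) (hy : -1 ≤ y) (hx : x ≤ 1)
    (hxy : δ / 2 ≤ x - y) :
    ∃ i : Fin (⌊8 / δ⌋₊ + 1), y ≤ (-1 + i * (δ / 4)) - δ / 8 ∧ (-1 + i * (δ / 4)) + δ / 8 ≤ x := by
  set q : ℝ := (y + 1 + δ / 8) / (δ / 4) with hq
  have hq0 : 0 ≤ q := by
    apply div_nonneg <;> linarith
  have hqe : q * (δ / 4) = y + 1 + δ / 8 := div_mul_cancel₀ _ (by positivity)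
  have h1 : q ≤ ⌈q⌉₊ := Nat.le_ceil q
  have h2 : (⌈q⌉₊ : ℝ) < q + 1 := Nat.ceil_lt_add_one hq0
  have h1' := mul_le_mul_of_nonneg_right h1 (by positivity : 0 ≤ δ / 4)
  have h2' := mul_le_mul_of_nonneg_right h2.le (by positivity : 0 ≤ δ / 4)
  refine ⟨⟨⌈q⌉₊, Nat.lt_succ_of_le (Nat.le_floor ?_)⟩, ?_, ?_⟩
  · rw [le_div_iff₀ hδ]
    linarith
  · simp only
    linarith
  · simp only
    linarith

/-- Lemma (Glasner–Weiss, complex version): δ-separated subsets of the unit ball of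
`ℓ^n_∞(ℂ)` of exponential cardinality admit a coordinate set of proportional size on
which either the real or the imaginary parts shatter around some level `t`. -/
theorem stmt15 :
    ∀ b δ : ℝ, 0 < b → 0 < δ →
      ∃ (c ε : ℝ) (N : ℕ), 0 < c ∧ 0 < ε ∧
        ∀ n : ℕ, N ≤ n →
          ∀ E : Finset (Fin n → ℂ),
            (∀ v ∈ E, ∀ j, ‖v j‖ ≤ 1) →
            (∀ v ∈ E, ∀ w ∈ E, v ≠ w → ∃ j, δ ≤ ‖v j - w j‖) →
            Real.exp (b * n) ≤ (E.card : ℝ) →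
            ∃ (t : ℝ) (J : Finset (Fin n)), t ∈ Set.Icc (-1 : ℝ) 1 ∧
              c * n ≤ (J.card : ℝ) ∧
              ((∀ σ : Fin n → Bool, ∃ v ∈ E, ∀ j ∈ J,
                  (σ j = true → t + ε ≤ (v j).re) ∧ (σ j = false → (v j).re ≤ t - ε)) ∨
                (∀ σ : Fin n → Bool, ∃ v ∈ E, ∀ j ∈ J,
                  (σ j = true → t + ε ≤ (v j).im) ∧ (σ j = false → (v j).im ≤ t - ε))) := by
  classical
  intro b δ hb hδ
  set K := ⌊8 / δ⌋₊ + 1 with hK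
  have hK0 : (0 : ℝ) < 2 * K := by positivity
  obtain ⟨κ, m₀, hκ, hmain⟩ := exists_shatters_of_exp_le_card (b / (2 * K)) (by positivity)
  refine ⟨κ, δ / 8, ⌈m₀⌉₊, hκ, by positivity, fun n hn E hball hsep hcard => ?_⟩
  let part : Bool → ℂ → ℝ := fun β x => if β then x.re else x.im
  let t : Fin K → ℝ := fun i => -1 + i * (δ / 4)
  let f : (Fin n → ℂ) → Fin n × (Bool × Fin K) → Option Bool := fun v z =>
    if t z.2.2 + δ / 8 ≤ part z.2.1 (v z.1) then some true
    else if part z.2.1 (v z.1) ≤ t z.2.2 - δ / 8 then some false else none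
  have ht : ∀ i, t i ∈ Set.Icc (-1 : ℝ) 1 := by
    intro i
    have hi : ((i : ℕ) : ℝ) ≤ 8 / δ :=
      (Nat.cast_le.2 (Nat.lt_succ_iff.1 i.2)).trans (Nat.floor_le (by positivity))
    rw [le_div_iff₀ hδ] at hi
    have : (0 : ℝ) ≤ (i : ℕ) * (δ / 4) := by positivity
    simp only [t, Set.mem_Icc]
    constructor <;> linarith
  have hpart : ∀ β x, ‖x‖ ≤ 1 → |part β x| ≤ 1 := by
    rintro (_ | _) x hx
    · exact (Complex.abs_im_le_norm x).trans hx
    · exact (Complex.abs_re_le_norm x).trans hx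
  have hfar : ∀ x y : ℂ, δ ≤ ‖x - y‖ → ∃ β, δ / 2 ≤ |part β x - part β y| := by
    intro x y hxy
    by_contra! h
    have h1 := h true
    have h2 := h false
    have h3 := Complex.norm_le_abs_re_add_abs_im (x - y)
    simp only [part, if_true, Bool.false_eq_true, if_false, Complex.sub_re, Complex.sub_im]
      at h1 h2 h3
    linarith
  have htrue : ∀ v z, t z.2.2 + δ / 8 ≤ part z.2.1 (v z.1) ↔ f v z = some true := by
    intro v z
    simp only [f]
    split_ifs <;> simp_all
  have hfalse : ∀ v z, part z.2.1 (v z.1) ≤ t z.2.2 - δ / 8 ↔ f v z = some false := by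
    intro v z
    simp only [f]
    split_ifs with h1 h2
    · simp only [Option.some.injEq, Bool.true_eq_false, iff_false, not_le]
      linarith
    · simp [h2]
    · simp [h2]
  have hseparated : Separated f E := by
    intro v hv w hw hvw
    obtain ⟨j, hj⟩ := hsep v hv w hw hvw
    obtain ⟨β, hβ⟩ := hfar _ _ hj
    have hv1 := abs_le.1 (hpart β _ (hball v hv j))
    have hw1 := abs_le.1 (hpart β _ (hball w hw j))
    rcases le_abs.1 hβ with h | h
    · obtain ⟨i, h1, h2⟩ := exists_grid_point_between hδ hw1.1 hv1.2 h
      exact ⟨(j, β, i), true, (htrue v (j, β, i)).1 h2, (hfalse w (j, β, i)).1 h1⟩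
    · obtain ⟨i, h1, h2⟩ := exists_grid_point_between hδ hv1.1 hw1.2 (by linarith)
      exact ⟨(j, β, i), false, (hfalse v (j, β, i)).1 h1, (htrue w (j, β, i)).1 h2⟩
  have hZ : (Fintype.card (Fin n × (Bool × Fin K)) : ℝ) = n * (2 * K) := by simp
  obtain ⟨J', hJ', hshat⟩ := hmain _ _ f E hseparated
    (by
      rw [hZ]
      have h1 : m₀ ≤ n := (Nat.le_ceil m₀).trans (Nat.cast_le.2 hn)
      have h2 : (1 : ℝ) ≤ K := by simp [hK]
      nlinarith [(Nat.cast_nonneg n : (0 : ℝ) ≤ n)])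
    (by
      rw [hZ]
      convert hcard using 2
      rw [mul_comm (n : ℝ), ← mul_assoc, div_mul_cancel₀ _ hK0.ne'])
  obtain ⟨⟨β, i⟩, -, hfib⟩ := Finset.exists_le_card_fiber_of_nsmul_le_card_of_maps_to
    (s := J') (t := (univ : Finset (Bool × Fin K))) (f := Prod.snd) (b := κ * (n : ℝ))
    (fun _ _ => Finset.mem_univ _) ⟨(true, 0), Finset.mem_univ _⟩ (by
      rw [hZ] at hJ'
      simp only [Finset.card_univ, Fintype.card_prod, Fintype.card_bool, Fintype.card_fin,
        nsmul_eq_mul, Nat.cast_mul, Nat.cast_ofNat]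
      linarith)
  refine ⟨t i, (J'.filter fun z => z.2 = (β, i)).image Prod.fst, ht i, ?_, ?_⟩
  · rw [Finset.card_image_of_injOn]
    · exact hfib
    · intro z hz w hw hzw
      exact Prod.ext hzw
        ((Finset.mem_filter.1 hz).2.trans (Finset.mem_filter.1 hw).2.symm)
  · have key : ∀ σ : Fin n → Bool, ∃ v ∈ E,
        ∀ j ∈ (J'.filter fun z => z.2 = (β, i)).image Prod.fst,
          (σ j = true → t i + δ / 8 ≤ part β (v j)) ∧
            (σ j = false → part β (v j) ≤ t i - δ / 8) := by
      intro σ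
      obtain ⟨v, hv, h⟩ := hshat fun z => σ z.1
      refine ⟨v, hv, fun j hj => ?_⟩
      obtain ⟨⟨j, p⟩, hz, rfl⟩ := Finset.mem_image.1 hj
      obtain ⟨hzJ, rfl⟩ := Finset.mem_filter.1 hz
      have hval := h _ hzJ
      exact ⟨fun hσ => (htrue v (j, β, i)).2 (hσ ▸ hval),
        fun hσ => (hfalse v (j, β, i)).2 (hσ ▸ hval)⟩
    cases β
    · exact Or.inr key
    · exact Or.inl key
end

section
/- For every δ > 0 there exist c > 0, ε > 0, and N ∈ ℕ such that for every compact Hausdorff space Y and every finite subset Θ of the closed unit ball of C(Y) with |Θ| ≥ N, if ‖∑_{f∈Θ} c_f f‖ ≥ δ ∑_{f∈Θ} |c_f| for all scalars (c_f)_{f∈Θ} in ℂ (i.e., the linear map γ : ℓ_1^Θ → C(Y) sending the standard basis of ℓ_1^Θ to Θ is an isomorphism onto its image with ‖γ⁻¹‖⁻¹ ≥ δ), then there exist closed disks B_1, B_2 ⊆ ℂ of diameter at most ε/6 with dist(B_1, B_2) ≥ ε and a subset I ⊆ Θ with |I| ≥ c|Θ| such that the collection {(f⁻¹(B_1), f⁻¹(B_2))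 : f ∈ I} is independent. -/
open Metric

/-- A partial assignment `h` of `R`-related pairs of labels to coordinates is shattered by `A` if
every choice of one label from each assigned pair is realised by some point of `A`. -/
def Shatters {Ω ι L : Type*} (X : Ω → ι → L) (R : L → L → Prop) (A : Finset Ω)
    (h : ι → Option (L × L)) : Prop :=
  (∀ i a b, h i = some (a, b) → R a b) ∧
    ∀ τ : ι → Bool, ∃ ω ∈ A, ∀ i a b, h i = some (a, b) → X ω i = cond (τ i) a b

section Shattering

variable {Ω ι L : Type*} {X : Ω → ι → L} {R : L → L → Prop}

theorem Shatters.mono {A B : Finset Ω} (hAB : A ⊆ B) {h : ι → Option (L × L)}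
    (hA : Shatters X R A h) : Shatters X R B h := by
  refine ⟨hA.1, fun τ => ?_⟩
  obtain ⟨ω, hω, hX⟩ := hA.2 τ
  exact ⟨ω, hAB hω, hX⟩

theorem Shatters.eq_none_of_forall_eq (hR : ∀ a, ¬ R a a) {A : Finset Ω} {i : ι} {a : L}
    (hA : ∀ ω ∈ A, X ω i = a) {h : ι → Option (L × L)} (hs : Shatters X R A h) : h i = none := by
  match hi : h i with
  | none => rfl
  | some (c, d) =>
    exfalso
    obtain ⟨ω, hω, h1⟩ := hs.2 fun _ => true
    obtain ⟨ω', hω', h2⟩ := hs.2 fun _ => false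
    have hc : a = c := by rw [← hA ω hω]; exact h1 i c d hi
    have hd : a = d := by rw [← hA ω' hω']; exact h2 i c d hi
    have := hs.1 i c d hi
    rw [← hc, ← hd] at this
    exact hR a this

variable [DecidableEq ι]

theorem Shatters.update {A B C : Finset Ω} {i : ι} {a b : L} (hab : R a b)
    (hAC : A ⊆ C) (hBC : B ⊆ C) (hA : ∀ ω ∈ A, X ω i = a) (hB : ∀ ω ∈ B, X ω i = b)
    {h : ι → Option (L × L)} (hsA : Shatters X R A h) (hsB : Shatters X R B h) :
    Shatters X R C (Function.update h i (some (a, b))) := by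
  refine ⟨fun j c d hj => ?_, fun τ => ?_⟩
  · rcases eq_or_ne j i with rfl | hji
    · simp only [Function.update_self, Option.some.injEq, Prod.mk.injEq] at hj
      rwa [← hj.1, ← hj.2]
    · rw [Function.update_of_ne hji] at hj
      exact hsA.1 j c d hj
  · have key : ∃ ω ∈ C, X ω i = cond (τ i) a b ∧
        ∀ j c d, h j = some (c, d) → X ω j = cond (τ j) c d := by
      cases hτ : τ i with
      | true =>
        obtain ⟨ω, hω, hX⟩ := hsA.2 τ
        exact ⟨ω, hAC hω, hA ω hω, hX⟩
      | false =>
        obtain ⟨ω, hω, hX⟩ := hsB.2 τ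
        exact ⟨ω, hBC hω, hB ω hω, hX⟩
    obtain ⟨ω, hω, hi, hX⟩ := key
    refine ⟨ω, hω, fun j c d hj => ?_⟩
    rcases eq_or_ne j i with rfl | hji
    · simp only [Function.update_self, Option.some.injEq, Prod.mk.injEq] at hj
      rw [hi, hj.1, hj.2]
    · rw [Function.update_of_ne hji] at hj
      exact hX j c d hj

variable [Fintype ι] [Fintype L]

open Classical in
/-- The finite set of partial assignments shattered by `A`. -/
noncomputable def shattered (X : Ω → ι → L) (R : L → L → Prop) (A : Finset Ω) :
    Finset (ι → Option (L × L)) :=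
  Finset.univ.filter (Shatters X R A)

theorem mem_shattered {A : Finset Ω} {h : ι → Option (L × L)} :
    h ∈ shattered X R A ↔ Shatters X R A h := by
  simp [shattered]

variable [DecidableEq L]

theorem card_shattered_add_le (hR : ∀ a, ¬ R a a) (A : Finset Ω) (i : ι) {a b : L}
    (hab : R a b) :
    (shattered X R (A.filter fun ω => X ω i = a)).card +
      (shattered X R (A.filter fun ω => X ω i = b)).card ≤ (shattered X R A).card := by
  set Aa := A.filter fun ω => X ω i = a
  set Ab := A.filter fun ω => X ω i = b
  have hAa : ∀ ω ∈ Aa, X ω i = a := fun ω hω => (Finset.mem_filter.1 hω).2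
  have hAb : ∀ ω ∈ Ab, X ω i = b := fun ω hω => (Finset.mem_filter.1 hω).2
  have hna : ∀ h ∈ shattered X R Aa, h i = none := fun h hh =>
    (mem_shattered.1 hh).eq_none_of_forall_eq hR hAa
  have hnb : ∀ h ∈ shattered X R Ab, h i = none := fun h hh =>
    (mem_shattered.1 hh).eq_none_of_forall_eq hR hAb
  let φ : (ι → Option (L × L)) → ι → Option (L × L) := fun h =>
    Function.update h i (some (a, b))
  have hinj : Set.InjOn φ ↑(shattered X R Aa ∩ shattered X R Ab) := by
    intro h hh h' hh' heq
    have e := hna h (Finset.mem_inter.1 hh).1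
    have e' := hna h' (Finset.mem_inter.1 hh').1
    funext j
    rcases eq_or_ne j i with rfl | hji
    · rw [e, e']
    · simpa [φ, hji] using congrFun heq j
  rw [← Finset.card_union_add_card_inter, ← Finset.card_image_of_injOn hinj,
    ← Finset.card_union_of_disjoint]
  · refine Finset.card_le_card fun h hh => mem_shattered.2 ?_
    rcases Finset.mem_union.1 hh with hh | hh
    · rcases Finset.mem_union.1 hh with hh | hh
      · exact (mem_shattered.1 hh).mono (Finset.filter_subset _ _)
      · exact (mem_shattered.1 hh).mono (Finset.filter_subset _ _)
    · obtain ⟨g, hg, rfl⟩ := Finset.mem_image.1 hh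
      obtain ⟨ha, hb⟩ := Finset.mem_inter.1 hg
      exact Shatters.update hab (Finset.filter_subset _ _) (Finset.filter_subset _ _) hAa hAb
        (mem_shattered.1 ha) (mem_shattered.1 hb)
  · rw [Finset.disjoint_left]
    intro h hh hh'
    obtain ⟨g, -, rfl⟩ := Finset.mem_image.1 hh'
    have : φ g i = none := by
      rcases Finset.mem_union.1 hh with hh | hh
      · exact hna _ hh
      · exact hnb _ hh
    simp [φ] at this

/-- If every set of more than `K` points splits along some coordinate into two parts of relative
size at least `ρ` with related labels, then large sets shatter many partial assignments. -/
theorem two_pow_le_card_shattered (hR : ∀ a, ¬ R a a) {K ρ : ℝ} (hK : 0 ≤ K) (hρ : 0 < ρ)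
    (hρ1 : ρ ≤ 1)
    (hsplit : ∀ A : Finset Ω, K < A.card → ∃ i a b, R a b ∧
      ρ * A.card ≤ ((A.filter fun ω => X ω i = a).card : ℝ) ∧
      ρ * A.card ≤ ((A.filter fun ω => X ω i = b).card : ℝ))
    (m : ℕ) : ∀ A : Finset Ω, K < ρ ^ m * A.card → 2 ^ m ≤ (shattered X R A).card := by
  induction m with
  | zero =>
    intro A hA
    have hpos : 0 < A.card := by
      have : (0 : ℝ) < A.card := by simpa using hK.trans_lt hA
      exact_mod_cast this
    obtain ⟨ω, hω⟩ := Finset.card_pos.1 hpos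
    rw [pow_zero, Nat.one_le_iff_ne_zero, ← Nat.pos_iff_ne_zero, Finset.card_pos]
    exact ⟨fun _ => none, mem_shattered.2 ⟨by simp, fun τ => ⟨ω, hω, by simp⟩⟩⟩
  | succ m ih =>
    intro A hA
    have hle : ρ ^ (m + 1) * A.card ≤ A.card :=
      mul_le_of_le_one_left (Nat.cast_nonneg _) (pow_le_one₀ hρ.le hρ1)
    obtain ⟨i, a, b, hab, ha, hb⟩ := hsplit A (hA.trans_le hle)
    have hstep : ∀ B : Finset Ω, ρ * A.card ≤ (B.card : ℝ) → K < ρ ^ m * B.card := by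
      intro B hB
      refine hA.trans_le ?_
      rw [pow_succ, mul_assoc]
      exact mul_le_mul_of_nonneg_left hB (pow_nonneg hρ.le _)
    have h1 := ih _ (hstep _ ha)
    have h2 := ih _ (hstep _ hb)
    have h3 := card_shattered_add_le (X := X) hR A i hab
    rw [pow_succ]
    omega

end Shattering

section Counting

variable {ι Q : Type*} [Fintype ι] [Fintype Q]

theorem card_mul_pow_le_of_support_card_le [DecidableEq ι] {x : ℝ} (hx : 0 < x) (hx1 : x ≤ 1)
    (S : Finset (ι → Option Q)) (d : ℕ)
    (hS : ∀ h ∈ S, (Finset.univ.filter fun i => (h i).isSome).card ≤ d) :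
    S.card * x ^ d ≤ (1 + Fintype.card Q * x) ^ Fintype.card ι := by
  classical
  let w : Option Q → ℝ := fun o => if o.isSome then x else 1
  have hw : ∀ o, 0 ≤ w o := fun o => by dsimp only [w]; split_ifs <;> linarith
  have hprod : ∀ h : ι → Option Q,
      ∏ i, w (h i) = x ^ (Finset.univ.filter fun i => (h i).isSome).card := by
    intro h
    simp [w, Finset.prod_ite]
  calc (S.card : ℝ) * x ^ d = ∑ _h ∈ S, x ^ d := by simp
    _ ≤ ∑ h ∈ S, ∏ i, w (h i) := Finset.sum_le_sum fun h hh => by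
        rw [hprod]; exact pow_le_pow_of_le_one hx.le hx1 (hS h hh)
    _ ≤ ∑ h : ι → Option Q, ∏ i, w (h i) :=
        Finset.sum_le_sum_of_subset_of_nonneg (Finset.subset_univ _) fun h _ _ =>
          Finset.prod_nonneg fun i _ => hw _
    _ = ∏ _i : ι, ∑ o, w o := by
        rw [Finset.prod_univ_sum, Fintype.piFinset_univ]
    _ = (1 + Fintype.card Q * x) ^ Fintype.card ι := by
        simp [w, Fintype.sum_option]

end Counting

/-- Exponentially many partial functions include one with proportionally large support. -/
theorem exists_mem_support_card_ge (Q : Type*) [Fintype Q] {α : ℝ} (hα : 0 < α) :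
    ∃ c : ℝ, 0 < c ∧ ∃ N : ℕ, ∀ (ι : Type) [Fintype ι], N ≤ Fintype.card ι →
      ∀ S : Finset (ι → Option Q), 2 ^ ⌊α * Fintype.card ι⌋₊ ≤ S.card →
        ∃ h ∈ S, c * Fintype.card ι ≤ ((Finset.univ.filter fun i => (h i).isSome).card : ℝ) := by
  classical
  have hlog2 : 0 < Real.log 2 := Real.log_pos one_lt_two
  set γ : ℝ := α * Real.log 2 / 4 with hγ
  have hγ0 : 0 < γ := by positivity
  set P : ℝ := Fintype.card Q + 1 with hP
  have hP0 : 0 < P := by positivity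
  set x : ℝ := min (1 / 2) (γ / P) with hx
  have hx0 : 0 < x := lt_min (by norm_num) (by positivity)
  have hx1 : x < 1 := (min_le_left _ _).trans_lt (by norm_num)
  have hlogx : Real.log x < 0 := Real.log_neg hx0 hx1
  have hPx : Fintype.card Q * x ≤ γ := by
    have h1 : x ≤ γ / P := min_le_right _ _
    have h2 : x * P ≤ γ := (le_div_iff₀ hP0).1 h1
    nlinarith
  refine ⟨γ / -Real.log x, by apply div_pos hγ0; linarith, ⌊2 / α⌋₊ + 1, ?_⟩
  intro ι _ hN S hS
  by_contra! hcon
  set n := Fintype.card ι with hn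
  have hn2 : 2 < α * n := by
    have h1 : 2 / α < n := (Nat.lt_floor_add_one _).trans_le (by exact_mod_cast hN)
    rw [div_lt_iff₀ hα] at h1
    linarith
  set d := ⌊γ / -Real.log x * n⌋₊ with hd
  have hbound := card_mul_pow_le_of_support_card_le hx0 hx1.le S d fun h hh =>
    Nat.le_floor (hcon h hh).le
  have hd' : (d : ℝ) * -Real.log x ≤ γ * n := by
    have h1 : (d : ℝ) ≤ γ / -Real.log x * n := Nat.floor_le (by
      have : 0 < -Real.log x := by linarith
      positivity)
    calc (d : ℝ) * -Real.log x ≤ γ / -Real.log x * n * -Real.log x :=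
          mul_le_mul_of_nonneg_right h1 (by linarith)
      _ = γ * n := by
        have := hlogx.ne
        field_simp
  have hxd : Real.exp (-(γ * n)) ≤ x ^ d := by
    rw [← Real.exp_log hx0, ← Real.exp_nat_mul]
    exact Real.exp_le_exp.2 (by linarith)
  have hup : (1 + Fintype.card Q * x) ^ n ≤ Real.exp (γ * n) := by
    rw [mul_comm γ, Real.exp_nat_mul]
    refine pow_le_pow_left₀ (by positivity) ?_ _
    linarith [Real.add_one_le_exp γ]
  have hlow : Real.exp (Real.log 2 * ⌊α * n⌋₊) ≤ S.card := by
    rw [mul_comm, Real.exp_nat_mul, Real.exp_log two_pos]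
    exact_mod_cast hS
  have hfin : Real.exp (Real.log 2 * ⌊α * n⌋₊ + -(γ * n)) ≤ Real.exp (γ * n) := by
    rw [Real.exp_add]
    exact (mul_le_mul hlow hxd (Real.exp_pos _).le (by positivity)).trans (hbound.trans hup)
  rw [Real.exp_le_exp] at hfin
  have hfl : α * n - 1 < ⌊α * n⌋₊ := by linarith [Nat.lt_floor_add_one (α * n)]
  have h2 : Real.log 2 * (α * n - 1) < Real.log 2 * ⌊α * n⌋₊ :=
    mul_lt_mul_of_pos_left hfl hlog2
  have h3 : Real.log 2 * 2 < Real.log 2 * (α * n) := mul_lt_mul_of_pos_left hn2 hlog2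
  rw [hγ] at hfin
  nlinarith

section Signs

/-- The sign `1` or `-1` encoded by a Boolean. -/
def boolSign (b : Bool) : ℝ := cond b 1 (-1)

theorem abs_boolSign (b : Bool) : |boolSign b| = 1 := by
  cases b <;> simp [boolSign]

theorem norm_boolSign (b : Bool) : ‖(boolSign b : ℂ)‖ = 1 := by
  rw [Complex.norm_real, Real.norm_eq_abs, abs_boolSign]

variable {ι : Type*} [Fintype ι] [DecidableEq ι]

theorem card_le_sum_boolSign_mul_le {v : ι → ℝ} (hv : ∀ i, |v i| ≤ 1) {t : ℝ} (ht : 0 ≤ t) :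
    ((Finset.univ.filter fun σ : ι → Bool =>
      t * Fintype.card ι ≤ ∑ i, boolSign (σ i) * v i).card : ℝ) ≤
      2 ^ Fintype.card ι * Real.exp (-(t ^ 2 / 2 * Fintype.card ι)) := by
  set n := Fintype.card ι with hn
  set S := Finset.univ.filter fun σ : ι → Bool => t * n ≤ ∑ i, boolSign (σ i) * v i
  have h1 : (S.card : ℝ) * Real.exp (t * (t * n)) ≤
      2 ^ n * Real.exp (t ^ 2 / 2 * n) := by
    calc (S.card : ℝ) * Real.exp (t * (t * n))
        = ∑ _σ ∈ S, Real.exp (t * (t * n)) := by simp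
      _ ≤ ∑ σ ∈ S, ∏ i, Real.exp (t * (boolSign (σ i) * v i)) := by
          refine Finset.sum_le_sum fun σ hσ => ?_
          rw [← Real.exp_sum, ← Finset.mul_sum]
          exact Real.exp_le_exp.2
            (mul_le_mul_of_nonneg_left (Finset.mem_filter.1 hσ).2 ht)
      _ ≤ ∑ σ : ι → Bool, ∏ i, Real.exp (t * (boolSign (σ i) * v i)) :=
          Finset.sum_le_sum_of_subset_of_nonneg (Finset.subset_univ _) fun σ _ _ =>
            Finset.prod_nonneg fun i _ => (Real.exp_pos _).le
      _ = ∏ i, ∑ b, Real.exp (t * (boolSign b * v i)) := by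
          rw [Finset.prod_univ_sum, Fintype.piFinset_univ]
      _ ≤ ∏ _i : ι, 2 * Real.exp (t ^ 2 / 2) := by
          refine Finset.prod_le_prod (fun i _ => by positivity) fun i _ => ?_
          have h2 := Real.cosh_le_exp_half_sq (t * v i)
          rw [Real.cosh_eq] at h2
          have h3 : Real.exp ((t * v i) ^ 2 / 2) ≤ Real.exp (t ^ 2 / 2) := by
            apply Real.exp_le_exp.2
            have := (sq_le_one_iff_abs_le_one (v i)).2 (hv i)
            nlinarith [sq_nonneg t]
          simp only [Fintype.sum_bool, boolSign, cond_true, cond_false, one_mul, neg_mul,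
            mul_neg]
          linarith
      _ = 2 ^ n * Real.exp (t ^ 2 / 2 * n) := by
          rw [Finset.prod_const, mul_pow, ← Real.exp_nat_mul, mul_comm (t ^ 2 / 2) (n : ℝ)]
          rfl
  rw [← le_div_iff₀ (Real.exp_pos _)] at h1
  refine h1.trans_eq ?_
  rw [mul_div_assoc, ← Real.exp_sub]
  ring_nf

theorem card_le_norm_sum_boolSign_mul_le {v : ι → ℂ} (hv : ∀ i, ‖v i‖ ≤ 1) {t : ℝ} (ht : 0 ≤ t) :
    ((Finset.univ.filter fun σ : ι → Bool =>
      t * Fintype.card ι ≤ ‖∑ i, (boolSign (σ i) : ℂ) * v i‖).card : ℝ) ≤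
      4 * (2 ^ Fintype.card ι * Real.exp (-(t ^ 2 / 8 * Fintype.card ι))) := by
  classical
  set n := Fintype.card ι with hn
  let S : (ι → ℝ) → Finset (ι → Bool) := fun u =>
    Finset.univ.filter fun σ : ι → Bool => t / 2 * n ≤ ∑ i, boolSign (σ i) * u i
  have hS : ∀ u : ι → ℝ, (∀ i, |u i| ≤ 1) →
      ((S u).card : ℝ) ≤ 2 ^ n * Real.exp (-(t ^ 2 / 8 * n)) := by
    intro u hu
    refine (card_le_sum_boolSign_mul_le hu (t := t / 2) (by positivity)).trans_eq ?_
    rw [← hn]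
    ring_nf
  have hre : ∀ i, |(v i).re| ≤ 1 := fun i => (Complex.abs_re_le_norm _).trans (hv i)
  have him : ∀ i, |(v i).im| ≤ 1 := fun i => (Complex.abs_im_le_norm _).trans (hv i)
  have h1 := hS (fun i => (v i).re) hre
  have h2 := hS (fun i => -(v i).re) fun i => by rw [abs_neg]; exact hre i
  have h3 := hS (fun i => (v i).im) him
  have h4 := hS (fun i => -(v i).im) fun i => by rw [abs_neg]; exact him i
  have hsub : (Finset.univ.filter fun σ : ι → Bool =>
      t * n ≤ ‖∑ i, (boolSign (σ i) : ℂ) * v i‖) ⊆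
      (S (fun i => (v i).re) ∪ S fun i => -(v i).re) ∪
        (S (fun i => (v i).im) ∪ S fun i => -(v i).im) := by
    intro σ hσ
    have hσ := (Finset.mem_filter.1 hσ).2.trans (Complex.norm_le_abs_re_add_abs_im _)
    simp only [Complex.re_sum, Complex.im_sum, Complex.re_ofReal_mul, Complex.im_ofReal_mul] at hσ
    simp only [S, Finset.mem_union, Finset.mem_filter, Finset.mem_univ, true_and, mul_neg,
      Finset.sum_neg_distrib]
    by_contra! hcon
    have e1 := abs_lt.2 ⟨neg_lt.1 hcon.1.2, hcon.1.1⟩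
    have e2 := abs_lt.2 ⟨neg_lt.1 hcon.2.2, hcon.2.1⟩
    linarith
  have hcard := (Finset.card_le_card hsub).trans ((Finset.card_union_le _ _).trans
    (add_le_add (Finset.card_union_le _ _) (Finset.card_union_le _ _)))
  have hcard' : ((Finset.univ.filter fun σ : ι → Bool =>
      t * n ≤ ‖∑ i, (boolSign (σ i) : ℂ) * v i‖).card : ℝ) ≤
      ((S fun i => (v i).re).card + (S fun i => -(v i).re).card) +
        ((S fun i => (v i).im).card + (S fun i => -(v i).im).card) := by exact_mod_cast hcard
  linarith

/-- If no two well separated labels both occur on a substantial part of `A`, then `G` is close on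
average over `A` to a single label. -/
theorem exists_sum_norm_sub_le {Ω : Type*} {T : Finset ℂ} (hT : ∀ z ∈ T, ‖z‖ ≤ 1) {η ρ : ℝ}
    (hη : 0 ≤ η) (hρ0 : 0 ≤ ρ) {A : Finset Ω} {G : Ω → ℂ} {x : Ω → T} (hG : ∀ ω, ‖G ω‖ ≤ 1)
    (hTne : T.Nonempty) (hx : ∀ ω, dist (G ω) (x ω) ≤ η) (hρ : ρ * T.card ≤ 1)
    (hcon : ∀ a b : T, 14 * η ≤ dist a b →
      ρ * A.card ≤ ((A.filter fun ω => x ω = a).card : ℝ) →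
      ((A.filter fun ω => x ω = b).card : ℝ) < ρ * A.card) :
    ∃ a : T, ∑ ω ∈ A, ‖G ω - a‖ ≤ (15 * η + 2 * (ρ * T.card)) * A.card := by
  classical
  have hTpos : (0 : ℝ) < T.card := by exact_mod_cast Finset.card_pos.2 hTne
  have : Nonempty T := hTne.to_subtype
  obtain ⟨a, -, ha⟩ := Finset.exists_le_card_fiber_of_nsmul_le_card_of_maps_to (s := A)
    (t := (Finset.univ : Finset T)) (f := x) (b := (A.card : ℝ) / T.card) (by simp)
    Finset.univ_nonempty (by
      simp only [Finset.card_univ, Fintype.card_coe, nsmul_eq_mul]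
      exact (mul_div_cancel₀ _ hTpos.ne').le)
  have ha' : ρ * A.card ≤ ((A.filter fun ω => x ω = a).card : ℝ) := by
    refine le_trans ?_ ha
    rw [le_div_iff₀ hTpos]
    nlinarith [(Nat.cast_nonneg A.card : (0 : ℝ) ≤ A.card)]
  refine ⟨a, ?_⟩
  let bad : Finset T := Finset.univ.filter fun b => 14 * η ≤ dist a b
  have hpt : ∀ ω ∈ A, ‖G ω - a‖ ≤ 15 * η + if x ω ∈ bad then 2 else 0 := by
    intro ω _
    split_ifs with hb
    · have := norm_sub_le (G ω) (a : ℂ)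
      linarith [hG ω, hT a a.2]
    · have hb' : dist a (x ω) < 14 * η := by simpa [bad] using hb
      have h1 := dist_triangle (G ω) (x ω) (a : ℂ)
      have h2 : dist (x ω : ℂ) a = dist a (x ω) := by rw [dist_comm]; rfl
      rw [← dist_eq_norm]
      linarith [hx ω]
  have hbad : ((A.filter fun ω => x ω ∈ bad).card : ℝ) ≤ ρ * T.card * A.card := by
    have hsub : (A.filter fun ω => x ω ∈ bad) ⊆ bad.biUnion fun b => A.filter fun ω => x ω = b := by
      intro ω hω
      obtain ⟨hωA, hωb⟩ := Finset.mem_filter.1 hω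
      exact Finset.mem_biUnion.2 ⟨x ω, hωb, Finset.mem_filter.2 ⟨hωA, rfl⟩⟩
    have hcard := (Finset.card_le_card hsub).trans Finset.card_biUnion_le
    have hbadT : (bad.card : ℝ) ≤ T.card := by
      exact_mod_cast (Finset.card_le_univ bad).trans_eq (Fintype.card_coe T)
    calc ((A.filter fun ω => x ω ∈ bad).card : ℝ)
        ≤ ∑ b ∈ bad, ((A.filter fun ω => x ω = b).card : ℝ) := by exact_mod_cast hcard
      _ ≤ ∑ _b ∈ bad, ρ * A.card :=
          Finset.sum_le_sum fun b hb => (hcon a b (Finset.mem_filter.1 hb).2 ha').le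
      _ = bad.card * (ρ * A.card) := by rw [Finset.sum_const, nsmul_eq_mul]
      _ ≤ T.card * (ρ * A.card) := mul_le_mul_of_nonneg_right hbadT (by positivity)
      _ = ρ * T.card * A.card := by ring
  calc ∑ ω ∈ A, ‖G ω - a‖ ≤ ∑ ω ∈ A, (15 * η + if x ω ∈ bad then 2 else 0) :=
        Finset.sum_le_sum hpt
    _ = 15 * η * A.card + 2 * (A.filter fun ω => x ω ∈ bad).card := by
        rw [Finset.sum_add_distrib, ← Finset.sum_filter]
        simp [mul_comm]
    _ ≤ (15 * η + 2 * (ρ * T.card)) * A.card := by linarith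

/-- Large sets of sign patterns split along some coordinate into two substantial parts with well
separated labels. -/
theorem exists_split {T : Finset ℂ} (hT : ∀ z ∈ T, ‖z‖ ≤ 1) (hTne : T.Nonempty) {δ : ℝ}
    (hδ : 0 < δ) (hδ1 : δ ≤ 1) {F : (ι → Bool) → ι → ℂ} {X : (ι → Bool) → ι → T}
    (hF : ∀ σ i, ‖F σ i‖ ≤ 1) (hX : ∀ σ i, dist (F σ i) (X σ i) ≤ δ / 120) [Nonempty ι]
    (hsum : ∀ σ, δ * Fintype.card ι ≤ ‖∑ i, (boolSign (σ i) : ℂ) * F σ i‖)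
    (A : Finset (ι → Bool))
    (hA : 16 / δ * (2 ^ Fintype.card ι * Real.exp (-(δ ^ 2 / 32 * Fintype.card ι))) < A.card) :
    ∃ i a b, 14 * (δ / 120) ≤ dist a b ∧
      δ / (16 * T.card) * A.card ≤ ((A.filter fun σ => X σ i = a).card : ℝ) ∧
      δ / (16 * T.card) * A.card ≤ ((A.filter fun σ => X σ i = b).card : ℝ) := by
  by_contra! hcon
  have hTpos : (0 : ℝ) < T.card := by exact_mod_cast Finset.card_pos.2 hTne
  set n := Fintype.card ι with hn
  have hnpos : (0 : ℝ) < n := by exact_mod_cast Fintype.card_pos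
  have hρ : δ / (16 * T.card) * T.card = δ / 16 := by field_simp
  choose v hv using fun i => exists_sum_norm_sub_le (A := A) hT (η := δ / 120) (by positivity)
    (by positivity : 0 ≤ δ / (16 * (T.card : ℝ)))
    (fun σ => hF σ i) hTne (fun σ => hX σ i) (by rw [hρ]; linarith) (hcon i)
  simp only [hρ] at hv
  let V : (ι → Bool) → ℝ := fun σ => ‖∑ i, (boolSign (σ i) : ℂ) * v i‖
  have hlow : 3 / 4 * δ * n * A.card ≤ ∑ σ ∈ A, V σ := by
    have h1 : ∀ σ ∈ A, δ * n ≤ V σ + ∑ i, ‖F σ i - v i‖ := by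
      intro σ _
      refine (hsum σ).trans ?_
      have h2 : ∑ i, (boolSign (σ i) : ℂ) * F σ i =
          ∑ i, (boolSign (σ i) : ℂ) * v i + ∑ i, (boolSign (σ i) : ℂ) * (F σ i - v i) := by
        rw [← Finset.sum_add_distrib]
        exact Finset.sum_congr rfl fun i _ => by ring
      rw [h2]
      refine (norm_add_le _ _).trans (add_le_add le_rfl ((norm_sum_le _ _).trans ?_))
      exact Finset.sum_le_sum fun i _ => by rw [norm_mul, norm_boolSign, one_mul]
    have h3 := Finset.sum_le_sum h1
    rw [Finset.sum_add_distrib, Finset.sum_comm (s := A), Finset.sum_const, nsmul_eq_mul] at h3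
    have h4 := Finset.sum_le_sum fun i (_ : i ∈ Finset.univ) => hv i
    rw [Finset.sum_const, nsmul_eq_mul, Finset.card_univ, ← hn] at h4
    linarith
  let S := Finset.univ.filter fun σ : ι → Bool => δ / 2 * n ≤ V σ
  have hcount : (S.card : ℝ) ≤ 4 * (2 ^ n * Real.exp (-((δ / 2) ^ 2 / 8 * n))) :=
    card_le_norm_sum_boolSign_mul_le (fun i => hT _ (v i).2) (t := δ / 2) (by positivity)
  have hVle : ∀ σ, V σ ≤ n := by
    intro σ
    refine (norm_sum_le _ _).trans ?_
    calc ∑ i, ‖(boolSign (σ i) : ℂ) * v i‖ ≤ ∑ _i : ι, (1 : ℝ) :=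
          Finset.sum_le_sum fun i _ => by
            rw [norm_mul, norm_boolSign, one_mul]; exact hT _ (v i).2
      _ = n := by simp [hn]
  have hup : ∑ σ ∈ A, V σ ≤ δ / 2 * n * A.card + n * S.card := by
    calc ∑ σ ∈ A, V σ ≤ ∑ σ ∈ A, (δ / 2 * n + if σ ∈ S then (n : ℝ) else 0) := by
          refine Finset.sum_le_sum fun σ _ => ?_
          split_ifs with h
          · have := hVle σ
            have : 0 ≤ δ / 2 * n := by positivity
            linarith
          · have : V σ < δ / 2 * n := by simpa [S] using h
            linarith
      _ = δ / 2 * n * A.card + n * (A.filter fun σ => σ ∈ S).card := by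
          rw [Finset.sum_add_distrib, ← Finset.sum_filter]
          simp [mul_comm]
      _ ≤ δ / 2 * n * A.card + n * S.card := by
          gcongr
          exact fun σ hσ => (Finset.mem_filter.1 hσ).2
  have hfin : δ / 4 * A.card ≤ S.card := by
    have : n * (δ / 4 * A.card) ≤ n * (S.card : ℝ) := by linarith
    exact le_of_mul_le_mul_left this hnpos
  have hexp : (δ / 2) ^ 2 / 8 * n = δ ^ 2 / 32 * n := by ring
  rw [hexp] at hcount
  rw [div_mul_eq_mul_div, div_lt_iff₀ hδ] at hA
  linarith

end Signs

/-- A finite set of functions with lower `ℓ₁`-bound `δ` admits, for every sign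
pattern, a point at which the signed sum is at least `δ` times the number of functions. -/
theorem exists_point_norm_sum_ge {Y : Type*} [TopologicalSpace Y] [CompactSpace Y] {δ : ℝ}
    (hδ : 0 < δ) (Θ : Finset C(Y, ℂ)) [Nonempty Θ]
    (hΘ : ∀ co : C(Y, ℂ) → ℂ, δ * ∑ f ∈ Θ, ‖co f‖ ≤ ‖∑ f ∈ Θ, co f • f‖) (σ : Θ → Bool) :
    ∃ y : Y, δ * Fintype.card Θ ≤ ‖∑ f : Θ, (boolSign (σ f) : ℂ) * (f : C(Y, ℂ)) y‖ := by
  classical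
  by_contra! hcon
  let co : C(Y, ℂ) → ℂ := fun f => if hf : f ∈ Θ then (boolSign (σ ⟨f, hf⟩) : ℂ) else 0
  have hco : ∀ f : Θ, co f = boolSign (σ f) := fun f => by simp [co]
  have h := hΘ co
  rw [← Finset.sum_coe_sort Θ fun f => ‖co f‖, ← Finset.sum_coe_sort Θ fun f => co f • f] at h
  simp only [hco, norm_boolSign, Finset.sum_const, Finset.card_univ, nsmul_eq_mul, mul_one] at h
  have hpos : 0 < δ * Fintype.card Θ := mul_pos hδ (by exact_mod_cast Fintype.card_pos)
  refine absurd ((ContinuousMap.norm_lt_iff _ hpos).2 fun y => ?_) (not_lt.2 h)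
  simpa [ContinuousMap.sum_apply] using hcon y

/-- There is a finite subset of the unit disk to which every point of the disk is close. -/
theorem exists_finset_net {η : ℝ} (hη : 0 < η) :
    ∃ T : Finset ℂ, T.Nonempty ∧ (∀ z ∈ T, ‖z‖ ≤ 1) ∧
      ∀ z : ℂ, ‖z‖ ≤ 1 → ∃ a : T, dist z a ≤ η := by
  obtain ⟨t, hts, htf, hcov⟩ := finite_cover_balls_of_compact
    (isCompact_closedBall (0 : ℂ) 1) hη
  have hnet : ∀ z : ℂ, ‖z‖ ≤ 1 → ∃ a ∈ t, dist z a ≤ η := by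
    intro z hz
    obtain ⟨a, ha, hza⟩ := Set.mem_iUnion₂.1 (hcov (mem_closedBall_zero_iff.2 hz))
    exact ⟨a, ha, (mem_ball.1 hza).le⟩
  refine ⟨htf.toFinset, ?_, fun z hz => ?_, fun z hz => ?_⟩
  · obtain ⟨a, ha, -⟩ := hnet 0 (by simp)
    exact ⟨a, htf.mem_toFinset.2 ha⟩
  · exact mem_closedBall_zero_iff.1 (hts (htf.mem_toFinset.1 hz))
  · obtain ⟨a, ha, hza⟩ := hnet z hz
    exact ⟨⟨a, htf.mem_toFinset.2 ha⟩, hza⟩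

/-- The cube `{±1}ⁿ` remains above the size threshold of `exists_split` after `⌊α n⌋` reductions by
the factor `ρ`. -/
theorem exists_splitting_depth {δ ρ : ℝ} (hδ : 0 < δ) (hρ : 0 < ρ) (hρ1 : ρ < 1) :
    ∃ α : ℝ, 0 < α ∧ ∃ N : ℕ, ∀ n : ℕ, N ≤ n →
      16 / δ * (2 ^ n * Real.exp (-(δ ^ 2 / 32 * n))) < ρ ^ ⌊α * n⌋₊ * 2 ^ n := by
  have hlog : 0 < -Real.log ρ := by linarith [Real.log_neg hρ hρ1]
  set β : ℝ := δ ^ 2 / 64 with hβ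
  have hβ0 : 0 < β := by positivity
  refine ⟨β / -Real.log ρ, by positivity, ⌊16 / δ / β⌋₊ + 1, fun n hn => ?_⟩
  set m := ⌊β / -Real.log ρ * n⌋₊ with hm
  have hmle : (m : ℝ) * -Real.log ρ ≤ β * n := by
    have h1 : (m : ℝ) ≤ β / -Real.log ρ * n := Nat.floor_le (by positivity)
    calc (m : ℝ) * -Real.log ρ ≤ β / -Real.log ρ * n * -Real.log ρ :=
          mul_le_mul_of_nonneg_right h1 hlog.le
      _ = β * n := by
        rw [mul_right_comm, div_mul_cancel₀ _ hlog.ne']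
  have hρm : Real.exp (-(β * n)) ≤ ρ ^ m := by
    rw [← Real.exp_log hρ, ← Real.exp_nat_mul]
    exact Real.exp_le_exp.2 (by linarith)
  have hlarge : 16 / δ < Real.exp (β * n) := by
    have h1 : 16 / δ / β < n := (Nat.lt_floor_add_one _).trans_le (by exact_mod_cast hn)
    rw [div_lt_iff₀ hβ0] at h1
    linarith [Real.add_one_le_exp (β * n)]
  have hexp : Real.exp (-(δ ^ 2 / 32 * n)) = Real.exp (-(β * n)) * Real.exp (-(β * n)) := by
    rw [← Real.exp_add, hβ]
    ring_nf
  have hsmall : 16 / δ * Real.exp (-(β * n)) < 1 := by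
    rw [Real.exp_neg, ← div_eq_mul_inv, div_lt_one (Real.exp_pos _)]
    exact hlarge
  calc 16 / δ * (2 ^ n * Real.exp (-(δ ^ 2 / 32 * n)))
      = 16 / δ * Real.exp (-(β * n)) * (Real.exp (-(β * n)) * 2 ^ n) := by rw [hexp]; ring
    _ < 1 * (Real.exp (-(β * n)) * 2 ^ n) := mul_lt_mul_of_pos_right hsmall (by positivity)
    _ ≤ ρ ^ m * 2 ^ n := by rw [one_mul]; gcongr

/-- A partial function with large support takes some value proportionally often. -/
theorem exists_pair_card_ge {ι Q : Type*} [Fintype ι] [DecidableEq ι] [Fintype Q] [Nonempty Q]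
    [DecidableEq Q] (h : ι → Option Q) {s : ℝ}
    (hs : s ≤ ((Finset.univ.filter fun i => (h i).isSome).card : ℝ)) :
    ∃ q : Q, s / Fintype.card Q ≤ ((Finset.univ.filter fun i => h i = some q).card : ℝ) := by
  have hQ : (0 : ℝ) < Fintype.card Q := by exact_mod_cast Fintype.card_pos
  by_contra! hcon
  have hsub : (Finset.univ.filter fun i => (h i).isSome) ⊆
      Finset.univ.biUnion fun q : Q => Finset.univ.filter fun i => h i = some q := by
    intro i hi
    obtain ⟨q, hq⟩ := Option.isSome_iff_exists.1 (Finset.mem_filter.1 hi).2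
    simp [hq]
  have hcard := (Finset.card_le_card hsub).trans Finset.card_biUnion_le
  have hlt : ∑ q : Q, ((Finset.univ.filter fun i => h i = some q).card : ℝ) <
      ∑ _q : Q, s / Fintype.card Q :=
    Finset.sum_lt_sum_of_nonempty Finset.univ_nonempty fun q _ => hcon q
  rw [Finset.sum_const, Finset.card_univ, nsmul_eq_mul, mul_div_cancel₀ _ hQ.ne'] at hlt
  have hcard' : ((Finset.univ.filter fun i => (h i).isSome).card : ℝ) ≤
      ∑ q : Q, ((Finset.univ.filter fun i => h i = some q).card : ℝ) := by exact_mod_cast hcard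
  linarith

/-- Lemma: an `ℓ₁`-isomorphism with lower bound `δ` on a large finite set `Θ` of
functions in the unit ball of `C(Y)` produces two well-separated small closed disks
`B₁, B₂ ⊆ ℂ` and a proportional subset `I ⊆ Θ` such that the pairs
`(f⁻¹(B₁), f⁻¹(B₂))` for `f ∈ I` are independent. -/
theorem stmt16 :
    ∀ δ : ℝ, 0 < δ →
      ∃ (c ε : ℝ) (N : ℕ), 0 < c ∧ 0 < ε ∧
        ∀ (Y : Type) [TopologicalSpace Y] [CompactSpace Y] [T2Space Y],
          ∀ Θ : Finset C(Y, ℂ), N ≤ Θ.card →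
            (∀ f ∈ Θ, ‖f‖ ≤ 1) →
            (∀ co : C(Y, ℂ) → ℂ, δ * ∑ f ∈ Θ, ‖co f‖ ≤ ‖∑ f ∈ Θ, co f • f‖) →
            ∃ (z₁ z₂ : ℂ) (r₁ r₂ : ℝ), 0 ≤ r₁ ∧ 0 ≤ r₂ ∧
              2 * r₁ ≤ ε / 6 ∧ 2 * r₂ ≤ ε / 6 ∧
              (∀ w₁ ∈ closedBall z₁ r₁, ∀ w₂ ∈ closedBall z₂ r₂, ε ≤ dist w₁ w₂) ∧
              ∃ I : Finset C(Y, ℂ), I ⊆ Θ ∧ c * (Θ.card : ℝ) ≤ (I.card : ℝ) ∧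
                IndepPairs (fun f : C(Y, ℂ) => (⇑f) ⁻¹' closedBall z₁ r₁)
                  (fun f : C(Y, ℂ) => (⇑f) ⁻¹' closedBall z₂ r₂) (↑I : Set C(Y, ℂ)) := by
  classical
  intro δ₀ hδ₀
  set δ : ℝ := min δ₀ 1 with hδdef
  have hδ : 0 < δ := lt_min hδ₀ one_pos
  have hδ1 : δ ≤ 1 := min_le_right _ _
  obtain ⟨T, hTne, hT, hnet⟩ := exists_finset_net (η := δ / 120) (by positivity)
  have : Nonempty T := hTne.to_subtype
  have hTpos : (1 : ℝ) ≤ T.card := by exact_mod_cast Finset.card_pos.2 hTne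
  set ρ : ℝ := δ / (16 * T.card) with hρdef
  have hρ : 0 < ρ := by positivity
  have hρ1 : ρ < 1 := by
    rw [hρdef, div_lt_one (by positivity)]
    linarith
  obtain ⟨α, hα, N₁, hN₁⟩ := exists_splitting_depth hδ hρ hρ1
  obtain ⟨c, hc, N₂, hN₂⟩ := exists_mem_support_card_ge (T × T) hα
  have hQ : (0 : ℝ) < Fintype.card (T × T) := by exact_mod_cast Fintype.card_pos
  refine ⟨c / Fintype.card (T × T), 12 * (δ / 120), max 1 (max N₁ N₂), by positivity,
    by positivity, ?_⟩
  intro Y _ _ _ Θ hN hball hΘ₀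
  have hcardΘ : Fintype.card Θ = Θ.card := Fintype.card_coe Θ
  have : Nonempty Θ := (Finset.card_pos.1 ((le_max_left _ _).trans hN)).to_subtype
  have hΘ : ∀ co : C(Y, ℂ) → ℂ, δ * ∑ f ∈ Θ, ‖co f‖ ≤ ‖∑ f ∈ Θ, co f • f‖ := fun co =>
    (mul_le_mul_of_nonneg_right (min_le_left _ _)
      (Finset.sum_nonneg fun _ _ => norm_nonneg _)).trans (hΘ₀ co)
  choose y hy using exists_point_norm_sum_ge hδ Θ hΘ
  let F : (Θ → Bool) → Θ → ℂ := fun σ f => (f : C(Y, ℂ)) (y σ)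
  have hF : ∀ σ f, ‖F σ f‖ ≤ 1 := fun σ f =>
    ((f : C(Y, ℂ)).norm_coe_le_norm _).trans (hball f f.2)
  choose X hX using fun σ f => hnet (F σ f) (hF σ f)
  let R : T → T → Prop := fun a b => 14 * (δ / 120) ≤ dist a b
  have hR : ∀ a, ¬ R a a := fun a => by
    simp only [R, dist_self, not_le]
    positivity
  have hshat := two_pow_le_card_shattered (X := X) (R := R) hR (by positivity) hρ hρ1.le
    (exists_split hT hTne hδ hδ1 hF hX hy) ⌊α * Fintype.card Θ⌋₊ Finset.univ (by
      have := hN₁ (Fintype.card Θ)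
        (hcardΘ ▸ (le_max_left _ _).trans ((le_max_right _ _).trans hN))
      simpa using this)
  obtain ⟨h, hh, hsupp⟩ := hN₂ Θ
    (hcardΘ ▸ (le_max_right _ _).trans ((le_max_right _ _).trans hN)) _ hshat
  have hh := mem_shattered.1 hh
  obtain ⟨⟨a, b⟩, hab⟩ := exists_pair_card_ge h hsupp
  set J := Finset.univ.filter fun f : Θ => h f = some (a, b) with hJ
  have hJpos : J.Nonempty := by
    rw [← Finset.card_pos]
    have : (0 : ℝ) < J.card := lt_of_lt_of_le (by
      have : (0 : ℝ) < Fintype.card Θ := by exact_mod_cast Fintype.card_pos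
      positivity) hab
    exact_mod_cast this
  obtain ⟨f₀, hf₀⟩ := hJpos
  have hsep : 14 * (δ / 120) ≤ dist (a : ℂ) b := hh.1 f₀ a b (Finset.mem_filter.1 hf₀).2
  refine ⟨a, b, δ / 120, δ / 120, by positivity, by positivity, by linarith, by linarith, ?_,
    J.map (Function.Embedding.subtype _), ?_, ?_, ?_⟩
  · intro w₁ hw₁ w₂ hw₂
    rw [mem_closedBall] at hw₁ hw₂
    have := dist_triangle4 (a : ℂ) w₁ w₂ b
    rw [dist_comm (a : ℂ) w₁] at this
    linarith
  · intro f hf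
    obtain ⟨g, -, rfl⟩ := Finset.mem_map.1 hf
    exact g.2
  · rw [Finset.card_map, ← hcardΘ, div_mul_eq_mul_div]
    exact hab
  · intro S hS τ
    obtain ⟨σ, -, hσ⟩ := hh.2 fun f => τ f
    refine ⟨y σ, Set.mem_iInter₂.2 fun f hf => ?_⟩
    obtain ⟨g, hg, rfl⟩ := Finset.mem_map.1 (Finset.mem_coe.1 (hS hf))
    have h1 := hσ g a b (Finset.mem_filter.1 hg).2
    have h2 := hX σ g
    rw [h1] at h2
    cases hτ : τ g with
    | true => simpa [hτ, F] using h2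
    | false => simpa [hτ, F] using h2
end

section
/- Let G be a discrete amenable group and let (Y,𝒴,ν,G) and (Z,𝒵,ω,G) be measure-preserving G-systems. Suppose that (Y,𝒴,ν,G) has zero entropy, i.e., h_ν(𝒫) = 0 for every finite measurable partition 𝒫 of Y, and that (Z,𝒵,ω,G) has completely positive entropy, i.e., every finite measurable partition 𝒬 of Z with h_ω(𝒬) = 0 is trivial modulo ω (each atom of 𝒬 has ω-measure 0 or 1). Then the two systems are disjoint: the only G-invariant probability measure on (Y × Z, 𝒴 ⊗ 𝒵) whose marginals are ν and ω, where G acts diagonally by s(y,z) = (sy, sz), is the product measure ν × ω. -/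
open MeasureTheory Set
open scoped Classical ENNReal

/-- The Gibbs inequality: entropy is bounded by cross entropy. -/
theorem sum_negMulLog_le_crossEntropy {α : Type*} [Fintype α] (p q : α → ℝ)
    (hp : ∀ a, 0 ≤ p a) (hq : ∀ a, 0 ≤ q a) (hac : ∀ a, q a = 0 → p a = 0)
    (hsum : ∑ a, q a ≤ ∑ a, p a) :
    ∑ a, Real.negMulLog (p a) ≤ ∑ a, p a * (-Real.log (q a)) := by
  have key : ∀ a, Real.negMulLog (p a) ≤ p a * (-Real.log (q a)) + (q a - p a) := by
    intro a
    rcases (hp a).eq_or_lt with h | h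
    · simp [← h, hq a]
    · have hqa : 0 < q a := (hq a).lt_of_ne fun h0 => h.ne' (hac a h0.symm)
      have h1 := Real.log_le_sub_one_of_pos (div_pos hqa h)
      rw [Real.log_div hqa.ne' h.ne'] at h1
      have h2 := mul_le_mul_of_nonneg_left h1 h.le
      have h3 : p a * (q a / p a - 1) = q a - p a := by field_simp
      rw [Real.negMulLog]
      linarith
  calc _ ≤ ∑ a, (p a * (-Real.log (q a)) + (q a - p a)) := Finset.sum_le_sum fun a _ => key a
    _ ≤ _ := by rw [Finset.sum_add_distrib, Finset.sum_sub_distrib]; linarith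

/-- `Real.negMulLog` is subadditive on nonnegative families. -/
theorem negMulLog_sum_le {α : Type*} [Fintype α] (p : α → ℝ) (hp : ∀ a, 0 ≤ p a) :
    Real.negMulLog (∑ a, p a) ≤ ∑ a, Real.negMulLog (p a) := by
  rw [Real.negMulLog, neg_mul, Finset.sum_mul, ← Finset.sum_neg_distrib]
  refine Finset.sum_le_sum fun a _ => ?_
  rcases (hp a).eq_or_lt with h | h
  · simp [← h]
  · have := Real.log_le_log h (Finset.single_le_sum (fun b _ => hp b) (Finset.mem_univ a))
    rw [Real.negMulLog]
    nlinarith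

/-- Pushing forward a product weight along a map acting on each coordinate. -/
theorem sum_prod_weight_comp {α β ι : Type*} [Fintype α] [Fintype β] [DecidableEq β]
    [Fintype ι] [DecidableEq ι]
    (π : α → β) (w : α → ℝ) (Ψ : (ι → β) → ℝ) :
    ∑ y : ι → α, (∏ i, w (y i)) * Ψ (fun i => π (y i)) =
      ∑ u : ι → β, (∏ i, ∑ a with π a = u i, w a) * Ψ u := by
  rw [← Finset.sum_fiberwise Finset.univ (fun y : ι → α => fun i => π (y i))]
  refine Finset.sum_congr rfl fun u _ => ?_
  rw [Finset.prod_univ_sum, Finset.sum_mul]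
  refine Finset.sum_congr ?_ ?_
  · ext y; simp [funext_iff]
  · intro y hy
    simp only [Fintype.mem_piFinset, Finset.mem_filter, Finset.mem_univ, true_and] at hy
    rw [show (fun i => π (y i)) = u from funext hy]

/-- The total mass of a product weight. -/
theorem sum_prod_weight {α ι : Type*} [Fintype α] [Fintype ι] [DecidableEq ι] (w : α → ℝ)
    (hw : ∑ a, w a = 1) : ∑ y : ι → α, ∏ i, w (y i) = 1 := by
  have := Finset.prod_univ_sum (fun _ : ι => (Finset.univ : Finset α)) (fun _ a => w a)
  simp only [hw, Finset.prod_const_one, Fintype.piFinset_univ] at this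
  exact this.symm

/-- The one-dimensional marginals of a product weight. -/
theorem sum_prod_weight_eval {α ι : Type*} [Fintype α] [Fintype ι] [DecidableEq ι] (w : α → ℝ)
    (hw : ∑ a, w a = 1) (j : ι) (h : α → ℝ) :
    ∑ y : ι → α, (∏ i, w (y i)) * h (y j) = ∑ a, w a * h a := by
  have := Finset.prod_univ_sum (fun _ : ι => (Finset.univ : Finset α))
    (fun i a => if i = j then w a * h a else w a)
  rw [Fintype.piFinset_univ] at this
  rw [← Finset.mul_prod_erase _ _ (Finset.mem_univ j)] at this
  rw [Finset.prod_eq_one] at this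
  · simp only [if_true, mul_one] at this
    rw [this]
    refine Finset.sum_congr rfl fun y _ => ?_
    rw [← Finset.mul_prod_erase _ _ (Finset.mem_univ j),
      ← Finset.mul_prod_erase (a := j) _ _ (Finset.mem_univ j), if_pos rfl,
      Finset.prod_congr rfl fun i hi => if_neg (Finset.ne_of_mem_erase hi)]
    ring
  · intro i hi
    simp only [if_neg (Finset.ne_of_mem_erase hi), hw]

/-- The second moment of a sum of independent centred variables, for product weights. -/
theorem sum_prod_weight_sq {α : Type*} [Fintype α] (w : α → ℝ) (hw : ∑ a, w a = 1)
    (h : α → ℝ) (hh : ∑ a, w a * h a = 0) (n : ℕ) :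
    ∑ y : Fin n → α, (∏ i, w (y i)) * (∑ i, h (y i)) ^ 2 = n * ∑ a, w a * h a ^ 2 := by
  have mean : ∀ n : ℕ, ∑ y : Fin n → α, (∏ i, w (y i)) * (∑ i, h (y i)) = 0 := by
    intro n
    simp_rw [Finset.mul_sum]
    rw [Finset.sum_comm]
    exact Finset.sum_eq_zero fun j _ => (sum_prod_weight_eval w hw j h).trans hh
  induction n with
  | zero => simp
  | succ n ih =>
    rw [← (Fin.consEquiv fun _ => α).sum_comp, Fintype.sum_prod_type]
    simp only [Fin.consEquiv_apply, Fin.prod_univ_succ, Fin.sum_univ_succ, Fin.cons_zero,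
      Fin.cons_succ]
    have : ∀ a : α, ∑ y : Fin n → α, (w a * ∏ i, w (y i)) * (h a + ∑ i, h (y i)) ^ 2 =
        w a * h a ^ 2 + w a * (n * ∑ a, w a * h a ^ 2) := by
      intro a
      rw [← ih]
      have h1 := sum_prod_weight (ι := Fin n) w hw
      have h2 := mean n
      calc _ = w a * h a ^ 2 * ∑ y : Fin n → α, ∏ i, w (y i)
            + 2 * w a * h a * ∑ y : Fin n → α, (∏ i, w (y i)) * (∑ i, h (y i))
            + w a * ∑ y : Fin n → α, (∏ i, w (y i)) * (∑ i, h (y i)) ^ 2 := by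
            simp only [Finset.mul_sum (Finset.univ : Finset (Fin n → α)),
              ← Finset.sum_add_distrib]
            exact Finset.sum_congr rfl fun y _ => by ring
        _ = _ := by rw [h1, h2]; ring
    simp only [this, Finset.sum_add_distrib, ← Finset.sum_mul, hw]
    push_cast; ring

/-- The joint weight of `X` and of `n` conditionally independent samples from `w`. -/
noncomputable def jointWeight {Z α β : Type*} [MeasurableSpace Z] (ω : Measure Z) (X : Z → β)
    (w : α → Z → ℝ) {n : ℕ} (x : β) (y : Fin n → α) : ℝ :=
  ∫ z in X ⁻¹' {x}, ∏ i, w (y i) z ∂ω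

theorem jointWeight_nonneg {Z α β : Type*} [MeasurableSpace Z] {ω : Measure Z} {X : Z → β}
    {w : α → Z → ℝ} {n : ℕ} (h0 : ∀ a z, 0 ≤ w a z) (x : β) (y : Fin n → α) :
    0 ≤ jointWeight ω X w x y :=
  integral_nonneg fun _ => Finset.prod_nonneg fun _ _ => h0 _ _

section Joint

variable {Z α β : Type*} [MeasurableSpace Z] {ω : Measure Z} [IsProbabilityMeasure ω]
  [Fintype α] {X : Z → β} {w : α → Z → ℝ} {n : ℕ}

theorem integrable_prod_weight (hm : ∀ a, Measurable (w a)) (h0 : ∀ a z, 0 ≤ w a z)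
    (h1 : ∀ᵐ z ∂ω, ∑ a, w a z = 1) (y : Fin n → α) :
    Integrable (fun z => ∏ i, w (y i) z) ω := by
  refine Integrable.of_bound
    (Finset.measurable_fun_prod _ fun i _ => hm (y i)).aestronglyMeasurable 1 ?_
  filter_upwards [h1] with z hz
  rw [Real.norm_of_nonneg (Finset.prod_nonneg fun i _ => h0 _ _)]
  refine Finset.prod_le_one (fun i _ => h0 _ _) fun i _ => ?_
  rw [← hz]
  exact Finset.single_le_sum (fun b _ => h0 b z) (Finset.mem_univ (y i))

/-- Expectations with respect to the joint weight. -/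
theorem sum_jointWeight_mul [Fintype β] [MeasurableSpace β] [MeasurableSingletonClass β]
    (hX : Measurable X) (hm : ∀ a, Measurable (w a))
    (h0 : ∀ a z, 0 ≤ w a z) (h1 : ∀ᵐ z ∂ω, ∑ a, w a z = 1) (Ψ : β → (Fin n → α) → ℝ) :
    ∑ x, ∑ y, jointWeight ω X w x y * Ψ x y =
      ∫ z, ∑ y : Fin n → α, (∏ i, w (y i) z) * Ψ (X z) y ∂ω := by
  have hi : ∀ x y, Integrable
      (fun z => (X ⁻¹' {x}).indicator (fun z => ∏ i, w (y i) z) z * Ψ x y) ω := fun x y =>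
    ((integrable_prod_weight hm h0 h1 y).indicator (hX (measurableSet_singleton x))).mul_const _
  have : (fun z => ∑ y : Fin n → α, (∏ i, w (y i) z) * Ψ (X z) y) = fun z => ∑ x,
      ∑ y, (X ⁻¹' {x}).indicator (fun z => ∏ i, w (y i) z) z * Ψ x y := by
    funext z
    rw [Finset.sum_eq_single (X z)]
    · simp
    · intro x _ hx
      refine Finset.sum_eq_zero fun y _ => ?_
      rw [indicator_of_notMem (by simpa using hx.symm), zero_mul]
    · simp
  rw [this, integral_finsetSum _ fun x _ => integrable_finsetSum _ fun y _ => hi x y]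
  refine Finset.sum_congr rfl fun x _ => ?_
  rw [integral_finsetSum _ fun y _ => hi x y]
  refine Finset.sum_congr rfl fun y _ => ?_
  rw [integral_mul_const, integral_indicator (hX (measurableSet_singleton x)), jointWeight]

theorem sum_jointWeight_right (hm : ∀ a, Measurable (w a))
    (h0 : ∀ a z, 0 ≤ w a z) (h1 : ∀ᵐ z ∂ω, ∑ a, w a z = 1) (x : β) :
    ∑ y : Fin n → α, jointWeight ω X w x y = ω.real (X ⁻¹' {x}) := by
  unfold jointWeight
  rw [← integral_finsetSum _ fun y _ => (integrable_prod_weight hm h0 h1 y).integrableOn]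
  rw [integral_congr_ae (g := fun _ => (1 : ℝ))]
  · simp
  · refine ae_restrict_of_ae ?_
    filter_upwards [h1] with z hz
    exact sum_prod_weight (fun a => w a z) hz

/-- The joint weight vanishes whenever one of the samples has mean weight zero. -/
theorem jointWeight_eq_zero (hm : ∀ a, Measurable (w a)) (h0 : ∀ a z, 0 ≤ w a z)
    (h1 : ∀ᵐ z ∂ω, ∑ a, w a z = 1) (x : β) (y : Fin n → α) (i : Fin n)
    (hi : ∫ z, w (y i) z ∂ω = 0) : jointWeight ω X w x y = 0 := by
  have hint : Integrable (w (y i)) ω := by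
    simpa using integrable_prod_weight hm h0 h1 (fun _ : Fin 1 => y i)
  rw [integral_eq_zero_iff_of_nonneg (fun z => h0 _ z) hint] at hi
  refine integral_eq_zero_of_ae (ae_restrict_of_ae ?_)
  filter_upwards [hi] with z hz
  exact Finset.prod_eq_zero (Finset.mem_univ i) hz

end Joint

/-- The entropy of a family `(X s)` of finite-valued functions is bounded by the entropy of `n`
conditionally independent samples, plus the cost of predicting each `X s` from the samples. -/
theorem entropy_le_of_prediction {Z S A B : Type*} [MeasurableSpace Z] (ω : Measure Z)
    [IsProbabilityMeasure ω] [Fintype S] [DecidableEq S] [Fintype A] [Fintype B] [MeasurableSpace B]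
    [MeasurableSingletonClass B] {X : Z → S → B} {w : (S → A) → Z → ℝ} {n : ℕ}
    (hX : Measurable X) (hm : ∀ a, Measurable (w a))
    (h0 : ∀ a z, 0 ≤ w a z) (h1 : ∀ᵐ z ∂ω, ∑ a, w a z = 1)
    (ψ : B → (Fin n → A) → ℝ) (hψ : ∀ b u, 0 < ψ b u) (hψ1 : ∀ u, ∑ b, ψ b u = 1) :
    ∑ x, Real.negMulLog (ω.real (X ⁻¹' {x})) ≤
      n * ∑ a, Real.negMulLog (∫ z, w a z ∂ω) +
      ∑ s, ∫ z, ∑ y : Fin n → S → A, (∏ i, w (y i) z) *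
        (-Real.log (ψ (X z s) fun i => y i s)) ∂ω := by
  set m : (S → A) → ℝ := fun a => ∫ z, w a z ∂ω with hmdef
  have hm0 : ∀ a, 0 ≤ m a := fun a => integral_nonneg fun z => h0 a z
  have hint : ∀ a, Integrable (w a) ω := fun a => by
    simpa using integrable_prod_weight hm h0 h1 (fun _ : Fin 1 => a)
  have hm1 : ∑ a, m a = 1 := by
    rw [hmdef, ← integral_finsetSum _ fun a _ => hint a, integral_congr_ae h1]
    simp
  set q : (S → B) × (Fin n → S → A) → ℝ := fun xy =>
    (∏ i, m (xy.2 i)) * ∏ s, ψ (xy.1 s) fun i => xy.2 i s with hq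
  set J : (S → B) × (Fin n → S → A) → ℝ := fun xy => jointWeight ω X w xy.1 xy.2 with hJ
  have hψp : ∀ xy : (S → B) × (Fin n → S → A), 0 < ∏ s, ψ (xy.1 s) fun i => xy.2 i s :=
    fun xy => Finset.prod_pos fun s _ => hψ _ _
  have hJz : ∀ xy : (S → B) × (Fin n → S → A), ∀ i, m (xy.2 i) = 0 → J xy = 0 :=
    fun xy i hi => jointWeight_eq_zero hm h0 h1 _ _ i hi
  have hac : ∀ xy, q xy = 0 → J xy = 0 := by
    intro xy hxy
    rcases mul_eq_zero.1 hxy with h | h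
    · obtain ⟨i, _, hi⟩ := Finset.prod_eq_zero_iff.1 h
      exact hJz xy i hi
    · exact absurd h (hψp xy).ne'
  have hqsum : ∑ xy, q xy = 1 := by
    rw [Fintype.sum_prod_type_right, ← sum_prod_weight (ι := Fin n) m hm1]
    refine Finset.sum_congr rfl fun y _ => ?_
    simp only [hq]
    rw [← Finset.mul_sum]
    have := Finset.prod_univ_sum (fun _ : S => (Finset.univ : Finset B))
      (fun s b => ψ b fun i => y i s)
    rw [Fintype.piFinset_univ] at this
    rw [← this]
    simp [hψ1]
  have hJsum : ∑ xy, J xy = 1 := by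
    rw [Fintype.sum_prod_type]
    have := sum_jointWeight_mul (n := n) hX hm h0 h1 (fun _ _ => 1)
    simp only [mul_one] at this
    rw [this, integral_congr_ae (g := fun _ => (1 : ℝ))]
    · simp
    · filter_upwards [h1] with z hz
      exact sum_prod_weight (fun a => w a z) hz
  have gibbs := sum_negMulLog_le_crossEntropy J q (fun xy => jointWeight_nonneg h0 _ _)
    (fun xy => mul_nonneg (Finset.prod_nonneg fun i _ => hm0 _) (hψp xy).le) hac
    (hqsum.trans hJsum.symm).le
  have split : ∀ xy, J xy * (-Real.log (q xy)) =
      ∑ i, J xy * (-Real.log (m (xy.2 i))) +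
        ∑ s, J xy * (-Real.log (ψ (xy.1 s) fun i => xy.2 i s)) := by
    intro xy
    by_cases h : J xy = 0
    · simp [h]
    · have hne : ∀ i, m (xy.2 i) ≠ 0 := fun i hi => h (hJz xy i hi)
      simp only [hq]
      rw [Real.log_mul (Finset.prod_ne_zero_iff.2 fun i _ => hne i) (hψp xy).ne',
        Real.log_prod (fun i _ => hne i), Real.log_prod (fun s _ => (hψ _ _).ne'),
        ← Finset.mul_sum, ← Finset.mul_sum, Finset.sum_neg_distrib, Finset.sum_neg_distrib]
      ring
  calc ∑ x, Real.negMulLog (ω.real (X ⁻¹' {x}))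
      ≤ ∑ x, ∑ y, Real.negMulLog (J (x, y)) := by
        refine Finset.sum_le_sum fun x _ => ?_
        rw [← sum_jointWeight_right (n := n) hm h0 h1 x]
        exact negMulLog_sum_le _ fun y => jointWeight_nonneg h0 _ _
    _ = ∑ xy, Real.negMulLog (J xy) := by rw [Fintype.sum_prod_type]
    _ ≤ _ := gibbs
    _ = _ := by
      simp only [split]
      rw [Finset.sum_add_distrib, Finset.sum_comm, Finset.sum_comm (t := (Finset.univ : Finset S))]
      congr 1
      · have : ∀ i : Fin n, ∑ xy, J xy * (-Real.log (m (xy.2 i))) =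
            ∑ a, Real.negMulLog (m a) := by
          intro i
          rw [Fintype.sum_prod_type]
          rw [sum_jointWeight_mul hX hm h0 h1 (fun _ y => -Real.log (m (y i)))]
          rw [integral_congr_ae (g := fun z => ∑ a, w a z * (-Real.log (m a)))]
          · rw [integral_finsetSum _ fun a _ => (hint a).mul_const _]
            refine Finset.sum_congr rfl fun a _ => ?_
            rw [integral_mul_const, Real.negMulLog]
            ring
          · filter_upwards [h1] with z hz
            exact sum_prod_weight_eval (fun a => w a z) hz i fun a => -Real.log (m a)
        rw [Finset.sum_congr rfl fun i _ => this i]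
        simp [hmdef]
      · refine Finset.sum_congr rfl fun s _ => ?_
        rw [Fintype.sum_prod_type]
        exact sum_jointWeight_mul hX hm h0 h1 (fun x y => -Real.log (ψ (x s) fun i => y i s))

/-- A version of the conditional probability of `E ⊆ Y` given the second coordinate, for a
measure `ρ` on `Y × Z` with second marginal `ω`. -/
noncomputable def condWeight {Y Z : Type*} [MeasurableSpace Y] [MeasurableSpace Z]
    (ρ : Measure (Y × Z)) (ω : Measure Z) (E : Set Y) (z : Z) : ℝ :=
  (((ρ.restrict (Prod.fst ⁻¹' E)).map Prod.snd).rnDeriv ω z).toReal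

section CondWeight

variable {Y Z : Type*} [MeasurableSpace Y] [MeasurableSpace Z] {ρ : Measure (Y × Z)}
  {ω : Measure Z}

theorem measurable_condWeight (E : Set Y) : Measurable (condWeight ρ ω E) :=
  (Measure.measurable_rnDeriv _ _).ennreal_toReal

theorem condWeight_nonneg (E : Set Y) (z : Z) : 0 ≤ condWeight ρ ω E z := ENNReal.toReal_nonneg

variable [IsProbabilityMeasure ρ]

theorem integrable_condWeight (E : Set Y) : Integrable (condWeight ρ ω E) ω :=
  Measure.integrable_toReal_rnDeriv

variable [IsProbabilityMeasure ω]

theorem setIntegral_condWeight (hsnd : ρ.map Prod.snd = ω) {E : Set Y} {C : Set Z}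
    (hC : MeasurableSet C) :
    ∫ z in C, condWeight ρ ω E z ∂ω = ρ.real (E ×ˢ C) := by
  have hac : (ρ.restrict (Prod.fst ⁻¹' E)).map Prod.snd ≪ ω := by
    rw [← hsnd]
    exact Measure.restrict_le_self.absolutelyContinuous.map measurable_snd
  unfold condWeight
  rw [Measure.setIntegral_toReal_rnDeriv hac, measureReal_def,
    Measure.map_apply measurable_snd hC, Measure.restrict_apply (measurable_snd hC),
    inter_comm, ← prod_eq, measureReal_def]

/-- The conditional probability is characterised by its integrals over measurable sets. -/
theorem ae_eq_condWeight (hsnd : ρ.map Prod.snd = ω) {E : Set Y} {f : Z → ℝ}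
    (hf : Integrable f ω)
    (h : ∀ C, MeasurableSet C → ∫ z in C, f z ∂ω = ρ.real (E ×ˢ C)) :
    f =ᵐ[ω] condWeight ρ ω E :=
  hf.ae_eq_of_forall_setIntegral_eq _ _ (integrable_condWeight E) fun C hC _ => by
    rw [h C hC, setIntegral_condWeight hsnd hC]

theorem condWeight_univ (hsnd : ρ.map Prod.snd = ω) : condWeight ρ ω univ =ᵐ[ω] 1 := by
  refine (ae_eq_condWeight hsnd (integrable_const (1 : ℝ)) fun C hC => ?_).symm
  rw [← hsnd]
  simp [measureReal_def, Measure.map_apply measurable_snd hC, univ_prod]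

/-- Conditional laws are compatible with maps between finite sets. -/
theorem sum_condWeight_fiber (hsnd : ρ.map Prod.snd = ω) {α β : Type*} [Fintype α]
    [MeasurableSpace α] [MeasurableSingletonClass α] [DecidableEq β]
    {f : Y → α} (hf : Measurable f) (π : α → β) (b : β) :
    (fun z => ∑ a with π a = b, condWeight ρ ω (f ⁻¹' {a}) z) =ᵐ[ω]
      condWeight ρ ω {y | π (f y) = b} := by
  refine ae_eq_condWeight hsnd (integrable_finsetSum _ fun a _ => integrable_condWeight _)
    fun C hC => ?_
  rw [integral_finsetSum _ fun a _ => (integrable_condWeight _).integrableOn]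
  simp only [setIntegral_condWeight hsnd hC]
  rw [← measureReal_biUnion_finset]
  · congr 1
    ext ⟨y, z⟩
    simp
  · intro a _ a' _ haa
    refine Set.disjoint_left.2 ?_
    rintro ⟨y, z⟩ ⟨h1, _⟩ ⟨h2, _⟩
    exact haa (h1.symm.trans h2)
  · exact fun a _ => (hf (measurableSet_singleton a)).prod hC

theorem sum_condWeight (hsnd : ρ.map Prod.snd = ω) {α : Type*} [Fintype α]
    [MeasurableSpace α] [MeasurableSingletonClass α] {f : Y → α} (hf : Measurable f) :
    ∀ᵐ z ∂ω, ∑ a, condWeight ρ ω (f ⁻¹' {a}) z = 1 := by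
  filter_upwards [sum_condWeight_fiber hsnd hf (fun _ => ()) (), condWeight_univ hsnd]
    with z h1 h2
  simpa [h2] using h1

/-- Conditional probabilities of an invariant measure are equivariant. -/
theorem condWeight_smul {G : Type*} [Group G] [MulAction G Y] [MulAction G Z]
    (hsnd : ρ.map Prod.snd = ω)
    (hω : ∀ s : G, MeasurePreserving (fun z : Z => s • z) ω ω)
    (hρinv : ∀ s : G, MeasurePreserving (fun p : Y × Z => s • p) ρ ρ) (s : G) {E : Set Y}
    (hE : MeasurableSet E) :
    (fun z => condWeight ρ ω E (s • z)) =ᵐ[ω] condWeight ρ ω ((fun y => s • y) ⁻¹' E) := by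
  refine ae_eq_condWeight hsnd
    ((hω s).integrable_comp_of_integrable (integrable_condWeight E)) fun C hC => ?_
  have hemb : MeasurableEmbedding (fun z : Z => s • z) :=
    (⟨MulAction.toPerm s, (hω s).measurable, (hω s⁻¹).measurable⟩ : Z ≃ᵐ Z).measurableEmbedding
  have hC' : MeasurableSet ((fun z : Z => s⁻¹ • z) ⁻¹' C) := (hω s⁻¹).measurable hC
  have hCeq : C = (fun z : Z => s • z) ⁻¹' ((fun z : Z => s⁻¹ • z) ⁻¹' C) := by
    ext z; simp
  rw [hCeq, (hω s).setIntegral_preimage_emb hemb, setIntegral_condWeight hsnd hC',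
    measureReal_def, ← (hρinv s).measure_preimage (hE.prod hC').nullMeasurableSet]
  rfl

end CondWeight

/-- The partition into the fibres of a measurable function. -/
theorem isMeasPartition_fiber {X : Type*} [MeasurableSpace X] {k : ℕ} {p : X → Fin k}
    (hp : Measurable p) : IsMeasPartition fun i => p ⁻¹' {i} := by
  refine ⟨fun i => hp (measurableSet_singleton i), fun i j hij => ?_, ?_⟩
  · exact Set.disjoint_left.2 fun x hi hj => hij (hi.symm.trans hj)
  · ext x; simp

theorem hJoin_fiber {G X : Type*} [Group G] [MulAction G X] [MeasurableSpace X]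
    (μ : Measure X) {k : ℕ} (p : X → Fin k) (F : Finset G) :
    HJoin μ (fun i => p ⁻¹' {i}) F =
      ∑ a : ↥F → Fin k, Real.negMulLog
        (μ.real ((fun x (s : ↥F) => p ((s : G) • x)) ⁻¹' {a})) := by
  unfold HJoin
  refine Finset.sum_congr rfl fun a _ => ?_
  rw [measureReal_def]
  congr 3
  ext x
  simp [funext_iff]

theorem hJoin_nonneg {G X : Type*} [Group G] [MulAction G X] [MeasurableSpace X]
    (μ : Measure X) [IsProbabilityMeasure μ] {k : ℕ} (P : Fin k → Set X) (F : Finset G) :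
    0 ≤ HJoin μ P F :=
  Finset.sum_nonneg fun _ _ => Real.negMulLog_nonneg ENNReal.toReal_nonneg
    measureReal_le_one

/-- The entropy of a partition of `Z` is controlled by that of `n` conditionally independent
copies of a partition of `Y`. -/
theorem hJoin_le_of_prediction {G Y Z : Type*} [Group G] [MeasurableSpace Y] [MeasurableSpace Z]
    [MulAction G Y] [MulAction G Z] {ν : Measure Y} {ω : Measure Z} [IsProbabilityMeasure ω]
    (hν : ∀ s : G, MeasurePreserving (fun y : Y => s • y) ν ν)
    (hω : ∀ s : G, MeasurePreserving (fun z : Z => s • z) ω ω)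
    {ρ : Measure (Y × Z)} [IsProbabilityMeasure ρ]
    (hρinv : ∀ s : G, MeasurePreserving (fun p : Y × Z => s • p) ρ ρ)
    (hfst : ρ.map Prod.fst = ν) (hsnd : ρ.map Prod.snd = ω)
    {k l n : ℕ} {p : Y → Fin k} (hp : Measurable p) {q : Z → Fin l} (hq : Measurable q)
    (ψ : Fin l → (Fin n → Fin k) → ℝ) (hψ : ∀ b u, 0 < ψ b u) (hψ1 : ∀ u, ∑ b, ψ b u = 1)
    (F : Finset G) :
    HJoin ω (fun i => q ⁻¹' {i}) F ≤ n * HJoin ν (fun i => p ⁻¹' {i}) F +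
      F.card * ∫ z, ∑ u : Fin n → Fin k, (∏ i, condWeight ρ ω (p ⁻¹' {u i}) z) *
        (-Real.log (ψ (q z) u)) ∂ω := by
  have hpF : Measurable (fun y (s : ↥F) => p ((s : G) • y)) :=
    measurable_pi_lambda _ fun s => hp.comp (hν s).measurable
  have hqF : Measurable (fun z (s : ↥F) => q ((s : G) • z)) :=
    measurable_pi_lambda _ fun s => hq.comp (hω s).measurable
  have key := entropy_le_of_prediction ω (n := n) hqF
    (w := fun a => condWeight ρ ω ((fun y (s : ↥F) => p ((s : G) • y)) ⁻¹' {a}))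
    (fun a => measurable_condWeight _) (fun a z => condWeight_nonneg _ z)
    (sum_condWeight hsnd hpF) ψ hψ hψ1
  rw [hJoin_fiber, hJoin_fiber]
  refine key.trans (le_of_eq ?_)
  congr 1
  · congr 1
    refine Finset.sum_congr rfl fun a _ => ?_
    have ha : MeasurableSet ((fun y (s : ↥F) => p ((s : G) • y)) ⁻¹' {a}) :=
      hpF (measurableSet_singleton a)
    rw [← setIntegral_univ, setIntegral_condWeight hsnd MeasurableSet.univ, ← hfst,
      measureReal_def, measureReal_def, Measure.map_apply measurable_fst ha, prod_univ]
  · set L : Z → ℝ := fun z => ∑ u : Fin n → Fin k,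
      (∏ i, condWeight ρ ω (p ⁻¹' {u i}) z) * (-Real.log (ψ (q z) u)) with hL
    have hterm : ∀ s : ↥F, ∫ z, ∑ y : Fin n → ↥F → Fin k,
        (∏ i, condWeight ρ ω ((fun y (s : ↥F) => p ((s : G) • y)) ⁻¹' {y i}) z) *
        (-Real.log (ψ (q ((s : G) • z)) fun i => y i s)) ∂ω = ∫ z, L z ∂ω := by
      intro s
      have hemb : MeasurableEmbedding (fun z : Z => (s : G) • z) :=
        (⟨MulAction.toPerm (s : G), (hω s).measurable, (hω (s : G)⁻¹).measurable⟩ :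
          Z ≃ᵐ Z).measurableEmbedding
      rw [← (hω s).integral_comp hemb L]
      refine integral_congr_ae ?_
      have e1 : ∀ᵐ z ∂ω, ∀ j : Fin k, ∑ a : ↥F → Fin k with a s = j,
          condWeight ρ ω ((fun y (s : ↥F) => p ((s : G) • y)) ⁻¹' {a}) z =
          condWeight ρ ω (p ⁻¹' {j}) ((s : G) • z) := by
        rw [ae_all_iff]
        intro j
        filter_upwards [sum_condWeight_fiber hsnd hpF (fun a => a s) j,
          condWeight_smul hsnd hω hρinv (s : G) (hp (measurableSet_singleton j))] with z h1 h2
        rw [h1, h2]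
        rfl
      filter_upwards [e1] with z hz
      rw [sum_prod_weight_comp (fun a : ↥F → Fin k => a s)
        (fun a => condWeight ρ ω ((fun y (s : ↥F) => p ((s : G) • y)) ⁻¹' {a}) z)
        (fun u => -Real.log (ψ (q ((s : G) • z)) u))]
      simp only [hz, hL]
    rw [Finset.sum_congr rfl fun s _ => hterm s]
    simp

/-- The entropy of a join of `|F|` partitions into `k` sets is at most `|F| log k`. -/
theorem hJoin_fiber_le {G X : Type*} [Group G] [MulAction G X] [MeasurableSpace X]
    {μ : Measure X} [IsProbabilityMeasure μ]
    (hμ : ∀ s : G, MeasurePreserving (fun x : X => s • x) μ μ) {k : ℕ} [NeZero k] {p : X → Fin k}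
    (hp : Measurable p) (F : Finset G) :
    HJoin μ (fun i => p ⁻¹' {i}) F ≤ F.card * Real.log k := by
  have hpF : Measurable (fun x (s : ↥F) => p ((s : G) • x)) :=
    measurable_pi_lambda _ fun s => hp.comp (hμ s).measurable
  have hk : (0 : ℝ) < k := Nat.cast_pos.2 (NeZero.pos k)
  have := entropy_le_of_prediction μ (n := 0) hpF (w := fun (_ : ↥F → Unit) _ => (1 : ℝ))
    (fun _ => measurable_const) (fun _ _ => zero_le_one) (by simp)
    (fun _ _ => (k : ℝ)⁻¹) (fun _ _ => inv_pos.2 hk) (fun _ => by simp [hk.ne'])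
  rw [hJoin_fiber]
  simpa using this

theorem exists_folnerInv_of_invLimsup_lt {G : Type*} [Group G] {ψ : Finset G → ℝ} {M c : ℝ}
    (hM : ∀ F, ψ F / (F.card : ℝ) ≤ M) (h : invLimsup ψ < c) :
    ∃ (K : Finset G) (δ : ℝ), 0 < δ ∧ ∀ F, FolnerInv K δ F → ψ F / (F.card : ℝ) < c := by
  have : Nonempty {d : ℝ // 0 < d} := ⟨⟨1, one_pos⟩⟩
  obtain ⟨K, hK⟩ := exists_lt_of_ciInf_lt h
  obtain ⟨δ, hδ⟩ := exists_lt_of_ciInf_lt hK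
  refine ⟨K, δ.1, δ.2, fun F hF => (le_csSup ⟨M, ?_⟩ ?_).trans_lt hδ⟩
  swap
  · exact ⟨F, hF, rfl⟩
  rintro _ ⟨F, _, rfl⟩
  exact hM F

theorem sSup_folnerInv_nonneg {G : Type*} [Group G] {ψ : Finset G → ℝ} (h0 : ∀ F, 0 ≤ ψ F)
    (K : Finset G) (δ : ℝ) :
    0 ≤ sSup ((fun F : Finset G => ψ F / (F.card : ℝ)) '' {F : Finset G | FolnerInv K δ F}) := by
  refine Real.sSup_nonneg ?_
  rintro _ ⟨F, _, rfl⟩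
  exact div_nonneg (h0 F) (Nat.cast_nonneg _)

theorem invLimsup_nonneg {G : Type*} [Group G] {ψ : Finset G → ℝ} (h0 : ∀ F, 0 ≤ ψ F) :
    0 ≤ invLimsup ψ :=
  Real.iInf_nonneg fun K => Real.iInf_nonneg fun δ => sSup_folnerInv_nonneg h0 K δ.1

theorem invLimsup_le {G : Type*} [Group G] {ψ : Finset G → ℝ} (h0 : ∀ F, 0 ≤ ψ F) {c : ℝ}
    (hc : 0 ≤ c) (K : Finset G) {δ : ℝ} (hδ : 0 < δ)
    (h : ∀ F, FolnerInv K δ F → ψ F / (F.card : ℝ) ≤ c) : invLimsup ψ ≤ c := by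
  refine (ciInf_le ⟨0, ?_⟩ K).trans ((ciInf_le ⟨0, ?_⟩ (⟨δ, hδ⟩ : {d : ℝ // 0 < d})).trans ?_)
  · rintro _ ⟨K, rfl⟩
    exact Real.iInf_nonneg fun δ => sSup_folnerInv_nonneg h0 K δ.1
  · rintro _ ⟨δ, rfl⟩
    exact sSup_folnerInv_nonneg h0 K δ.1
  · refine Real.sSup_le ?_ hc
    rintro _ ⟨F, hF, rfl⟩
    exact h F hF

/-- The guess, from `n` samples of a two-valued variable, whether the probability of the value
`1` exceeds `c`. -/
noncomputable def thresholdGuess {n : ℕ} (c : ℝ) (u : Fin n → Fin 2) : Fin 2 :=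
  if c * n < ∑ i, ((u i : ℕ) : ℝ) then 1 else 0

/-- The kernel charging `1 - η` to the value guessed and `η` to the other one. -/
noncomputable def guessKernel {n : ℕ} (c η : ℝ) (b : Fin 2) (u : Fin n → Fin 2) : ℝ :=
  if b = thresholdGuess c u then 1 - η else η

theorem sum_guessKernel {n : ℕ} (c η : ℝ) (u : Fin n → Fin 2) :
    ∑ b, guessKernel c η b u = 1 := by
  rw [Fin.sum_univ_two]
  unfold guessKernel
  rcases Fin.exists_fin_two.1 ⟨thresholdGuess c u, rfl⟩ with h | h <;> simp [h]

theorem guessKernel_pos {n : ℕ} {c η : ℝ} (h0 : 0 < η) (h1 : η < 1) (b : Fin 2)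
    (u : Fin n → Fin 2) : 0 < guessKernel c η b u := by
  unfold guessKernel
  split_ifs <;> linarith

theorem neg_log_guessKernel_nonneg {n : ℕ} {c η : ℝ} (h0 : 0 < η) (h1 : η < 1) (b : Fin 2)
    (u : Fin n → Fin 2) : 0 ≤ -Real.log (guessKernel c η b u) := by
  refine neg_nonneg.2 (Real.log_nonpos (guessKernel_pos h0 h1 b u).le ?_)
  unfold guessKernel
  split_ifs <;> linarith

/-- By the Chebyshev inequality, the expected cost of the threshold guess is small unless the
parameter is within `τ` of the threshold. -/
theorem sum_cost_guessKernel_le {n : ℕ} (hn : 0 < n) {c η τ : ℝ} (h0 : 0 < η) (h1 : η < 1)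
    (hτ : 0 < τ) {w : Fin 2 → ℝ} (hw0 : ∀ j, 0 ≤ w j) (hw1 : ∑ j, w j = 1) :
    ∑ u : Fin n → Fin 2, (∏ i, w (u i)) *
        (-Real.log (guessKernel c η (if c < w 1 then 1 else 0) u)) ≤
      -Real.log (1 - η) + -Real.log η *
        ((if |w 1 - c| < τ then 1 else 0) + 1 / (n * τ ^ 2)) := by
  have hl1 : 0 ≤ -Real.log (1 - η) :=
    neg_nonneg.2 (Real.log_nonpos (by linarith) (by linarith))
  have hl2 : 0 ≤ -Real.log η := neg_nonneg.2 (Real.log_nonpos h0.le h1.le)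
  have hn' : (0 : ℝ) < n := Nat.cast_pos.2 hn
  rw [Fin.sum_univ_two] at hw1
  set h : Fin 2 → ℝ := fun j => ((j : ℕ) : ℝ) - w 1 with hh
  have hsum : ∀ u : Fin n → Fin 2, ∑ i, h (u i) = (∑ i, ((u i : ℕ) : ℝ)) - n * w 1 := by
    intro u; simp [hh]
  set e : ℝ := if |w 1 - c| < τ then 1 else 0 with he
  have hterm : ∀ u : Fin n → Fin 2,
      -Real.log (guessKernel c η (if c < w 1 then 1 else 0) u) ≤
        -Real.log (1 - η) + -Real.log η * (e + (∑ i, h (u i)) ^ 2 / (n * τ) ^ 2) := by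
    intro u
    have hdiv : 0 ≤ (∑ i, h (u i)) ^ 2 / (n * τ) ^ 2 := by positivity
    have he0 : 0 ≤ e := by rw [he]; split_ifs <;> norm_num
    unfold guessKernel
    by_cases hg : (if c < w 1 then 1 else 0) = thresholdGuess c u
    · rw [if_pos hg]
      nlinarith [mul_nonneg hl2 (add_nonneg he0 hdiv)]
    · rw [if_neg hg]
      suffices 1 ≤ e + (∑ i, h (u i)) ^ 2 / (n * τ) ^ 2 by nlinarith
      by_cases hc : |w 1 - c| < τ
      · rw [he, if_pos hc]; linarith
      · rw [he, if_neg hc, zero_add, one_le_div (by positivity)]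
        refine sq_le_sq.2 ?_
        rw [abs_of_pos (by positivity), hsum]
        rw [not_lt] at hc
        unfold thresholdGuess at hg
        by_cases h2 : c < w 1
        · rw [if_pos h2] at hg
          have h3 : ¬ c * n < ∑ i, ((u i : ℕ) : ℝ) := fun h3 => hg (by rw [if_pos h3])
          rw [abs_of_pos (by linarith)] at hc
          refine le_trans ?_ (neg_le_abs _)
          nlinarith
        · rw [if_neg h2] at hg
          have h3 : c * n < ∑ i, ((u i : ℕ) : ℝ) := by
            by_contra h3; exact hg (by rw [if_neg h3])
          rw [abs_of_nonpos (by linarith)] at hc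
          refine le_trans ?_ (le_abs_self _)
          nlinarith
  have hW : ∑ j, w j = 1 := by rw [Fin.sum_univ_two, hw1]
  have hW1 : w 1 ≤ 1 := by linarith [hw0 0]
  have hsq := sum_prod_weight_sq w hW h (by simp [hh]; linear_combination (- w 1) * hw1) n
  have hvar : ∑ j, w j * h j ^ 2 ≤ 1 := by
    have hb : ∀ j : Fin 2, h j ^ 2 ≤ 1 := by
      intro j
      refine (sq_le_one_iff_abs_le_one _).2 (abs_le.2 ?_)
      have := hw0 1
      fin_cases j <;> simp [hh] <;> constructor <;> linarith
    rw [← hW]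
    exact Finset.sum_le_sum fun j _ => mul_le_of_le_one_right (hw0 j) (hb j)
  calc _ ≤ ∑ u : Fin n → Fin 2, (∏ i, w (u i)) *
        (-Real.log (1 - η) + -Real.log η * (e + (∑ i, h (u i)) ^ 2 / (n * τ) ^ 2)) :=
        Finset.sum_le_sum fun u _ => mul_le_mul_of_nonneg_left (hterm u)
          (Finset.prod_nonneg fun i _ => hw0 _)
    _ = (-Real.log (1 - η) + -Real.log η * e) * ∑ u : Fin n → Fin 2, ∏ i, w (u i)
        + -Real.log η / (n * τ) ^ 2 *
          ∑ u : Fin n → Fin 2, (∏ i, w (u i)) * (∑ i, h (u i)) ^ 2 := by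
        simp only [Finset.mul_sum (Finset.univ : Finset (Fin n → Fin 2)),
          ← Finset.sum_add_distrib]
        exact Finset.sum_congr rfl fun u _ => by ring
    _ ≤ (-Real.log (1 - η) + -Real.log η * e) * 1 + -Real.log η / (n * τ) ^ 2 * (n * 1) := by
        rw [sum_prod_weight w hW, hsq]
        gcongr
    _ = _ := by field_simp; ring

/-- If `c` is not an atom of the law of `φ`, then `φ` is rarely close to `c`. -/
theorem exists_pos_measureReal_abs_sub_lt {Z : Type*} [MeasurableSpace Z] (ω : Measure Z)
    [IsProbabilityMeasure ω] {φ : Z → ℝ} (hφ : Measurable φ) {c : ℝ} (hc : ω {z | φ z = c} = 0)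
    {ε : ℝ} (hε : 0 < ε) : ∃ τ, 0 < τ ∧ ω.real {z | |φ z - c| < τ} < ε := by
  have hmeas : ∀ m : ℕ, MeasurableSet {z | |φ z - c| < 1 / ((m : ℝ) + 1)} := fun m =>
    measurableSet_lt (hφ.sub_const c).abs measurable_const
  have ht := tendsto_measure_iInter_atTop (μ := ω) (fun m => (hmeas m).nullMeasurableSet)
    (fun i j hij z (hz : |φ z - c| < _) => hz.trans_le (Nat.one_div_le_one_div hij))
    ⟨0, measure_ne_top _ _⟩
  have hInter : ⋂ m : ℕ, {z | |φ z - c| < 1 / ((m : ℝ) + 1)} = {z | φ z = c} := by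
    ext z
    simp only [mem_iInter, mem_ofPred_eq]
    refine ⟨fun hz => ?_, fun hz m => by rw [hz, sub_self, abs_zero]; positivity⟩
    by_contra hne
    obtain ⟨m, hm⟩ := exists_nat_one_div_lt (abs_pos.2 (sub_ne_zero.2 hne))
    exact lt_asymm hm (hz m)
  rw [hInter, hc] at ht
  have ht' := (ENNReal.tendsto_toReal ENNReal.zero_ne_top).comp ht
  obtain ⟨m, hm⟩ := (ht'.eventually (gt_mem_nhds hε)).exists
  exact ⟨1 / ((m : ℝ) + 1), by positivity, hm⟩

section Joining

variable {G Y Z : Type*} [Group G] [MeasurableSpace Y] [MeasurableSpace Z]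
  [MulAction G Y] [MulAction G Z] {ν : Measure Y} [IsProbabilityMeasure ν] {ω : Measure Z}
  [IsProbabilityMeasure ω] {ρ : Measure (Y × Z)} [IsProbabilityMeasure ρ]

/-- If a two-set partition of `Y` has zero entropy, then so does the partition of `Z` according to
whether the conditional probability of its second set exceeds a non-atomic threshold. -/
theorem invLimsup_hJoin_threshold_eq_zero
    (hν : ∀ s : G, MeasurePreserving (fun y : Y => s • y) ν ν)
    (hω : ∀ s : G, MeasurePreserving (fun z : Z => s • z) ω ω)
    (hρinv : ∀ s : G, MeasurePreserving (fun p : Y × Z => s • p) ρ ρ)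
    (hfst : ρ.map Prod.fst = ν) (hsnd : ρ.map Prod.snd = ω)
    {p : Y → Fin 2} (hp : Measurable p)
    (hzero : invLimsup (fun F : Finset G => HJoin ν (fun i => p ⁻¹' {i}) F) = 0)
    {c : ℝ} (hc : ω {z | condWeight ρ ω (p ⁻¹' {1}) z = c} = 0)
    {q : Z → Fin 2} (hq : Measurable q)
    (hqc : ∀ z, q z = if c < condWeight ρ ω (p ⁻¹' {1}) z then 1 else 0) :
    invLimsup (fun F : Finset G => HJoin ω (fun i => q ⁻¹' {i}) F) = 0 := by
  have hnn := fun F : Finset G => hJoin_nonneg ω (fun i => q ⁻¹' {i}) F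
  refine le_antisymm (le_of_forall_pos_le_add fun ε hε => ?_) (invLimsup_nonneg hnn)
  rw [zero_add]
  obtain ⟨η, h0, h1, hη⟩ : ∃ η : ℝ, 0 < η ∧ η < 1 ∧ -Real.log (1 - η) = ε / 4 := by
    refine ⟨1 - Real.exp (-(ε / 4)), ?_, ?_, by simp⟩
    · have := Real.exp_lt_one_iff.2 (show -(ε / 4) < 0 by linarith)
      linarith
    · linarith [Real.exp_pos (-(ε / 4))]
  set Λ : ℝ := -Real.log η with hΛ
  have hΛ0 : 0 < Λ := neg_pos.2 (Real.log_neg h0 h1)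
  obtain ⟨τ, hτ, hD⟩ := exists_pos_measureReal_abs_sub_lt ω (measurable_condWeight _) hc
    (ε := ε / (4 * Λ)) (by positivity)
  obtain ⟨m, hm⟩ := exists_nat_one_div_lt (K := ℝ) (ε := ε * τ ^ 2 / (4 * Λ)) (by positivity)
  set n : ℕ := m + 1 with hn
  have hn0 : (0 : ℝ) < n := by rw [hn]; positivity
  have hnε : 1 / (n * τ ^ 2) < ε / (4 * Λ) := by
    have : 1 / (n : ℝ) < ε * τ ^ 2 / (4 * Λ) := by rw [hn]; exact_mod_cast hm
    calc 1 / (n * τ ^ 2) = 1 / (n : ℝ) / τ ^ 2 := by rw [div_div]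
      _ < ε * τ ^ 2 / (4 * Λ) / τ ^ 2 := by gcongr
      _ = _ := by field_simp
  set φ := condWeight ρ ω (p ⁻¹' {1}) with hφ
  set D : Set Z := {z | |φ z - c| < τ} with hDdef
  have hDm : MeasurableSet D :=
    measurableSet_lt ((measurable_condWeight _).sub_const c).abs measurable_const
  have hcost : ∫ z, ∑ u : Fin n → Fin 2, (∏ i, condWeight ρ ω (p ⁻¹' {u i}) z) *
      (-Real.log (guessKernel c η (q z) u)) ∂ω ≤ 3 / 4 * ε := by
    have hI : Integrable (D.indicator fun _ => (1 : ℝ)) ω := (integrable_const _).indicator hDm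
    have hI' : Integrable (fun z => Λ * (D.indicator (fun _ => (1 : ℝ)) z
        + 1 / (n * τ ^ 2))) ω := (hI.add (integrable_const _)).const_mul _
    calc _ ≤ ∫ z, (ε / 4 + Λ * (D.indicator (fun _ => (1 : ℝ)) z + 1 / (n * τ ^ 2))) ∂ω := by
          refine integral_mono_of_nonneg (Filter.Eventually.of_forall fun z => ?_)
            ((integrable_const _).add hI') ?_
          · exact Finset.sum_nonneg fun u _ => mul_nonneg
              (Finset.prod_nonneg fun i _ => condWeight_nonneg _ _)
              (neg_log_guessKernel_nonneg h0 h1 _ _)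
          · filter_upwards [sum_condWeight hsnd hp] with z hz
            have := sum_cost_guessKernel_le (n := n) (c := c) (Nat.succ_pos m) h0 h1 hτ
              (w := fun j => condWeight ρ ω (p ⁻¹' {j}) z) (fun j => condWeight_nonneg _ _) hz
            rw [hη] at this
            rw [hqc z]
            have hind : D.indicator (fun _ => (1 : ℝ)) z = if |φ z - c| < τ then 1 else 0 := by
              simp [indicator_apply, hDdef]
            rw [hind]
            exact this
      _ = ε / 4 + Λ * (ω.real D + 1 / (n * τ ^ 2)) := by
          rw [integral_add (integrable_const _) hI', integral_const_mul,
            integral_add hI (integrable_const _), integral_indicator hDm]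
          simp
      _ ≤ ε / 4 + Λ * (ε / (4 * Λ) + ε / (4 * Λ)) := by gcongr
      _ = _ := by field_simp; ring
  have hbdd : ∀ F : Finset G, HJoin ν (fun i => p ⁻¹' {i}) F / F.card ≤ Real.log (2 : ℕ) := by
    intro F
    refine div_le_of_le_mul₀ (Nat.cast_nonneg _) (Real.log_natCast_nonneg 2) ?_
    rw [mul_comm]
    exact hJoin_fiber_le hν hp F
  obtain ⟨K, δ, hδ, hF⟩ := exists_folnerInv_of_invLimsup_lt (c := ε / (4 * n)) hbdd
    (by rw [hzero]; positivity)
  refine invLimsup_le hnn hε.le K hδ fun F hFI => ?_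
  have hcard : (0 : ℝ) < F.card := Nat.cast_pos.2 hFI.1.card_pos
  have hle := hJoin_le_of_prediction hν hω hρinv hfst hsnd hp hq (guessKernel c η)
    (guessKernel_pos h0 h1) (sum_guessKernel (n := n) c η) F
  have hY := (div_lt_iff₀ hcard).1 (hF F hFI)
  rw [div_le_iff₀ hcard]
  calc _ ≤ _ := hle
    _ ≤ n * (ε / (4 * n) * F.card) + F.card * (3 / 4 * ε) := by gcongr
    _ = _ := by field_simp; norm_num

/-- Conditional probabilities of subsets of a zero entropy system given a system with completely
positive entropy are constant. -/
theorem condWeight_ae_eq_const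
    (hν : ∀ s : G, MeasurePreserving (fun y : Y => s • y) ν ν)
    (hω : ∀ s : G, MeasurePreserving (fun z : Z => s • z) ω ω)
    (hzero : ∀ (r : ℕ) (P : Fin r → Set Y), IsMeasPartition P →
      invLimsup (fun F : Finset G => HJoin ν P F) = 0)
    (hcpe : ∀ (r : ℕ) (Q : Fin r → Set Z), IsMeasPartition Q →
      invLimsup (fun F : Finset G => HJoin ω Q F) = 0 →
      ∀ a, ω (Q a) = 0 ∨ ω (Q a) = 1)
    (hρinv : ∀ s : G, MeasurePreserving (fun p : Y × Z => s • p) ρ ρ)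
    (hfst : ρ.map Prod.fst = ν) (hsnd : ρ.map Prod.snd = ω) {A : Set Y} (hA : MeasurableSet A) :
    condWeight ρ ω A =ᵐ[ω] fun _ => ν.real A := by
  set φ := condWeight ρ ω A with hφ
  have hφm : Measurable φ := measurable_condWeight A
  have hφi : Integrable φ ω := integrable_condWeight A
  have hmean : ∫ z, φ z ∂ω = ν.real A := by
    rw [← setIntegral_univ, setIntegral_condWeight hsnd MeasurableSet.univ, ← hfst,
      measureReal_def, measureReal_def, Measure.map_apply measurable_fst hA, prod_univ]
  set p : Y → Fin 2 := fun y => if y ∈ A then 1 else 0 with hpdef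
  have hp : Measurable p := Measurable.ite hA measurable_const measurable_const
  have hpA : p ⁻¹' {1} = A := by ext y; simp [hpdef]
  have hlevel : ∀ c, ν.real A < c → ω {z | φ z = c} = 0 → ∀ᵐ z ∂ω, φ z ≤ c := by
    intro c hc hatom
    have hBm : MeasurableSet {z | c < φ z} := measurableSet_lt measurable_const hφm
    set q : Z → Fin 2 := fun z => if c < φ z then 1 else 0 with hqdef
    have hq : Measurable q := Measurable.ite hBm measurable_const measurable_const
    have hqB : q ⁻¹' {1} = {z | c < φ z} := by ext z; simp [hqdef]
    have h0 := invLimsup_hJoin_threshold_eq_zero hν hω hρinv hfst hsnd hp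
      (hzero 2 _ (isMeasPartition_fiber hp)) (c := c) (by rw [hpA]; exact hatom) hq
      (fun z => by rw [hpA])
    have h01 := hcpe 2 _ (isMeasPartition_fiber hq) h0 1
    simp only [hqB] at h01
    rcases h01 with h | h
    · rw [ae_iff]
      simpa using h
    · exfalso
      have hae : ∀ᵐ z ∂ω, c < φ z := (prob_compl_eq_zero_iff hBm).2 h
      have := integral_mono_ae (integrable_const c) hφi (hae.mono fun z hz => hz.le)
      rw [hmean] at this
      simp at this
      linarith
  have hcount : {c : ℝ | 0 < ω {z | φ z = c}}.Countable :=
    Measure.countable_meas_level_set_pos hφm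
  have hle : ∀ᵐ z ∂ω, φ z ≤ ν.real A := by
    have : ∀ k : ℕ, ∀ᵐ z ∂ω, φ z ≤ ν.real A + 1 / ((k : ℝ) + 1) := by
      intro k
      obtain ⟨c, hc, hc'⟩ := (hcount.dense_compl ℝ).exists_between
        (show ν.real A < ν.real A + 1 / ((k : ℝ) + 1) by
          have : (0 : ℝ) < 1 / ((k : ℝ) + 1) := by positivity
          linarith)
      filter_upwards [hlevel c hc'.1 (by simpa using hc)] with z hz
      exact hz.trans hc'.2.le
    filter_upwards [ae_all_iff.2 this] with z hz
    refine le_of_forall_pos_le_add fun ε hε => ?_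
    obtain ⟨k, hk⟩ := exists_nat_one_div_lt hε
    linarith [hz k]
  have hzero' : ∫ z, (ν.real A - φ z) ∂ω = 0 := by
    rw [integral_sub (integrable_const _) hφi, hmean]
    simp
  rw [integral_eq_zero_iff_of_nonneg_ae (hle.mono fun z hz => sub_nonneg.2 hz)
    ((integrable_const _).sub hφi)] at hzero'
  filter_upwards [hzero'] with z hz
  exact (sub_eq_zero.1 hz).symm

end Joining

/-- Theorem: a measure-preserving system with zero entropy is disjoint from one with
completely positive entropy: any `G`-invariant joining of the two is the product
measure. -/
theorem stmt19 {G Y Z : Type*} [Group G] [MeasurableSpace Y] [MeasurableSpace Z]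
    [MulAction G Y] [MulAction G Z]
    (hamen : FolnerAmenable G)
    (ν : Measure Y) [IsProbabilityMeasure ν]
    (hν : ∀ s : G, MeasurePreserving (fun y : Y => s • y) ν ν)
    (ω : Measure Z) [IsProbabilityMeasure ω]
    (hω : ∀ s : G, MeasurePreserving (fun z : Z => s • z) ω ω)
    (hzero : ∀ (r : ℕ) (P : Fin r → Set Y), IsMeasPartition P →
      invLimsup (fun F : Finset G => HJoin ν P F) = 0)
    (hcpe : ∀ (r : ℕ) (Q : Fin r → Set Z), IsMeasPartition Q →
      invLimsup (fun F : Finset G => HJoin ω Q F) = 0 →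
      ∀ a, ω (Q a) = 0 ∨ ω (Q a) = 1)
    (ρ : Measure (Y × Z)) [IsProbabilityMeasure ρ]
    (hρinv : ∀ s : G, MeasurePreserving (fun p : Y × Z => s • p) ρ ρ)
    (hfst : ρ.map Prod.fst = ν) (hsnd : ρ.map Prod.snd = ω) :
    ρ = ν.prod ω := by
  refine (Measure.prod_eq fun A C hA hC => ?_).symm
  have hconst := condWeight_ae_eq_const hν hω hzero hcpe hρinv hfst hsnd hA
  have h := setIntegral_condWeight hsnd (E := A) hC
  rw [integral_congr_ae (ae_restrict_of_ae hconst)] at h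
  simp only [integral_const, measureReal_restrict_apply_univ, smul_eq_mul] at h
  rw [← ENNReal.toReal_eq_toReal_iff' (measure_ne_top _ _)
    (ENNReal.mul_ne_top (measure_ne_top _ _) (measure_ne_top _ _)), ENNReal.toReal_mul]
  rw [mul_comm] at h
  exact h.symm
end
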